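/- Assume d is such that 7(2/(d+1) + (1 − 2/(d+1)) q(d−1)) < 1 (this forces d ≥ 4 and holds for all large d). Then lim_{γ→0} liminf_{N→∞} P_0[γ N^{2d} ≤ T_N] = 1; that is, the laws of N^{2d}/T_N, N ≥ 2, are tight. -/

import Mathlib

open MeasureTheory Filter
open scoped ENNReal Classical

namespace DiscCyl

/-- The lattice `ℤ^{d+1}`. -/
abbrev Lat (d : ℕ) := Fin (d + 1) → ℤ

/-- The discrete cylinder `E = (ℤ/Nℤ)^d × ℤ`. -/
abbrev Cyl (d N : ℕ) := (Fin d → ZMod N) × ℤ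

instance (N : ℕ) : MeasurableSpace (ZMod N) := ⊤

instance (N : ℕ) : Countable (ZMod N) := by
  cases N with
  | zero => exact inferInstanceAs (Countable ℤ)
  | succ n => exact inferInstanceAs (Countable (Fin (n + 1)))

/-- The canonical projection `π_E : ℤ^{d+1} → E`. -/
def projE (d N : ℕ) (v : Lat d) : Cyl d N :=
  (fun i => (v i.castSucc : ZMod N), v (Fin.last d))

/-- The `2(d+1)` unit vectors `±e_i` of `ℤ^{d+1}`. -/
def unitVecs (d : ℕ) : Finset (Lat d) :=
  Finset.image (fun p : Fin (d + 1) × Bool => Pi.single p.1 (if p.2 then (1 : ℤ) else -1))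
    Finset.univ

/-- One-step transition probability of simple random walk on the cylinder:
each of the `2(d+1)` unit moves of `ℤ^{d+1}` is taken with probability `1/(2(d+1))`
and projected to `E`. -/
noncomputable def stepProb (d N : ℕ) (x y : Cyl d N) : ℝ≥0∞ :=
  (((unitVecs d).filter fun e => x + projE d N e = y).card : ℝ≥0∞) / (2 * (d + 1))

/-- `Pl` is the family of laws (indexed by the starting point) of simple random walk
on the cylinder `E = (ℤ/Nℤ)^d × ℤ`. -/
def IsCylRW (d N : ℕ) (Pl : Cyl d N → Measure (ℕ → Cyl d N)) : Prop :=
  (∀ x, IsProbabilityMeasure (Pl x)) ∧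
    ∀ (x : Cyl d N) (n : ℕ) (γ : ℕ → Cyl d N),
      Pl x {ω | ∀ i ≤ n, ω i = γ i} =
        (if γ 0 = x then 1 else 0) * ∏ i ∈ Finset.range n, stepProb d N (γ i) (γ (i + 1))

/-- The lattice `ℤ^ν`. -/
abbrev ZLat (ν : ℕ) := Fin ν → ℤ

/-- Unit vectors of `ℤ^ν`. -/
def zUnitVecs (ν : ℕ) : Set (ZLat ν) :=
  {v | ∃ i, v = Pi.single i 1 ∨ v = Pi.single i (-1)}

/-- One-step transition probability of simple random walk on `ℤ^ν`. -/
noncomputable def zStep (ν : ℕ) (x y : ZLat ν) : ℝ≥0∞ :=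
  if y - x ∈ zUnitVecs ν then (2 * ν : ℝ≥0∞)⁻¹ else 0

/-- `Ql` is the family of laws of simple random walk on `ℤ^ν`. -/
def IsLatRW (ν : ℕ) (Ql : ZLat ν → Measure (ℕ → ZLat ν)) : Prop :=
  (∀ x, IsProbabilityMeasure (Ql x)) ∧
    ∀ (x : ZLat ν) (n : ℕ) (γ : ℕ → ZLat ν),
      Ql x {ω | ∀ i ≤ n, ω i = γ i} =
        (if γ 0 = x then 1 else 0) * ∏ i ∈ Finset.range n, zStep ν (γ i) (γ (i + 1))

/-- `q(ν)`: the return probability to the origin of simple random walk on `ℤ^ν`. -/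
noncomputable def retProb (ν : ℕ) (Ql : ZLat ν → Measure (ℕ → ZLat ν)) : ℝ :=
  ((Ql 0) {ω | ∃ n : ℕ, 1 ≤ n ∧ ω n = 0}).toReal

/-- Entrance time `H_U` (with value `⊤` if `U` is never entered). -/
noncomputable def entT {X : Type*} (U : Set X) (ω : ℕ → X) : ℕ∞ :=
  sInf {t : ℕ∞ | ∃ n : ℕ, ω n ∈ U ∧ t = n}

/-- Exit time `T_U`. -/
noncomputable def exitT {X : Type*} (U : Set X) (ω : ℕ → X) : ℕ∞ :=
  entT Uᶜ ω

/-- `after t f ω = t + f (θ_t ω)`, with value `⊤` when `t = ⊤`. -/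
noncomputable def after {X : Type*} (t : ℕ∞) (f : (ℕ → X) → ℕ∞) (ω : ℕ → X) : ℕ∞ :=
  t.recTopCoe ⊤ fun m => (m : ℕ∞) + f fun k => ω (k + m)

/-- The block `C_j = (ℤ/Nℤ)^d × ([(j-3/4)N, (j+3/4)N] ∩ ℤ)`. -/
def Cblk (d N : ℕ) (j : ℤ) : Set (Cyl d N) :=
  {x | ((j : ℝ) - 3 / 4) * N ≤ (x.2 : ℝ) ∧ (x.2 : ℝ) ≤ ((j : ℝ) + 3 / 4) * N}

/-- The block `B_j = (ℤ/Nℤ)^d × [(j-1)N, (j+1)N]`. -/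
def Bblk (d N : ℕ) (j : ℤ) : Set (Cyl d N) :=
  {x | (j - 1) * (N : ℤ) ≤ x.2 ∧ x.2 ≤ (j + 1) * (N : ℤ)}

/-- The block `B̃_j = (ℤ/Nℤ)^d × [(j-2)N+1, (j+2)N-1]`. -/
def Btl (d N : ℕ) (j : ℤ) : Set (Cyl d N) :=
  {x | (j - 2) * (N : ℤ) + 1 ≤ x.2 ∧ x.2 ≤ (j + 2) * (N : ℤ) - 1}

/-- `D^j_1`: time of the first departure from `B̃_j` after the first return to `B_j`. -/
noncomputable def oneExc (d N : ℕ) (j : ℤ) (ω : ℕ → Cyl d N) : ℕ∞ :=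
  after (entT (Bblk d N j) ω) (exitT (Btl d N j)) ω

/-- `D^j_k`: time of the `k`-th departure from `B̃_j` (after successive returns to `B_j`). -/
noncomputable def DD (d N : ℕ) (j : ℤ) : ℕ → (ℕ → Cyl d N) → ℕ∞
  | 0, _ => 0
  | k + 1, ω => after (DD d N j k ω) (oneExc d N j) ω

/-- The law `P` of the walk with initial distribution uniform on `B_0`. -/
noncomputable def lawP (d N : ℕ) (Pl : Cyl d N → Measure (ℕ → Cyl d N)) :
    Measure (ℕ → Cyl d N) :=
  ((N : ℝ≥0∞) ^ d * (2 * N + 1))⁻¹ •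
    Measure.sum fun x : Cyl d N => if x ∈ Bblk d N 0 then Pl x else 0

/-- Nearest-neighbour adjacency on the cylinder. -/
def adj (d N : ℕ) (x y : Cyl d N) : Prop :=
  x ≠ y ∧ ∃ e ∈ unitVecs d, y = x + projE d N e

/-- `x` and `y` are connected by a nearest-neighbour path inside `S`. -/
def connIn (d N : ℕ) (S : Set (Cyl d N)) (x y : Cyl d N) : Prop :=
  Relation.ReflTransGen (fun a b => a ∈ S ∧ b ∈ S ∧ adj d N a b) x y

/-- `S` is a connected set. -/
def IsConnIn (d N : ℕ) (S : Set (Cyl d N)) : Prop :=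
  ∀ x ∈ S, ∀ y ∈ S, connIn d N S x y

/-- The boundary `∂U`. -/
def bdry (d N : ℕ) (U : Set (Cyl d N)) : Set (Cyl d N) :=
  {x | x ∉ U ∧ ∃ y ∈ U, adj d N x y}

/-- `ℓ^∞`-norm on `ℤ^{d+1}`. -/
def linf {d : ℕ} (v : Lat d) : ℕ := Finset.univ.sup fun i => (v i).natAbs

/-- `ℓ^∞`-distance induced on the cylinder. -/
noncomputable def cylDist (d N : ℕ) (x y : Cyl d N) : ℕ :=
  sInf {r : ℕ | ∃ v : Lat d, projE d N v = y - x ∧ linf v = r}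

/-- `S` has `ℓ^∞`-diameter at least `L`. -/
def diamGE (d N : ℕ) (S : Set (Cyl d N)) (L : ℕ) : Prop :=
  ∃ x ∈ S, ∃ y ∈ S, L ≤ cylDist d N x y

/-- `X_{[0,n]}`: the set of points visited up to time `n`. -/
def ran {X : Type*} (ω : ℕ → X) (n : ℕ) : Set X := {y | ∃ i ≤ n, ω i = y}

/-- The set of points visited up to the (possibly infinite) time `t`. -/
def ranE {X : Type*} (ω : ℕ → X) (t : ℕ∞) : Set X :=
  {y | ∃ i : ℕ, (i : ℕ∞) ≤ t ∧ ω i = y}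

/-- `L_m`: projections to `E` of `m`-dimensional affine coordinate lattices of `ℤ^{d+1}`. -/
def Lcoll (d N m : ℕ) : Set (Set (Cyl d N)) :=
  {F | ∃ I : Finset (Fin (d + 1)), I.card = m ∧ ∃ y : Lat d,
      F = (fun v => projE d N (y + v)) '' {v : Lat d | ∀ i ∉ I, v i = 0}}

/-- `A^j_m`: nonempty subsets of `C_j` contained in some `F ∈ L_m`. -/
def Adm (d N : ℕ) (j : ℤ) (m : ℕ) : Set (Finset (Cyl d N)) :=
  {A | A.Nonempty ∧ ↑A ⊆ Cblk d N j ∧ ∃ F ∈ Lcoll d N m, (↑A : Set (Cyl d N)) ⊆ F}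

/-- The segment `{x + k·e : 0 ≤ k ≤ L}` (addition via `π_E`). -/
def segment (d N : ℕ) (x : Cyl d N) (e : Lat d) (L : ℕ) : Set (Cyl d N) :=
  {y | ∃ k : ℕ, k ≤ L ∧ y = x + projE d N ((k : ℤ) • e)}

/-- The event `V_{K,j,t}` (with `k = ⌊t⌋` excursions). -/
def Vev (d N : ℕ) (K : ℝ) (j : ℤ) (k : ℕ) : Set (ℕ → Cyl d N) :=
  {ω | ∀ x ∈ Cblk d N j, ∀ e ∈ unitVecs d, ∃ i : ℕ, (i : ℝ) < Real.sqrt N ∧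
      ∀ l : ℕ, i ≤ l → l ≤ i + ⌊K * Real.log N⌋₊ →
        x + projE d N ((l : ℤ) • e) ∉ ranE ω (DD d N j k ω)}

/-- The event `U_{K,j,t}` (with `k = ⌊t⌋` excursions). -/
def Uev (d N : ℕ) (K : ℝ) (j : ℤ) (k : ℕ) : Set (ℕ → Cyl d N) :=
  {ω | ∀ F ∈ Lcoll d N 2, ∀ n : ℕ, (n : ℕ∞) ≤ DD d N j k ω →
      ∀ O₁ O₂ : Set (Cyl d N),
        O₁ ⊆ (F ∩ Cblk d N j) \ ran ω n → O₂ ⊆ (F ∩ Cblk d N j) \ ran ω n →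
        IsConnIn d N O₁ → IsConnIn d N O₂ →
        diamGE d N O₁ ⌊K * Real.log N⌋₊ → diamGE d N O₂ ⌊K * Real.log N⌋₊ →
        ∀ p ∈ O₁, ∀ q ∈ O₂, connIn d N ((F ∩ Cblk d N j) \ ran ω n) p q}

/-- A (finite) set `S` disconnects the cylinder. -/
def Disconnects (d N : ℕ) (S : Set (Cyl d N)) : Prop :=
  S.Finite ∧ ∃ M₀ : ℕ, ∀ M : ℕ, M₀ ≤ M → ∀ x y : Cyl d N,
    (M : ℤ) ≤ x.2 → y.2 ≤ -(M : ℤ) → ¬ connIn d N Sᶜ x y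

/-- The disconnection time `T_N`. -/
noncomputable def discT (d N : ℕ) (ω : ℕ → Cyl d N) : ℕ∞ :=
  sInf {t : ℕ∞ | ∃ n : ℕ, Disconnects d N (ran ω n) ∧ t = n}

/-- `r ≤ t` for `t : ℕ∞` and a real threshold `r` (trivially true when `t = ⊤`). -/
def geReal (t : ℕ∞) (r : ℝ) : Prop := ∀ n : ℕ, t = (n : ℕ∞) → r ≤ n

/-- `r < t` for `t : ℕ∞` and a real threshold `r` (trivially true when `t = ⊤`). -/
def gtReal (t : ℕ∞) (r : ℝ) : Prop := ∀ n : ℕ, t = (n : ℕ∞) → r < n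

/-- `φ_j(z) = E_z[exp(λ Σ_{x∈A} 1{H_x < T_{B̃_j}})]`. -/
noncomputable def phi (d N : ℕ) (Pl : Cyl d N → Measure (ℕ → Cyl d N)) (j : ℤ) (lam : ℝ)
    (A : Finset (Cyl d N)) (z : Cyl d N) : ℝ :=
  ∫ ω, Real.exp (lam * ∑ x ∈ A, if entT {x} ω < exitT (Btl d N j) ω then (1 : ℝ) else 0)
    ∂(Pl z)

/-- `‖φ_j‖_∞`. -/
noncomputable def phiSup (d N : ℕ) (Pl : Cyl d N → Measure (ℕ → Cyl d N)) (j : ℤ) (lam : ℝ)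
    (A : Finset (Cyl d N)) : ℝ :=
  ⨆ z : Cyl d N, phi d N Pl j lam A z

/-- `q_N = sup {P_z[H_F < T_{B̃_j}] : F ∈ L_m, z ∈ ∂F}`. -/
noncomputable def qNval (d N m : ℕ) (Pl : Cyl d N → Measure (ℕ → Cyl d N)) (j : ℤ) : ℝ :=
  sSup {r : ℝ | ∃ F ∈ Lcoll d N m, ∃ z ∈ bdry d N F,
      r = ((Pl z) {ω | entT F ω < exitT (Btl d N j) ω}).toReal}

/-- The times `τ_k`: `τ_0` is the entrance time of `(ℤ/Nℤ)^d × Nℤ`, and `τ_{k+1}` is the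
first time after `τ_k` at which the vertical component has moved by exactly `N`. -/
noncomputable def tauT (d N : ℕ) : ℕ → (ℕ → Cyl d N) → ℕ∞
  | 0, ω => entT {x : Cyl d N | (N : ℤ) ∣ x.2} ω
  | k + 1, ω =>
      (tauT d N k ω).recTopCoe ⊤ fun m =>
        sInf {t : ℕ∞ | ∃ n : ℕ, m < n ∧ ((ω n).2 - (ω m).2).natAbs = N ∧ t = n}

/-- `*`-adjacency on `ℤ²`. -/
def starAdj (x y : ℤ × ℤ) : Prop :=
  x ≠ y ∧ (x.1 - y.1).natAbs ≤ 1 ∧ (x.2 - y.2).natAbs ≤ 1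

/-! If the walk has disconnected the cylinder, then, in a two-dimensional slice, planar duality
yields a `*`-path of `N / 2` points, all visited by the walk. There are at most `8 * 7 ^ k`
non-backtracking `*`-paths of length `k` from a given point, so it suffices that a set `A` of `k`
points of the slice is covered with probability at most of order `Λ ^ (-k)` for some `Λ > 7`.

This holds because the walk projected on the `d - 1` coordinates transverse to the slice moves with
probability `1 - 2 / (d + 1)`, and then returns to the slice with probability at most about
`q(d - 1)`. To turn it into an exponential bound, one multiplies `Λ ^ #(visited points of A)` by the
minimum of two weights: near the slice, one built from the hitting probability of `0` in `ℤ^(d-1)`,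
and far from it a superposition of truncated Green functions of `ℤ^(d+1)`. The truncation loses a
factor `exp (C * k * V / N ^ (d + 1))`, where `V` is the time spent in a slab of height of order `N`
around the path.

That time is at most a small multiple of `N ^ (d + 1)` before time `γ * N ^ (2 * d)` when `γ` is
small: the local times of the vertical coordinate are then at most a small multiple of `N ^ d`, by
exponential supermartingales and a chaining along dyadic points.
-/

section RpowEstimates

lemma exists_one_add_rpow_neg_le_taylor (s : ℝ) :
    ∃ c₃ C ε : ℝ, 0 < ε ∧ 0 ≤ C ∧ ∀ x : ℝ, |x| ≤ ε →
      (1 + x) ^ (-s) ≤ 1 - s * x + s * (s + 1) / 2 * x ^ 2 + c₃ * x ^ 3 + C * x ^ 4 := by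
  obtain ⟨C, hC, hbound⟩ :=
    ((Real.one_add_rpow_hasFPowerSeriesAt_zero (a := -s)).isBigO_sub_partialSum_pow 4).exists_nonneg
  obtain ⟨ε, hε, hball⟩ := Metric.eventually_nhds_iff.mp hbound.bound
  refine ⟨Ring.choose (-s) 3, C, ε / 2, by positivity, hC, fun x hx => ?_⟩
  have hx' := hball (y := x) (by rw [Real.dist_eq, sub_zero]; linarith)
  have hchoose : Ring.choose (-s) 2 = s * (s + 1) / 2 := by
    rw [Ring.choose_eq_smul]
    simp only [Nat.factorial_two, Nat.cast_ofNat, descPochhammer_succ_left, descPochhammer_zero,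
      Polynomial.one_comp, mul_one, Polynomial.X_comp, Polynomial.smeval_mul, Polynomial.smeval_X,
      pow_one, Polynomial.smeval_sub, Polynomial.smeval_one, pow_zero, one_smul, neg_mul,
      smul_eq_mul, mul_neg]
    ring
  have hpartial : (binomialSeries ℝ (-s)).partialSum 4 x
      = 1 - s * x + s * (s + 1) / 2 * x ^ 2 + Ring.choose (-s) 3 * x ^ 3 := by
    simp only [FormalMultilinearSeries.partialSum, binomialSeries,
      FormalMultilinearSeries.apply_eq_prod_smul_coeff, Finset.prod_const, Finset.card_univ,
      Fintype.card_fin, FormalMultilinearSeries.coeff_ofScalars, smul_eq_mul,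
      Finset.sum_range_succ, Finset.range_one, Finset.sum_singleton, pow_zero,
      Ring.choose_zero_right', mul_one, pow_one, Ring.choose_one_right', mul_neg, hchoose]
    ring
  rw [hpartial, zero_add, Real.norm_eq_abs, Real.norm_eq_abs, abs_pow, Real.norm_eq_abs, abs_abs,
    Even.pow_abs (by decide)] at hx'
  linarith [(abs_le.mp hx').2]

/-- The odd Taylor terms in `δ` cancel, and `δ ^ 2 ≤ 4 * c` makes every other term beyond the
second order an `O(c ^ 2)`. -/
lemma exists_one_add_rpow_neg_pair_le (s : ℝ) :
    ∃ M c₀ : ℝ, 0 < c₀ ∧ ∀ c δ : ℝ, 0 < c → c ≤ c₀ → δ ^ 2 ≤ 4 * c →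
      (1 + (c + δ)) ^ (-s) + (1 + (c - δ)) ^ (-s)
        ≤ 2 - 2 * s * c + s * (s + 1) * δ ^ 2 + M * c ^ 2 := by
  obtain ⟨c₃, C, ε, hε, hC, htaylor⟩ := exists_one_add_rpow_neg_le_taylor s
  refine ⟨s * (s + 1) + |c₃| * 26 + C * 272, min 1 (ε ^ 2 / 9), by positivity,
    fun c δ hc hc₀ hδ => ?_⟩
  have hc1 : c ≤ 1 := hc₀.trans (min_le_left _ _)
  have hcε : 9 * c ≤ ε ^ 2 := by linarith [hc₀.trans (min_le_right _ _)]
  have hcc : c ^ 2 ≤ c := by nlinarith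
  have hplus := htaylor (c + δ) <| abs_le_of_sq_le_sq
    (by nlinarith [sq_nonneg (2 * c - δ)]) hε.le
  have hminus := htaylor (c - δ) <| abs_le_of_sq_le_sq
    (by nlinarith [sq_nonneg (2 * c + δ)]) hε.le
  have hcubic : c₃ * (2 * c ^ 3 + 6 * c * δ ^ 2) ≤ |c₃| * (26 * c ^ 2) := by
    have : c ^ 3 ≤ c ^ 2 := pow_le_pow_of_le_one hc.le hc1 (by norm_num)
    exact mul_le_mul (le_abs_self _) (by nlinarith) (by positivity) (abs_nonneg _)
  have hquartic : C * ((c + δ) ^ 4 + (c - δ) ^ 4) ≤ C * (272 * c ^ 2) := by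
    have hc4 : c ^ 4 ≤ c ^ 2 := pow_le_pow_of_le_one hc.le hc1 (by norm_num)
    have hδ4 : δ ^ 4 ≤ 16 * c ^ 2 := by nlinarith [sq_nonneg δ]
    refine mul_le_mul_of_nonneg_left ?_ hC
    nlinarith [sq_nonneg (c ^ 2 - δ ^ 2)]
  linear_combination hplus + hminus + hcubic + hquartic

lemma rpow_neg_tangent_le {s x y : ℝ} (hs : 0 ≤ s) (hx : 0 < x) (hy : 0 < y) :
    y ^ (-s) - s * y ^ (-s - 1) * (x - y) ≤ x ^ (-s) := by
  have hscale : x ^ (-s) = y ^ (-s) * (x / y) ^ (-s) := by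
    rw [← Real.mul_rpow hy.le (by positivity), mul_div_cancel₀ _ hy.ne']
  have hunit : 1 - s * (x / y - 1) ≤ (x / y) ^ (-s) := by
    rw [Real.rpow_def_of_pos (by positivity)]
    nlinarith [Real.add_one_le_exp (Real.log (x / y) * (-s)),
      Real.log_le_sub_one_of_pos (show 0 < x / y by positivity)]
  calc y ^ (-s) - s * y ^ (-s - 1) * (x - y) = y ^ (-s) * (1 - s * (x / y - 1)) := by
        rw [Real.rpow_sub_one hy.ne']
        field_simp
    _ ≤ y ^ (-s) * (x / y) ^ (-s) := by gcongr
    _ = x ^ (-s) := hscale.symm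

end RpowEstimates

section LatticeSuperharmonic

variable {n : ℕ}

/-- The squared Euclidean norm of a point of `ℤ^n`, as a real number. -/
def sqNorm (v : ZLat n) : ℝ := ∑ i, (v i : ℝ) ^ 2

/-- The sum of `f` over the `2n` neighbours of `v` in `ℤ^n`; a function is superharmonic at `v`
when this is at most `2n * f v`. -/
def nbrSum (f : ZLat n → ℝ) (v : ZLat n) : ℝ :=
  ∑ i, (f (v + Pi.single i 1) + f (v + Pi.single i (-1)))

lemma sqNorm_nonneg (v : ZLat n) : 0 ≤ sqNorm v := Finset.sum_nonneg fun _ _ => sq_nonneg _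

lemma sq_coord_le_sqNorm (v : ZLat n) (i : Fin n) : (v i : ℝ) ^ 2 ≤ sqNorm v :=
  Finset.single_le_sum (f := fun i => (v i : ℝ) ^ 2) (fun _ _ => sq_nonneg _) (Finset.mem_univ i)

lemma sqNorm_add_single (v : ZLat n) (i : Fin n) (k : ℤ) :
    sqNorm (v + Pi.single i k) = sqNorm v + (k ^ 2 + 2 * k * v i) := by
  have hcoord : ∀ j, (((v + Pi.single i k : ZLat n) j : ℤ) : ℝ) ^ 2
      = (v j : ℝ) ^ 2 + if j = i then (k : ℝ) ^ 2 + 2 * k * v i else 0 := by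
    intro j
    obtain rfl | hj := eq_or_ne j i
    · simp only [Pi.add_apply, Pi.single_eq_same, if_true]
      push_cast
      ring
    · simp [hj]
  simp only [sqNorm, hcoord, Finset.sum_add_distrib, Finset.sum_ite_eq', Finset.mem_univ, if_true]

lemma nbrSum_le_of_forall_le {f : ZLat n → ℝ} {v : ZLat n} {b : ℝ}
    (h : ∀ i, ∀ k : ℤ, k ^ 2 = 1 → f (v + Pi.single i k) ≤ b) : nbrSum f v ≤ 2 * n * b := by
  have hpair : nbrSum f v ≤ ∑ _i : Fin n, 2 * b :=
    Finset.sum_le_sum fun i _ => by linarith [h i 1 (by norm_num), h i (-1) (by norm_num)]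
  rw [Finset.sum_const, Finset.card_univ, Fintype.card_fin, nsmul_eq_mul] at hpair
  linarith

lemma nbrSum_mono {f g : ZLat n → ℝ} (h : ∀ w, f w ≤ g w) (v : ZLat n) :
    nbrSum f v ≤ nbrSum g v :=
  Finset.sum_le_sum fun _ _ => add_le_add (h _) (h _)

lemma exists_sqNorm_rpow_pair_le (s : ℝ) :
    ∃ M a₀ : ℝ, 1 ≤ a₀ ∧ ∀ a : ℝ, a₀ ≤ a → ∀ (v : ZLat n) (i : Fin n) (c : ℝ),
      c * (sqNorm v + a) = 1 →
      (sqNorm (v + Pi.single i 1) + a) ^ (-s) + (sqNorm (v + Pi.single i (-1)) + a) ^ (-s)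
        ≤ (sqNorm v + a) ^ (-s) *
          (2 - 2 * s * c + s * (s + 1) * (2 * v i * c) ^ 2 + M * c ^ 2) := by
  obtain ⟨M, c₀, hc₀, hpair⟩ := exists_one_add_rpow_neg_pair_le s
  refine ⟨M, max 1 (1 / c₀), le_max_left _ _, fun a ha v i c hcρ => ?_⟩
  have ha1 : 1 ≤ a := (le_max_left _ _).trans ha
  have hρ : 0 < sqNorm v + a := by linarith [sqNorm_nonneg v]
  have hc : 0 < c := pos_of_mul_pos_left (hcρ ▸ one_pos) hρ.le
  have hcc₀ : c ≤ c₀ := by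
    rw [eq_one_div_of_mul_eq_one_left hcρ, one_div_le hρ hc₀]
    linarith [sqNorm_nonneg v, (le_max_right _ _).trans ha]
  have hδ : (2 * v i * c) ^ 2 ≤ 4 * c := by
    have : (v i : ℝ) ^ 2 ≤ sqNorm v + a := by linarith [sq_coord_le_sqNorm v i]
    nlinarith [mul_le_mul_of_nonneg_right this (sq_nonneg c)]
  have hscale : ∀ k : ℤ, k ^ 2 = 1 → (sqNorm (v + Pi.single i k) + a) ^ (-s)
      = (sqNorm v + a) ^ (-s) * (1 + (c + k * (2 * v i * c))) ^ (-s) := fun k hk => by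
    have hfactor : (sqNorm v + a) * (1 + (c + k * (2 * v i * c)))
        = sqNorm (v + Pi.single i k) + a := by
      have hk' : (k : ℝ) ^ 2 = 1 := by exact_mod_cast hk
      rw [sqNorm_add_single]
      linear_combination -hk' + (1 + 2 * k * v i) * hcρ
    rw [← hfactor, Real.mul_rpow hρ.le]
    refine nonneg_of_mul_nonneg_right (hfactor ▸ ?_) hρ
    linarith [sqNorm_nonneg (v + Pi.single i k)]
  rw [hscale 1 (by norm_num), hscale (-1) (by norm_num), ← mul_add]
  refine mul_le_mul_of_nonneg_left ?_ (by positivity)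
  simpa only [Int.cast_one, Int.cast_neg, one_mul, neg_one_mul, ← sub_eq_add_neg] using
    hpair c (2 * v i * c) hc hcc₀ hδ

/-- Summed over the coordinates, the first order terms contribute `(-2ns + 4s(s+1)) * c ≤ 0`
with `c = 1 / (|v|² + a)`, and for large `a` the term `-4as(s+1) * c²` absorbs the remainders. -/
lemma exists_nbrSum_sqNorm_rpow_le {s : ℝ} (hs : 0 < s) (hn : 2 * s + 2 ≤ n) :
    ∃ a : ℝ, 1 ≤ a ∧ ∀ v : ZLat n,
      nbrSum (fun w => (sqNorm w + a) ^ (-s)) v ≤ 2 * n * (sqNorm v + a) ^ (-s) := by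
  obtain ⟨M, a₀, ha₀, hpair⟩ := exists_sqNorm_rpow_pair_le (n := n) s
  set a := max a₀ (n * M / (4 * (s * (s + 1))))
  have ha1 : 1 ≤ a := ha₀.trans (le_max_left _ _)
  refine ⟨a, ha1, fun v => ?_⟩
  have hρ : 0 < sqNorm v + a := by linarith [sqNorm_nonneg v]
  set c : ℝ := 1 / (sqNorm v + a)
  have hc_pos : 0 < c := by positivity
  have hcρ : c * (sqNorm v + a) = 1 := one_div_mul_cancel hρ.ne'
  refine (Finset.sum_le_sum fun i _ => hpair a (le_max_left _ _) v i c hcρ).trans ?_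
  rw [← Finset.mul_sum, mul_comm (2 * (n : ℝ))]
  refine mul_le_mul_of_nonneg_left ?_ (by positivity)
  have hsum : ∑ i, (2 * v i * c) ^ 2 = 4 * c - 4 * a * c ^ 2 := by
    simp only [mul_pow, ← Finset.mul_sum, ← Finset.sum_mul]
    change 2 ^ 2 * sqNorm v * c ^ 2 = _
    linear_combination 4 * c * hcρ
  simp only [Finset.sum_add_distrib, ← Finset.mul_sum, hsum, Finset.sum_const, Finset.card_univ,
    Fintype.card_fin, nsmul_eq_mul]
  have habsorb : n * M ≤ a * (4 * (s * (s + 1))) :=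
    (div_le_iff₀ (by positivity)).mp (le_max_right _ _)
  have hfirst : s * c * (2 * s + 2) ≤ s * c * n :=
    mul_le_mul_of_nonneg_left hn (mul_pos hs hc_pos).le
  linear_combination 2 * hfirst + mul_le_mul_of_nonneg_right habsorb (sq_nonneg c)

end LatticeSuperharmonic

section TruncatedGreen

variable {n : ℕ} {s R ρ : ℝ}

/-- The gap at `ρ` between the convex function `x ↦ x ^ (-s)` and its tangent line at `R`. -/
noncomputable def tangentGap (s R ρ : ℝ) : ℝ := ρ ^ (-s) - R ^ (-s) + s * R ^ (-s - 1) * (ρ - R)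

/-- The tangent gap cut off beyond `R`: a Green-type function of the squared norm `ρ` with compact
support. Subtracting the tangent line makes the cut-off differentiable at `R`, so that it costs
superharmonicity only `O(R ^ (-s - 1))`. -/
noncomputable def truncGreen (s R ρ : ℝ) : ℝ := if ρ ≤ R then tangentGap s R ρ else 0

lemma tangentGap_nonneg (hs : 0 ≤ s) (hR : 0 < R) (hρ : 0 < ρ) : 0 ≤ tangentGap s R ρ := by
  have := rpow_neg_tangent_le hs hρ hR
  unfold tangentGap
  linarith

lemma truncGreen_nonneg (hs : 0 ≤ s) (hR : 0 < R) (hρ : 0 < ρ) : 0 ≤ truncGreen s R ρ := by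
  unfold truncGreen
  split_ifs
  exacts [tangentGap_nonneg hs hR hρ, le_rfl]

lemma truncGreen_le_tangentGap (hs : 0 ≤ s) (hR : 0 < R) (hρ : 0 < ρ) :
    truncGreen s R ρ ≤ tangentGap s R ρ := by
  unfold truncGreen
  split_ifs
  exacts [le_rfl, tangentGap_nonneg hs hR hρ]

lemma tangentGap_le_sq (hs : 0 ≤ s) (hR : 0 < R) (hρ : 0 < ρ) (hρR : ρ ≤ R) :
    tangentGap s R ρ ≤ s * (s + 1) * ρ ^ (-s - 2) * (R - ρ) ^ 2 := by
  have hvalue := rpow_neg_tangent_le hs hR hρ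
  have hslope := rpow_neg_tangent_le (s := s + 1) (by linarith) hR hρ
  rw [show -(s + 1) = -s - 1 by ring, show -s - 1 - 1 = -s - 2 by ring] at hslope
  have hslope' := mul_le_mul_of_nonneg_left hslope (mul_nonneg hs (sub_nonneg.mpr hρR))
  unfold tangentGap
  linear_combination hvalue + hslope'

lemma quarter_le_and_sq_sub_le_of_sq_le {w : ℝ} (hR : 16 ≤ R) (hρ : R < ρ) (hw : w ^ 2 ≤ ρ)
    (h : ρ + 1 + 2 * w ≤ R) :
    R / 4 ≤ ρ + 1 + 2 * w ∧ (R - (ρ + 1 + 2 * w)) ^ 2 ≤ 4 * R := by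
  have hR2 : √R ^ 2 = R := Real.sq_sqrt (by linarith)
  have hρ2 : √ρ ^ 2 = ρ := Real.sq_sqrt (by linarith)
  have hR4 : 4 ≤ √R := Real.le_sqrt_of_sq_le (by linarith)
  have hRρ : √R ≤ √ρ := Real.sqrt_le_sqrt hρ.le
  have hw' := (abs_le.mp (Real.abs_le_sqrt hw)).1
  have hlower : (√R - 1) ^ 2 ≤ ρ + 1 + 2 * w := by nlinarith [hRρ, hw']
  exact ⟨by nlinarith, by nlinarith⟩

lemma truncGreen_le_of_lt {w : ℝ} (hs : 0 ≤ s) (hR : 16 ≤ R) (hρ : R < ρ) (hw : w ^ 2 ≤ ρ) :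
    truncGreen s R (ρ + 1 + 2 * w) ≤ s * (s + 1) * (4 * 4 ^ (s + 2)) * R ^ (-s - 1) := by
  have hR0 : 0 < R := by linarith
  unfold truncGreen
  split_ifs with h
  swap
  · positivity
  obtain ⟨hquarter, hsq⟩ := quarter_le_and_sq_sub_le_of_sq_le hR hρ hw h
  have hy0 : 0 < ρ + 1 + 2 * w := by linarith
  have hpow : (ρ + 1 + 2 * w) ^ (-s - 2) ≤ 4 ^ (s + 2) * R ^ (-s - 2) := by
    calc (ρ + 1 + 2 * w) ^ (-s - 2) ≤ (R / 4) ^ (-s - 2) :=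
          Real.rpow_le_rpow_of_nonpos (by positivity) hquarter (by linarith)
      _ = 4 ^ (s + 2) * R ^ (-s - 2) := by
          rw [Real.div_rpow hR0.le (by norm_num), div_eq_mul_inv, ← Real.rpow_neg (by norm_num),
            mul_comm, show -(-s - 2) = s + 2 by ring]
  have hshift : R ^ (-s - 2) * R = R ^ (-s - 1) := by
    rw [← Real.rpow_add_one hR0.ne']
    ring_nf
  calc tangentGap s R (ρ + 1 + 2 * w)
      ≤ s * (s + 1) * (ρ + 1 + 2 * w) ^ (-s - 2) * (R - (ρ + 1 + 2 * w)) ^ 2 :=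
        tangentGap_le_sq hs hR0 hy0 h
    _ ≤ s * (s + 1) * (4 ^ (s + 2) * R ^ (-s - 2)) * (4 * R) := by gcongr
    _ = s * (s + 1) * (4 * 4 ^ (s + 2)) * (R ^ (-s - 2) * R) := by ring
    _ = s * (s + 1) * (4 * 4 ^ (s + 2)) * R ^ (-s - 1) := by rw [hshift]

lemma nbrSum_tangentGap (a : ℝ) (v : ZLat n) :
    nbrSum (fun w => tangentGap s R (sqNorm w + a)) v
      = nbrSum (fun w => (sqNorm w + a) ^ (-s)) v
        + 2 * n * (s * R ^ (-s - 1) * (sqNorm v + a + 1 - R) - R ^ (-s)) := by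
  have hconst : (2 * n * (s * R ^ (-s - 1) * (sqNorm v + a + 1 - R) - R ^ (-s)) : ℝ)
      = ∑ _i : Fin n, 2 * (s * R ^ (-s - 1) * (sqNorm v + a + 1 - R) - R ^ (-s)) := by
    rw [Finset.sum_const, Finset.card_univ, Fintype.card_fin, nsmul_eq_mul]
    ring
  rw [hconst, nbrSum, nbrSum, ← Finset.sum_add_distrib]
  refine Finset.sum_congr rfl fun i _ => ?_
  simp only [tangentGap, sqNorm_add_single]
  push_cast
  ring

lemma nbrSum_truncGreen_le {a : ℝ} (hs : 0 ≤ s) (ha : 1 ≤ a) (hR : 16 ≤ R)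
    (hsuper : ∀ v : ZLat n,
      nbrSum (fun w => (sqNorm w + a) ^ (-s)) v ≤ 2 * n * (sqNorm v + a) ^ (-s)) (v : ZLat n) :
    nbrSum (fun w => truncGreen s R (sqNorm w + a)) v
      ≤ 2 * n * truncGreen s R (sqNorm v + a)
        + 2 * n * (s + s * (s + 1) * (4 * 4 ^ (s + 2))) * R ^ (-s - 1) := by
  have hR0 : 0 < R := by linarith
  have hkink : 0 ≤ 2 * n * (s * (s + 1) * (4 * 4 ^ (s + 2))) * R ^ (-s - 1) := by positivity
  have hslope : 0 ≤ 2 * n * s * R ^ (-s - 1) := by positivity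
  by_cases hv : sqNorm v + a ≤ R
  · have hmono := nbrSum_mono (fun w : ZLat n => truncGreen_le_tangentGap (R := R) hs hR0
      (show 0 < sqNorm w + a by linarith [sqNorm_nonneg w])) v
    rw [nbrSum_tangentGap] at hmono
    rw [show truncGreen s R (sqNorm v + a) = tangentGap s R (sqNorm v + a) from if_pos hv]
    unfold tangentGap
    linear_combination hmono + hsuper v + hkink
  · rw [show truncGreen s R (sqNorm v + a) = 0 from if_neg hv]
    have hnbr := nbrSum_le_of_forall_le (f := fun w => truncGreen s R (sqNorm w + a)) (v := v)
      (b := s * (s + 1) * (4 * 4 ^ (s + 2)) * R ^ (-s - 1)) fun i k hk => by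
        have hk' : (k : ℝ) ^ 2 = 1 := by exact_mod_cast hk
        have harg : sqNorm (v + Pi.single i k) + a = sqNorm v + a + 1 + 2 * (k * v i) := by
          rw [sqNorm_add_single]
          linear_combination hk'
        rw [harg]
        refine truncGreen_le_of_lt hs hR (not_le.mp hv) ?_
        rw [mul_pow, hk', one_mul]
        linarith [sq_coord_le_sqNorm v i]
    linear_combination hnbr + hslope

lemma eventually_le_truncGreen {a : ℝ} (hs : 0 < s) (ha : 0 < a) :
    ∀ᶠ R in atTop, a ^ (-s) / 2 ≤ truncGreen s R a := by
  have hlim : Tendsto (fun R : ℝ => (1 + s) * R ^ (-s)) atTop (nhds 0) := by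
    simpa only [mul_zero] using (tendsto_rpow_neg_atTop hs).const_mul (1 + s)
  filter_upwards [hlim.eventually (gt_mem_nhds (half_pos (Real.rpow_pos_of_pos ha (-s)))),
    eventually_ge_atTop a] with R hsmall haR
  have hR : 0 < R := ha.trans_le haR
  have hshift : R ^ (-s - 1) * R = R ^ (-s) := by
    rw [Real.rpow_sub_one hR.ne', div_mul_cancel₀ _ hR.ne']
  rw [truncGreen, if_pos haR, tangentGap]
  have hslope : 0 ≤ s * R ^ (-s - 1) * a := by positivity
  linear_combination hsmall + hslope + s * hshift

lemma exists_truncGreen_nbrSum_le (hs : 0 < s) (hn : 2 * s + 2 ≤ n) :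
    ∃ a C R₀ g₀ : ℝ, 1 ≤ a ∧ 0 ≤ C ∧ 16 ≤ R₀ ∧ 0 < g₀ ∧ ∀ R : ℝ, R₀ ≤ R →
      g₀ ≤ truncGreen s R a ∧ ∀ v : ZLat n,
        nbrSum (fun w => truncGreen s R (sqNorm w + a)) v
          ≤ 2 * n * truncGreen s R (sqNorm v + a) + C * R ^ (-s - 1) := by
  obtain ⟨a, ha, hsuper⟩ := exists_nbrSum_sqNorm_rpow_le hs hn
  obtain ⟨R₁, hR₁⟩ := eventually_atTop.mp (eventually_le_truncGreen hs (one_pos.trans_le ha))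
  exact ⟨a, 2 * n * (s + s * (s + 1) * (4 * 4 ^ (s + 2))), max 16 R₁, a ^ (-s) / 2, ha,
    by positivity, le_max_left _ _, by positivity, fun R hR =>
      ⟨hR₁ R ((le_max_right _ _).trans hR),
        nbrSum_truncGreen_le hs.le ha ((le_max_left _ _).trans hR) hsuper⟩⟩

end TruncatedGreen

section MarkovChain

lemma domRestrict_Iic_preimage_singleton {S : Type*} {n : ℕ} (g : Set.Iic n → S) (y : S) :
    (fun ω : ℕ → S => (Set.Iic n).domRestrict ω) ⁻¹' {g}
      = {ω | ∀ i ≤ n, ω i = Function.extend Subtype.val g (fun _ => y) i} := by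
  ext ω
  simp only [Set.mem_preimage, Set.mem_singleton_iff, funext_iff, Subtype.forall, Set.mem_Iic,
    Set.domRestrict_apply, Set.mem_ofPred_eq]
  refine forall₂_congr fun i hi => ?_
  rw [show Function.extend Subtype.val g (fun _ => y) i = g ⟨i, hi⟩ from
    Subtype.val_injective.extend_apply g (fun _ => y) ⟨i, hi⟩]

variable {S : Type*} [MeasurableSpace S]

/-- `P` is the family of laws, indexed by the starting point, of the Markov chain on `S` with
transition probabilities `p`. As in `IsCylRW` and `IsLatRW`, of which it is the common form, the
laws are prescribed on the events that fix an initial piece of the trajectory. -/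
structure IsMarkovChain (p : S → S → ℝ≥0∞) (P : S → Measure (ℕ → S)) : Prop where
  isProbabilityMeasure : ∀ x, IsProbabilityMeasure (P x)
  measure_prefix : ∀ x n (γ : ℕ → S), P x {ω | ∀ i ≤ n, ω i = γ i}
    = (if γ 0 = x then 1 else 0) * ∏ i ∈ Finset.range n, p (γ i) (γ (i + 1))

variable [Countable S] [MeasurableSingletonClass S]

lemma lintegral_comp_eq_tsum {Ω T : Type*} [MeasurableSpace Ω] [MeasurableSpace T] [Countable T]
    [MeasurableSingletonClass T] (μ : Measure Ω) {Z : Ω → T} (hZ : Measurable Z) (h : T → ℝ≥0∞) :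
    ∫⁻ ω, h (Z ω) ∂μ = ∑' t, h t * μ (Z ⁻¹' {t}) := by
  rw [← lintegral_map (measurable_of_countable h) hZ, lintegral_countable']
  simp only [Measure.map_apply hZ (measurableSet_singleton _)]

lemma measurable_of_dependsOn_Iic {β : Type*} [MeasurableSpace β] [Nonempty β] {n : ℕ}
    {F : (ℕ → S) → β} (hF : DependsOn F (Set.Iic n)) : Measurable F := by
  obtain ⟨g, rfl⟩ := dependsOn_iff_exists_comp.mp hF
  exact (measurable_of_countable g).comp (by fun_prop)

lemma ext_of_measure_prefix {μ ν : Measure (ℕ → S)} [IsFiniteMeasure μ]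
    (h : ∀ n (γ : ℕ → S), ν {ω | ∀ i ≤ n, ω i = γ i} = μ {ω | ∀ i ≤ n, ω i = γ i}) : ν = μ := by
  have hproj : IsProjectiveMeasureFamily fun I : Finset ℕ => μ.map I.restrict :=
    ProbabilityTheory.isProjectiveMeasureFamily_map_restrict
      fun t => (measurable_pi_apply t).aemeasurable
  have hμ : IsProjectiveLimit μ fun I : Finset ℕ => μ.map I.restrict := fun _ => rfl
  refine IsProjectiveLimit.unique ((isProjectiveLimit_nat_iff hproj ν).mpr fun n => ?_) hμ
  refine Measure.ext_of_singleton fun g => ?_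
  have hpre : (Finset.Iic n).restrict ⁻¹' ({g} : Set (Finset.Iic n → S))
      = (fun ω : ℕ → S => (Set.Iic n).domRestrict ω) ⁻¹'
        ({fun i : Set.Iic n => g ⟨i, Finset.mem_Iic.mpr i.2⟩} : Set (Set.Iic n → S)) := by
    ext ω
    simp [funext_iff, Finset.restrict]
  rw [Measure.map_apply (Preorder.measurable_frestrictLe n) (measurableSet_singleton g),
    Measure.map_apply (Finset.measurable_restrict _) (measurableSet_singleton g),
    Preorder.frestrictLe, hpre,
    domRestrict_Iic_preimage_singleton _ (g ⟨0, Finset.mem_Iic.mpr n.zero_le⟩), h]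

namespace IsMarkovChain

variable {p : S → S → ℝ≥0∞} {P : S → Measure (ℕ → S)} (hP : IsMarkovChain p P)
include hP

omit [Countable S] in
lemma ae_apply_zero_eq (x : S) : ∀ᵐ ω ∂P x, ω 0 = x := by
  have := hP.isProbabilityMeasure x
  have hmeas : MeasurableSet {ω : ℕ → S | ω 0 = x} :=
    (measurable_pi_apply (X := fun _ => S) 0) (measurableSet_singleton x)
  rw [ae_iff, ← Set.compl_ofPred, prob_compl_eq_zero_iff hmeas]
  simpa using hP.measure_prefix x 0 fun _ => x

omit [Countable S] [MeasurableSingletonClass S] in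
lemma measure_prefix_inter_succ (x : S) {n : ℕ} (g : Set.Iic n → S) (y : S) :
    P x ((fun ω : ℕ → S => (Set.Iic n).domRestrict ω) ⁻¹' {g} ∩ {ω | ω (n + 1) = y})
      = P x ((fun ω : ℕ → S => (Set.Iic n).domRestrict ω) ⁻¹' {g})
        * p (g ⟨n, Set.self_mem_Iic⟩) y := by
  set γ : ℕ → S := Function.extend Subtype.val g fun _ => y
  have hlast : γ n = g ⟨n, Set.self_mem_Iic⟩ :=
    Subtype.val_injective.extend_apply g _ ⟨n, Set.self_mem_Iic⟩
  have hnext : γ (n + 1) = y := Function.extend_apply' _ _ _ (by simp)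
  have hset : {ω : ℕ → S | ∀ i ≤ n, ω i = γ i} ∩ {ω | ω (n + 1) = y}
      = {ω | ∀ i ≤ n + 1, ω i = γ i} := by
    ext ω
    simp only [Set.mem_inter_iff, Set.mem_ofPred_eq, Nat.le_succ_iff, or_imp, forall_and,
      forall_eq, hnext]
  rw [domRestrict_Iic_preimage_singleton g y, hset, hP.measure_prefix, hP.measure_prefix,
    Finset.prod_range_succ, hlast, hnext, mul_assoc]

lemma lintegral_apply_succ (x : S) {n : ℕ} {F : (ℕ → S) → S → ℝ≥0∞}
    (hF : DependsOn F (Set.Iic n)) :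
    ∫⁻ ω, F ω (ω (n + 1)) ∂P x = ∫⁻ ω, ∑' y, F ω y * p (ω n) y ∂P x := by
  obtain ⟨f, rfl⟩ := dependsOn_iff_exists_comp.mp hF
  have hprefix : Measurable fun ω : ℕ → S => (Set.Iic n).domRestrict ω := by fun_prop
  calc ∫⁻ ω, f ((Set.Iic n).domRestrict ω) (ω (n + 1)) ∂P x
      = ∑' z : (Set.Iic n → S) × S, f z.1 z.2
          * P x ((fun ω => ((Set.Iic n).domRestrict ω, ω (n + 1))) ⁻¹' {z}) :=
        lintegral_comp_eq_tsum (P x) (hprefix.prodMk (measurable_pi_apply (n + 1)))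
          fun z => f z.1 z.2
    _ = ∑' g, (∑' y, f g y * p (g ⟨n, Set.self_mem_Iic⟩) y)
          * P x ((fun ω : ℕ → S => (Set.Iic n).domRestrict ω) ⁻¹' {g}) := by
        rw [ENNReal.tsum_prod']
        refine tsum_congr fun g => ?_
        rw [← ENNReal.tsum_mul_right]
        refine tsum_congr fun y => ?_
        rw [← Set.singleton_prod_singleton, Set.mk_preimage_prod, mul_assoc, mul_comm (p _ _),
          ← hP.measure_prefix_inter_succ]
        rfl
    _ = ∫⁻ ω, ∑' y, f ((Set.Iic n).domRestrict ω) y * p (ω n) y ∂P x :=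
        (lintegral_comp_eq_tsum (P x) hprefix
          fun g => ∑' y, f g y * p (g ⟨n, Set.self_mem_Iic⟩) y).symm

lemma ae_of_forall_tsum_eq_zero (x : S) (n : ℕ) {R : S → S → Prop}
    (hR : ∀ z, ∑' y, (if R z y then 0 else 1) * p z y = 0) :
    ∀ᵐ ω ∂P x, R (ω n) (ω (n + 1)) := by
  have hpair : Measurable fun ω : ℕ → S => (ω n, ω (n + 1)) :=
    (measurable_pi_apply n).prodMk (measurable_pi_apply (n + 1))
  have hmeas : Measurable fun ω : ℕ → S => if R (ω n) (ω (n + 1)) then (0 : ℝ≥0∞) else 1 :=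
    (measurable_of_countable fun z : S × S => if R z.1 z.2 then (0 : ℝ≥0∞) else 1).comp hpair
  have hdep : DependsOn (fun (ω : ℕ → S) y => if R (ω n) y then (0 : ℝ≥0∞) else 1) (Set.Iic n) :=
    fun ω ω' h => by simp only [h n Set.self_mem_Iic]
  have hzero : ∫⁻ ω, (if R (ω n) (ω (n + 1)) then (0 : ℝ≥0∞) else 1) ∂P x = 0 := by
    rw [hP.lintegral_apply_succ x hdep]
    simp only [hR, lintegral_zero]
  filter_upwards [(lintegral_eq_zero_iff hmeas).mp hzero] with ω hω
  by_contra hnot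
  simp [hnot] at hω

omit hP [MeasurableSpace S] [Countable S] [MeasurableSingletonClass S] in
lemma dependsOn_prod_apply_succ {ξ : ℕ → (ℕ → S) → S → ℝ≥0∞}
    (hdep : ∀ k, DependsOn (ξ k) (Set.Iic k)) (n : ℕ) :
    DependsOn (fun ω : ℕ → S => ∏ i ∈ Finset.range n, ξ i ω (ω (i + 1))) (Set.Iic n) := by
  intro ω ω' h
  refine Finset.prod_congr rfl fun i hi => ?_
  have hin : i < n := Finset.mem_range.mp hi
  rw [hdep i fun j (hj : j ≤ i) => h j (hj.trans hin.le), h (i + 1) hin]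

lemma lintegral_prod_le_one (x : S) {ξ : ℕ → (ℕ → S) → S → ℝ≥0∞}
    (hdep : ∀ k, DependsOn (ξ k) (Set.Iic k)) (hmean : ∀ k ω, ∑' y, ξ k ω y * p (ω k) y ≤ 1)
    (n : ℕ) : ∫⁻ ω, ∏ i ∈ Finset.range n, ξ i ω (ω (i + 1)) ∂P x ≤ 1 := by
  have := hP.isProbabilityMeasure x
  induction n with
  | zero => simp
  | succ n ih =>
    refine le_trans ?_ ih
    simp only [Finset.prod_range_succ]
    rw [hP.lintegral_apply_succ x
      (F := fun ω y => (∏ i ∈ Finset.range n, ξ i ω (ω (i + 1))) * ξ n ω y)]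
    · refine lintegral_mono fun ω => ?_
      simp only [mul_assoc, ENNReal.tsum_mul_left]
      exact mul_le_of_le_one_right' (hmean n ω)
    · intro ω ω' h
      funext y
      exact congrArg₂ (· * ·) (dependsOn_prod_apply_succ hdep n h) (congrFun (hdep n h) y)

lemma mul_measure_le_one (x : S) {ξ : ℕ → (ℕ → S) → S → ℝ≥0∞}
    (hdep : ∀ k, DependsOn (ξ k) (Set.Iic k)) (hmean : ∀ k ω, ∑' y, ξ k ω y * p (ω k) y ≤ 1)
    {n : ℕ} {c : ℝ≥0∞} {E : Set (ℕ → S)}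
    (hE : ∀ᵐ ω ∂P x, ω ∈ E → c ≤ ∏ i ∈ Finset.range n, ξ i ω (ω (i + 1))) :
    c * P x E ≤ 1 :=
  calc c * P x E ≤ c * P x {ω | c ≤ ∏ i ∈ Finset.range n, ξ i ω (ω (i + 1))} :=
        mul_le_mul_right (measure_mono_ae hE) c
    _ ≤ ∫⁻ ω, ∏ i ∈ Finset.range n, ξ i ω (ω (i + 1)) ∂P x :=
        mul_meas_ge_le_lintegral
          (measurable_of_dependsOn_Iic (dependsOn_prod_apply_succ hdep n)) c
    _ ≤ 1 := hP.lintegral_prod_le_one x hdep hmean n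

lemma map_shift (x : S) :
    (P x).map (fun ω k => ω (k + 1)) = Measure.sum fun y => p x y • P y := by
  have := hP.isProbabilityMeasure
  have hshift : Measurable fun (ω : ℕ → S) (k : ℕ) => ω (k + 1) := by fun_prop
  have hprefix : ∀ n (γ : ℕ → S), MeasurableSet {ω : ℕ → S | ∀ i ≤ n, ω i = γ i} := fun n γ => by
    measurability
  refine (ext_of_measure_prefix fun n γ => ?_).symm
  rw [Measure.sum_apply _ (hprefix n γ), Measure.map_apply hshift (hprefix n γ)]
  have hcons : P x ((fun ω k => ω (k + 1)) ⁻¹' {ω | ∀ i ≤ n, ω i = γ i})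
      = P x {ω | ∀ i ≤ n + 1, ω i = Nat.casesOn i x γ} := by
    refine measure_congr ?_
    filter_upwards [hP.ae_apply_zero_eq x] with ω hω
    refine propext ⟨fun h i hi => ?_, fun h i hi => h (i + 1) (by lia)⟩
    cases i with
    | zero => exact hω
    | succ i => exact h i (by lia)
  rw [hcons, hP.measure_prefix, Finset.prod_range_succ', tsum_eq_single (γ 0)]
  · simp [hP.measure_prefix, mul_comm]
  · intro y hy
    simp [hP.measure_prefix, Ne.symm hy]

end IsMarkovChain

end MarkovChain

section CylinderWalk

instance (N : ℕ) : MeasurableSingletonClass (ZMod N) := ⟨fun _ => trivial⟩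

lemma single_unit_injective (n : ℕ) : Function.Injective
    fun p : Fin n × Bool => (Pi.single p.1 (if p.2 then 1 else -1) : Fin n → ℤ) := by
  rintro ⟨i, a⟩ ⟨j, b⟩ h
  have hi := congrFun h i
  rcases eq_or_ne i j with rfl | hij
  · cases a <;> cases b <;> simp_all
  · cases a <;> simp [hij] at hi

lemma sum_image_single_unit {M : Type*} [AddCommMonoid M] (n : ℕ) (f : (Fin n → ℤ) → M) :
    ∑ u ∈ Finset.image (fun p : Fin n × Bool => Pi.single p.1 (if p.2 then (1 : ℤ) else -1))
      Finset.univ, f u = ∑ i, (f (Pi.single i 1) + f (Pi.single i (-1))) := by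
  rw [Finset.sum_image (single_unit_injective n).injOn, Fintype.sum_prod_type]
  simp

lemma sum_unitVecs {M : Type*} [AddCommMonoid M] (d : ℕ) (f : Lat d → M) :
    ∑ u ∈ unitVecs d, f u = ∑ i, (f (Pi.single i 1) + f (Pi.single i (-1))) :=
  sum_image_single_unit (d + 1) f

lemma card_unitVecs (d : ℕ) : (unitVecs d).card = 2 * (d + 1) := by
  rw [Finset.card_eq_sum_ones, sum_unitVecs]
  simp [mul_comm]

variable {d N : ℕ}

/-- The sum of `f` over the `2(d+1)` unit moves from `z` in the cylinder. Moves leading to the same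
site (when `N ≤ 2`) are counted separately, so that `cylNbrSum f z / (2(d+1))` is always the mean of
`f` after one step of the walk. -/
noncomputable def cylNbrSum (f : Cyl d N → ℝ) (z : Cyl d N) : ℝ :=
  ∑ u ∈ unitVecs d, f (z + projE d N u)

lemma tsum_mul_stepProb (z : Cyl d N) (h : Cyl d N → ℝ≥0∞) :
    ∑' y, h y * stepProb d N z y = (∑ u ∈ unitVecs d, h (z + projE d N u)) / (2 * (d + 1)) := by
  have hterm : ∀ y, h y * stepProb d N z y
      = (∑ u ∈ unitVecs d, if y = z + projE d N u then h y else 0)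
        * (2 * (d + 1) : ℝ≥0∞)⁻¹ := by
    intro y
    rw [stepProb, Finset.card_eq_sum_ones, ← mul_div_assoc, Nat.cast_sum, Finset.mul_sum,
      Finset.sum_filter, div_eq_mul_inv]
    simp only [Nat.cast_one, mul_one, eq_comm]
  simp_rw [hterm]
  rw [ENNReal.tsum_mul_right, Summable.tsum_finsetSum (fun _ _ => ENNReal.summable)]
  simp only [tsum_ite_eq, div_eq_mul_inv]

lemma tsum_zStep_mul (ν : ℕ) (z : ZLat ν) (h : ZLat ν → ℝ≥0∞) :
    ∑' y, zStep ν z y * h y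
      = (∑ i, (h (z + Pi.single i 1) + h (z + Pi.single i (-1)))) / (2 * ν) := by
  set F : Finset (ZLat ν) := Finset.image
    (fun p : Fin ν × Bool => Pi.single p.1 (if p.2 then (1 : ℤ) else -1)) Finset.univ with hF
  have hmem : ∀ u, u ∈ zUnitVecs ν ↔ u ∈ F := fun u => by
    simp only [hF, zUnitVecs, Set.mem_ofPred_eq, Finset.mem_image, Finset.mem_univ, true_and,
      Prod.exists, Bool.exists_bool, if_true, Bool.false_eq_true, if_false, or_comm,
      eq_comm (a := u)]
  rw [← (Equiv.addLeft z).tsum_eq, tsum_eq_sum (s := F), div_eq_mul_inv, mul_comm,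
    ← sum_image_single_unit ν fun u => h (z + u), Finset.mul_sum]
  · refine Finset.sum_congr rfl fun u hu => ?_
    simp [zStep, (hmem u).mpr hu]
  · intro u hu
    simp [zStep, mt (hmem u).mp hu]

/-- `ω` is a nearest-neighbour trajectory of the cylinder issued from `x`. -/
def IsCylPath (x : Cyl d N) (ω : ℕ → Cyl d N) : Prop :=
  ω 0 = x ∧ ∀ i, ∃ u ∈ unitVecs d, ω (i + 1) = ω i + projE d N u

namespace IsCylRW

variable {Pl : Cyl d N → Measure (ℕ → Cyl d N)} (h : IsCylRW d N Pl)
include h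

lemma isMarkovChain : IsMarkovChain (stepProb d N) Pl :=
  ⟨h.1, fun x n γ => by convert h.2 x n γ⟩

lemma ae_isCylPath (x : Cyl d N) : ∀ᵐ ω ∂Pl x, IsCylPath x ω := by
  refine (h.isMarkovChain.ae_apply_zero_eq x).and (ae_all_iff.mpr fun n => ?_)
  refine h.isMarkovChain.ae_of_forall_tsum_eq_zero x n
    (R := fun z y => ∃ u ∈ unitVecs d, y = z + projE d N u) fun z => ?_
  rw [tsum_mul_stepProb, ENNReal.div_eq_zero_iff, Finset.sum_eq_zero_iff]
  exact .inl fun u hu => if_pos ⟨u, hu, rfl⟩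

/-- The Chernoff bound for the exponential supermartingale with increments `w`. -/
lemma measure_le_exp_neg (x : Cyl d N) {w : ℕ → (ℕ → Cyl d N) → Cyl d N → ℝ}
    (hdep : ∀ k, DependsOn (w k) (Set.Iic k))
    (hmean : ∀ k ω, cylNbrSum (fun y => Real.exp (w k ω y)) (ω k) ≤ 2 * (d + 1)) {n : ℕ} {a : ℝ}
    {E : Set (ℕ → Cyl d N)}
    (hE : ∀ ω ∈ E, IsCylPath x ω → a ≤ ∑ i ∈ Finset.range n, w i ω (ω (i + 1))) :
    Pl x E ≤ ENNReal.ofReal (Real.exp (-a)) := by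
  have hbound : ENNReal.ofReal (Real.exp a) * Pl x E ≤ 1 := by
    refine h.isMarkovChain.mul_measure_le_one x
      (ξ := fun k ω y => ENNReal.ofReal (Real.exp (w k ω y)))
      (fun k ω ω' hω => by simp only [hdep k hω]) (fun k ω => ?_) (n := n) ?_
    · rw [tsum_mul_stepProb, ← ENNReal.ofReal_sum_of_nonneg fun _ _ => (Real.exp_pos _).le]
      refine ENNReal.div_le_of_le_mul ?_
      rw [one_mul]
      refine (ENNReal.ofReal_le_ofReal (hmean k ω)).trans_eq ?_
      rw [show (2 * (d + 1) : ℝ) = ((2 * (d + 1) : ℕ) : ℝ) by push_cast; ring,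
        ENNReal.ofReal_natCast]
      push_cast
      rfl
    · filter_upwards [h.ae_isCylPath x] with ω hpath hω
      rw [← ENNReal.ofReal_prod_of_nonneg fun _ _ => (Real.exp_pos _).le, ← Real.exp_sum]
      exact ENNReal.ofReal_le_ofReal (Real.exp_le_exp.mpr (hE ω hω hpath))
  rw [Real.exp_neg, ENNReal.ofReal_inv_of_pos (Real.exp_pos a)]
  exact ENNReal.le_inv_iff_mul_le.mpr (by rwa [mul_comm])

end IsCylRW

/-- `Ψ` is a positive function for which multiplying by `exp lam` at every visit to `A` and by
`exp (-θ)` at every visit to `slab` turns `Ψ (ω n)` into a supermartingale. -/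
structure IsCoverWeight (A : Finset (Cyl d N)) (slab : Set (Cyl d N)) (lam θ K : ℝ)
    (Ψ : Cyl d N → ℝ) : Prop where
  one_le : ∀ z, 1 ≤ Ψ z
  le : ∀ z, Ψ z ≤ K
  cylNbrSum_le : ∀ z, cylNbrSum Ψ z
    ≤ 2 * (d + 1) * Ψ z * Real.exp ((if z ∈ slab then θ else 0) - if z ∈ A then lam else 0)

lemma card_le_card_filter_range_of_visited {S : Type*} [DecidableEq S] {A : Finset S}
    {ω : ℕ → S} {n : ℕ} (h : ∀ a ∈ A, ∃ i < n, ω i = a) :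
    A.card ≤ ((Finset.range n).filter fun i => ω i ∈ A).card := by
  refine (Finset.card_le_card fun a ha => ?_).trans (Finset.card_image_le (f := ω))
  obtain ⟨i, hi, rfl⟩ := h a ha
  exact Finset.mem_image_of_mem ω (by simp [hi, ha])

lemma IsCoverWeight.cylNbrSum_exp_le {A : Finset (Cyl d N)} {slab : Set (Cyl d N)}
    {lam θ K : ℝ} {Ψ : Cyl d N → ℝ} (hΨ : IsCoverWeight A slab lam θ K Ψ) (z : Cyl d N) :
    cylNbrSum (fun y => Real.exp (((if z ∈ A then lam else 0) - if z ∈ slab then θ else 0) +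
      (Real.log (Ψ y) - Real.log (Ψ z)))) z ≤ 2 * (d + 1) := by
  have hpos : ∀ z, 0 < Ψ z := fun z => one_pos.trans_le (hΨ.one_le z)
  have hz := hpos z
  set r : ℝ := (if z ∈ A then lam else 0) - if z ∈ slab then θ else 0 with hr
  calc cylNbrSum (fun y => Real.exp (r + (Real.log (Ψ y) - Real.log (Ψ z)))) z
      = Real.exp r / Ψ z * cylNbrSum Ψ z := by
        simp only [cylNbrSum, Finset.mul_sum, Real.exp_add, Real.exp_sub, Real.exp_log (hpos _)]
        exact Finset.sum_congr rfl fun u _ => by ring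
    _ ≤ Real.exp r / Ψ z * (2 * (d + 1) * Ψ z * Real.exp (-r)) := by
        rw [hr, neg_sub]
        gcongr
        exact hΨ.cylNbrSum_le z
    _ = 2 * (d + 1) := by
        rw [Real.exp_neg]
        field_simp

lemma IsCoverWeight.measure_cover_le {Pl : Cyl d N → Measure (ℕ → Cyl d N)}
    {A : Finset (Cyl d N)} {slab : Set (Cyl d N)} {lam θ K : ℝ} {Ψ : Cyl d N → ℝ}
    (hΨ : IsCoverWeight A slab lam θ K Ψ) (h : IsCylRW d N Pl) (hlam : 0 ≤ lam) (hθ : 0 ≤ θ)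
    (x : Cyl d N) (n : ℕ) (V : ℝ) :
    Pl x {ω | (∀ a ∈ A, ∃ i < n, ω i = a) ∧
        (((Finset.range n).filter fun i => ω i ∈ slab).card : ℝ) ≤ V}
      ≤ ENNReal.ofReal (K * Real.exp (θ * V - lam * A.card)) := by
  have hpos : ∀ z, 0 < Ψ z := fun z => one_pos.trans_le (hΨ.one_le z)
  have hK : 0 < K := (hpos x).trans_le (hΨ.le x)
  set r : Cyl d N → ℝ := fun z => (if z ∈ A then lam else 0) - if z ∈ slab then θ else 0 with hr
  rw [show K * Real.exp (θ * V - lam * A.card)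
    = Real.exp (-(lam * A.card - θ * V - Real.log K)) by
      rw [← Real.exp_log hK, ← Real.exp_add, Real.log_exp]; ring_nf]
  refine h.measure_le_exp_neg x (n := n)
    (w := fun k ω y => r (ω k) + (Real.log (Ψ y) - Real.log (Ψ (ω k))))
    (fun k ω ω' hω => by simp only [hω k Set.self_mem_Iic])
    (fun k ω => hΨ.cylNbrSum_exp_le (ω k)) ?_
  rintro ω ⟨hvisit, hslab⟩ -
  have hcard : (A.card : ℝ) ≤ ((Finset.range n).filter fun i => ω i ∈ A).card := by
    exact_mod_cast card_le_card_filter_range_of_visited hvisit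
  have hlog_start : Real.log (Ψ (ω 0)) ≤ Real.log K := Real.log_le_log (hpos _) (hΨ.le _)
  have hlog_end : 0 ≤ Real.log (Ψ (ω n)) := Real.log_nonneg (hΨ.one_le _)
  rw [Finset.sum_add_distrib, Finset.sum_range_sub fun i => Real.log (Ψ (ω i))]
  simp only [hr, Finset.sum_sub_distrib, ← Finset.sum_filter, Finset.sum_const, nsmul_eq_mul]
  linarith [mul_le_mul_of_nonneg_left hslab hθ, mul_le_mul_of_nonneg_left hcard hlam]

end CylinderWalk

section HittingProbability

variable {ν : ℕ} {Ql : ZLat ν → Measure (ℕ → ZLat ν)}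

lemma IsLatRW.isMarkovChain (h : IsLatRW ν Ql) : IsMarkovChain (zStep ν) Ql :=
  ⟨h.1, fun x n γ => by convert h.2 x n γ⟩

/-- The probability that the lattice walk started at `w` ever visits the origin. -/
noncomputable def hitProb (Ql : ZLat ν → Measure (ℕ → ZLat ν)) (w : ZLat ν) : ℝ :=
  (Ql w).real {ω | ∃ n, ω n = 0}

lemma hitProb_nonneg (w : ZLat ν) : 0 ≤ hitProb Ql w := measureReal_nonneg

lemma IsLatRW.hitProb_le_one (h : IsLatRW ν Ql) (w : ZLat ν) : hitProb Ql w ≤ 1 := by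
  have := h.1 w
  exact measureReal_le_one

lemma IsLatRW.hitProb_zero (h : IsLatRW ν Ql) : hitProb Ql 0 = 1 := by
  have := h.1 0
  refine le_antisymm (h.hitProb_le_one 0) ?_
  rw [hitProb, ← probReal_univ (μ := Ql 0)]
  refine ENNReal.toReal_mono (measure_ne_top _ _) (measure_mono_ae ?_)
  filter_upwards [h.isMarkovChain.ae_apply_zero_eq 0] with ω hω _ using ⟨0, hω⟩

lemma IsLatRW.nbrSum_hitProb (h : IsLatRW ν Ql) (w : ZLat ν) :
    nbrSum (hitProb Ql) w = 2 * ν * (Ql w).real {ω | ∃ n, 1 ≤ n ∧ ω n = 0} := by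
  have := h.1
  have hhit : MeasurableSet {ω : ℕ → ZLat ν | ∃ n, ω n = 0} := by
    simp only [Set.ofPred_exists]
    exact .iUnion fun n => measurable_pi_apply n (measurableSet_singleton _)
  have hshift : Measurable fun (ω : ℕ → ZLat ν) (k : ℕ) => ω (k + 1) := by fun_prop
  have hreturn : {ω : ℕ → ZLat ν | ∃ n, 1 ≤ n ∧ ω n = 0}
      = (fun ω k => ω (k + 1)) ⁻¹' {ω : ℕ → ZLat ν | ∃ n, ω n = 0} := by
    ext ω
    exact ⟨fun ⟨n, hn, hω⟩ => ⟨n - 1, by simpa [Nat.sub_add_cancel hn]⟩,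
      fun ⟨n, hω⟩ => ⟨n + 1, by lia, hω⟩⟩
  have hstep : Ql w {ω | ∃ n, 1 ≤ n ∧ ω n = 0}
      = (∑ i, (Ql (w + Pi.single i 1) {ω | ∃ n, ω n = 0}
          + Ql (w + Pi.single i (-1)) {ω | ∃ n, ω n = 0})) / (2 * ν) := by
    rw [hreturn, ← Measure.map_apply hshift hhit, h.isMarkovChain.map_shift,
      Measure.sum_apply _ hhit, ← tsum_zStep_mul ν w fun v => Ql v {ω | ∃ n, ω n = 0}]
    rfl
  rcases Nat.eq_zero_or_pos ν with rfl | hν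
  · simp [nbrSum]
  · rw [measureReal_def, hstep, ENNReal.toReal_div, ENNReal.toReal_sum fun i _ => by simp]
    simp only [ENNReal.toReal_add (measure_ne_top _ _) (measure_ne_top _ _)]
    simp only [ENNReal.toReal_mul, ENNReal.toReal_ofNat, ENNReal.toReal_natCast]
    field_simp
    rfl

lemma IsLatRW.nbrSum_hitProb_le (h : IsLatRW ν Ql) (w : ZLat ν) :
    nbrSum (hitProb Ql) w ≤ 2 * ν * hitProb Ql w := by
  have := h.1 w
  rw [h.nbrSum_hitProb]
  gcongr
  exact measureReal_mono fun ω ⟨n, _, hω⟩ => ⟨n, hω⟩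

lemma IsLatRW.nbrSum_hitProb_zero (h : IsLatRW ν Ql) :
    nbrSum (hitProb Ql) 0 = 2 * ν * retProb ν Ql :=
  h.nbrSum_hitProb 0

end HittingProbability

section CylinderGreen

/-- Up to one unit, `a` is antipodal to `0` on the discrete circle: away from such points, integer
representatives move along with the walk. -/
def NearAntipode {N : ℕ} (a : ZMod N) : Prop := (N : ℤ) ≤ 2 * (|a.valMinAbs| + 1)

lemma valMinAbs_add_intCast {N : ℕ} [NeZero N] {a : ZMod N} (ha : ¬NearAntipode a) {b : ℤ}
    (hb : |b| ≤ 1) : (a + b).valMinAbs = a.valMinAbs + b := by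
  rw [NearAntipode] at ha
  rw [ZMod.valMinAbs_spec]
  refine ⟨by simp, ?_⟩
  constructor <;> grind

lemma abs_valMinAbs_le_abs_valMinAbs_add {N : ℕ} [NeZero N] (a : ZMod N) (b : ℤ) :
    |a.valMinAbs| ≤ |(a + b).valMinAbs| + |b| := by
  have hmin := ZMod.natAbs_min_of_le_div_two N a.valMinAbs ((a + b).valMinAbs - b) (by simp)
    a.natAbs_valMinAbs_le
  rw [← Int.natCast_natAbs a.valMinAbs]
  exact (Nat.cast_le.mpr hmin).trans ((Int.natCast_natAbs _).trans_le (abs_sub _ _))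

variable {d N : ℕ}

lemma abs_apply_le_one_of_mem_unitVecs {u : Lat d} (hu : u ∈ unitVecs d) (i : Fin (d + 1)) :
    |u i| ≤ 1 := by
  obtain ⟨⟨j, b⟩, -, rfl⟩ := Finset.mem_image.mp hu
  rcases eq_or_ne i j with rfl | hij
  · cases b <;> simp
  · simp [hij]

lemma cylNbrSum_mono {f g : Cyl d N → ℝ} (hfg : ∀ z, f z ≤ g z) (z : Cyl d N) :
    cylNbrSum f z ≤ cylNbrSum g z :=
  Finset.sum_le_sum fun _ _ => hfg _

lemma cylNbrSum_one_add_mul (c : ℝ) (f : Cyl d N → ℝ) (z : Cyl d N) :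
    cylNbrSum (fun y => 1 + c * f y) z = 2 * (d + 1) + c * cylNbrSum f z := by
  simp [cylNbrSum, Finset.sum_add_distrib, Finset.mul_sum, card_unitVecs]

/-- The lattice point over `z` whose periodic coordinates are of least absolute value. -/
def latticeRep (z : Cyl d N) : Lat d :=
  Fin.snoc (α := fun _ => ℤ) (fun i => (z.1 i).valMinAbs) z.2

lemma latticeRep_zero : latticeRep (0 : Cyl d N) = 0 := by
  funext i
  refine Fin.lastCases ?_ (fun j => ?_) i <;> simp [latticeRep]

variable [NeZero N]

lemma latticeRep_add_projE {z : Cyl d N} (hz : ∀ i, ¬NearAntipode (z.1 i)) {u : Lat d}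
    (hu : u ∈ unitVecs d) : latticeRep (z + projE d N u) = latticeRep z + u := by
  funext i
  refine Fin.lastCases ?_ (fun j => ?_) i
  · simp [latticeRep, projE]
  · simpa [latticeRep, projE] using
      valMinAbs_add_intCast (hz j) (abs_apply_le_one_of_mem_unitVecs hu j.castSucc)

lemma abs_latticeRep_le (z : Cyl d N) {u : Lat d} (hu : u ∈ unitVecs d) (i : Fin (d + 1)) :
    |latticeRep z i| ≤ |latticeRep (z + projE d N u) i| + 1 := by
  refine le_trans ?_ (add_le_add_right (abs_apply_le_one_of_mem_unitVecs hu i) _)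
  refine Fin.lastCases ?_ (fun j => ?_) i
  · simpa [latticeRep, projE] using abs_sub (z.2 + u (Fin.last d)) (u (Fin.last d))
  · simpa [latticeRep, projE] using abs_valMinAbs_le_abs_valMinAbs_add (z.1 j) (u j.castSucc)

lemma cylNbrSum_comp_latticeRep (f : Lat d → ℝ) {z : Cyl d N} (hz : ∀ i, ¬NearAntipode (z.1 i)) :
    cylNbrSum (fun y => f (latticeRep y)) z = nbrSum f (latticeRep z) := by
  rw [cylNbrSum, nbrSum, ← sum_unitVecs d fun u => f (latticeRep z + u)]
  exact Finset.sum_congr rfl fun u hu => by rw [latticeRep_add_projE hz hu]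

/-- The truncated Green function of `ℤ^{d+1}`, with truncation radius `N/4` small enough for it to
descend to the cylinder. -/
noncomputable def cylGreen (a : ℝ) (z : Cyl d N) : ℝ :=
  truncGreen ((d - 1) / 2) ((N : ℝ) ^ 2 / 16) (sqNorm (latticeRep z) + a)

lemma cylGreen_nonneg {a : ℝ} (hd : 1 ≤ d) (ha : 0 < a) (z : Cyl d N) : 0 ≤ cylGreen a z := by
  have hd' : (1 : ℝ) ≤ d := by exact_mod_cast hd
  have hN : (0 : ℝ) < N := by exact_mod_cast NeZero.pos N
  exact truncGreen_nonneg (by linarith) (by positivity) (by linarith [sqNorm_nonneg (latticeRep z)])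

omit [NeZero N] in
lemma cylGreen_eq_zero {a : ℝ} (ha : 0 < a) {z : Cyl d N} {i : Fin (d + 1)}
    (hi : (N : ℝ) / 4 ≤ |(latticeRep z i : ℝ)|) : cylGreen a z = 0 := by
  refine if_neg (not_le.mpr ?_)
  have hsq : (N / 4 : ℝ) ^ 2 ≤ |(latticeRep z i : ℝ)| ^ 2 := by gcongr
  rw [sq_abs] at hsq
  linarith [sq_coord_le_sqNorm (latticeRep z) i]

lemma cylNbrSum_cylGreen_eq_zero {a : ℝ} (ha : 0 < a) {z : Cyl d N} {i : Fin (d + 1)}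
    (hi : (N : ℝ) / 4 + 1 ≤ |(latticeRep z i : ℝ)|) : cylNbrSum (cylGreen a) z = 0 := by
  refine Finset.sum_eq_zero fun u hu => cylGreen_eq_zero ha (i := i) ?_
  have hmove : |(latticeRep z i : ℝ)| ≤ |(latticeRep (z + projE d N u) i : ℝ)| + 1 := by
    exact_mod_cast abs_latticeRep_le z hu i
  linarith

omit [NeZero N] in
lemma NearAntipode.le_abs_latticeRep {z : Cyl d N} {i : Fin d} (h : NearAntipode (z.1 i))
    (hN : 8 ≤ N) : (N : ℝ) / 4 + 1 ≤ |(latticeRep z i.castSucc : ℝ)| := by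
  have hN' : (8 : ℝ) ≤ N := by exact_mod_cast hN
  have h' : (N : ℝ) ≤ 2 * (|((z.1 i).valMinAbs : ℝ)| + 1) := by exact_mod_cast h
  rw [latticeRep, Fin.snoc_castSucc]
  linarith

/-- `g` can play the role of the Green function of the cylinder with pole at the origin: it is
superharmonic up to an error of order `N^{-(d+1)}` supported at heights at most `N`. -/
structure IsCylGreen (C g₀ : ℝ) (g : Cyl d N → ℝ) : Prop where
  nonneg : ∀ z, 0 ≤ g z
  le_apply_zero : g₀ ≤ g 0
  cylNbrSum_le : ∀ z, cylNbrSum g z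
    ≤ 2 * (d + 1) * g z + if |z.2| ≤ (N : ℤ) then C / (N : ℝ) ^ (d + 1) else 0
  eq_zero_of_nearAntipode : ∀ (z : Cyl d N) (i : Fin d), NearAntipode (z.1 i) → g z = 0

omit [NeZero N] in
lemma sq_div_sixteen_rpow (hN : 0 < N) :
    ((N : ℝ) ^ 2 / 16) ^ (-(((d : ℝ) - 1) / 2) - 1) = 4 ^ (d + 1) / (N : ℝ) ^ (d + 1) := by
  rw [show (N : ℝ) ^ 2 / 16 = ((N : ℝ) / 4) ^ (2 : ℝ) by rw [Real.rpow_two]; ring,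
    ← Real.rpow_mul (by positivity),
    show (2 : ℝ) * (-(((d : ℝ) - 1) / 2) - 1) = -((d + 1 : ℕ) : ℝ) by push_cast; ring,
    Real.rpow_neg (by positivity), Real.rpow_natCast, div_pow, inv_div]

lemma cylNbrSum_cylGreen_le {a C : ℝ} (hd : 1 ≤ d) (ha : 0 < a) (hC : 0 ≤ C) (hN : 8 ≤ N)
    (hsuper : ∀ v : Lat d,
      nbrSum (fun w => truncGreen ((d - 1) / 2) ((N : ℝ) ^ 2 / 16) (sqNorm w + a)) v ≤
        2 * (d + 1 : ℕ) * truncGreen ((d - 1) / 2) ((N : ℝ) ^ 2 / 16) (sqNorm v + a) +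
          C * ((N : ℝ) ^ 2 / 16) ^ (-(((d : ℝ) - 1) / 2) - 1)) (z : Cyl d N) :
    cylNbrSum (cylGreen a) z ≤ 2 * (d + 1) * cylGreen a z +
      if |z.2| ≤ (N : ℤ) then C * 4 ^ (d + 1) / (N : ℝ) ^ (d + 1) else 0 := by
  have hN' : (8 : ℝ) ≤ N := by exact_mod_cast hN
  by_cases hfar : ∃ i, (N : ℝ) / 4 + 1 ≤ |(latticeRep z i : ℝ)|
  · obtain ⟨i, hi⟩ := hfar
    rw [cylNbrSum_cylGreen_eq_zero ha hi]
    have := cylGreen_nonneg hd ha z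
    split_ifs <;> positivity
  · push Not at hfar
    have hheight : |z.2| ≤ (N : ℤ) := by
      have hlast := hfar (Fin.last d)
      rw [latticeRep, Fin.snoc_last] at hlast
      have : |(z.2 : ℝ)| ≤ N := by linarith
      exact_mod_cast this
    have hflat : ∀ i, ¬NearAntipode (z.1 i) := fun i hi =>
      (hfar i.castSucc).not_ge (hi.le_abs_latticeRep hN)
    rw [if_pos hheight, mul_div_assoc, ← sq_div_sixteen_rpow (by lia)]
    refine (cylNbrSum_comp_latticeRep (fun v => truncGreen ((d - 1) / 2) ((N : ℝ) ^ 2 / 16)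
      (sqNorm v + a)) hflat).trans_le ((hsuper (latticeRep z)).trans_eq ?_)
    push_cast
    rfl

end CylinderGreen

lemma exists_isCylGreen {d : ℕ} (hd : 2 ≤ d) : ∃ (C g₀ : ℝ) (N₀ : ℕ), 0 ≤ C ∧ 0 < g₀ ∧ 8 ≤ N₀ ∧
    ∀ N, N₀ ≤ N → ∃ g : Cyl d N → ℝ, IsCylGreen C g₀ g := by
  have hs : (0 : ℝ) < ((d : ℝ) - 1) / 2 := by
    have : (2 : ℝ) ≤ d := by exact_mod_cast hd
    linarith
  obtain ⟨a, C, R₀, g₀, ha, hC, hR₀, hg₀, hgreen⟩ :=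
    exists_truncGreen_nbrSum_le (n := d + 1) hs (by push_cast; linarith)
  have ha' : 0 < a := by linarith
  refine ⟨C * 4 ^ (d + 1), g₀, max 8 ⌈4 * R₀⌉₊, by positivity, hg₀, le_max_left _ _,
    fun N hN => ⟨cylGreen a, ?_⟩⟩
  have hN8 : 8 ≤ N := (le_max_left _ _).trans hN
  have hN8' : (8 : ℝ) ≤ N := by exact_mod_cast hN8
  have hNR : 4 * R₀ ≤ N := (Nat.le_ceil _).trans (by exact_mod_cast (le_max_right _ _).trans hN)
  have : NeZero N := ⟨by lia⟩
  obtain ⟨hpole, hsuper⟩ := hgreen ((N : ℝ) ^ 2 / 16) (by nlinarith [hNR, hN8'])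
  refine ⟨cylGreen_nonneg (by lia) ha', ?_,
    cylNbrSum_cylGreen_le (by lia) ha' hC hN8 hsuper, fun z i hi => ?_⟩
  · simpa [cylGreen, latticeRep_zero, sqNorm] using hpole
  · refine cylGreen_eq_zero (i := i.castSucc) ha' ?_
    linarith [hi.le_abs_latticeRep hN8]

section CoverWeight

variable {d e N : ℕ}

/-- Points at height at most `2N` from `t₀`. -/
def slab (d N : ℕ) (t₀ : ℤ) : Set (Cyl d N) := {z | |z.2 - t₀| ≤ 2 * N}

/-- The representative in `ℤ^e` of the periodic coordinates other than the first. -/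
def transverse (z : Cyl (e + 1) N) : ZLat e := fun i => (z.1 i.succ).valMinAbs

lemma transverse_add_projE [NeZero N] {z : Cyl (e + 1) N}
    (hz : ∀ i : Fin e, ¬NearAntipode (z.1 i.succ)) {u : Lat (e + 1)} (hu : u ∈ unitVecs (e + 1)) :
    transverse (z + projE (e + 1) N u) = transverse z + fun i => u i.succ.castSucc :=
  funext fun i => valMinAbs_add_intCast (hz i) (abs_apply_le_one_of_mem_unitVecs hu i.succ.castSucc)

lemma cylNbrSum_comp_transverse [NeZero N] (f : ZLat e → ℝ) {z : Cyl (e + 1) N}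
    (hz : ∀ i : Fin e, ¬NearAntipode (z.1 i.succ)) :
    cylNbrSum (fun y => f (transverse y)) z = 4 * f (transverse z) + nbrSum f (transverse z) := by
  have hmove : cylNbrSum (fun y => f (transverse y)) z
      = ∑ u ∈ unitVecs (e + 1), f (transverse z + fun i => u i.succ.castSucc) :=
    Finset.sum_congr rfl fun u hu => congrArg f (transverse_add_projE hz hu)
  have hfirst : ∀ b : ℤ,
      (fun i : Fin e => (Pi.single (Fin.castSucc 0) b : Lat (e + 1)) i.succ.castSucc) = 0 :=
    fun b => funext fun i =>
      Pi.single_eq_of_ne ((Fin.castSucc_injective _).ne (Fin.succ_ne_zero i)) b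
  have hlast : ∀ b : ℤ,
      (fun i : Fin e => (Pi.single (Fin.last (e + 1)) b : Lat (e + 1)) i.succ.castSucc) = 0 :=
    fun b => funext fun i => by simp
  have hmid : ∀ (j : Fin e) (b : ℤ),
      (fun i : Fin e => (Pi.single j.succ.castSucc b : Lat (e + 1)) i.succ.castSucc)
        = Pi.single j b := fun j b => funext fun i => by simp [Pi.single_apply]
  rw [hmove, sum_unitVecs, Fin.sum_univ_castSucc, Fin.sum_univ_succ, nbrSum]
  simp only [hfirst, hlast, hmid, add_zero]
  ring

/-- The weight controlling the walk at the points of a set on the fibre `{transverse = 0}`. -/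
noncomputable def fibreWeight (Ql : ZLat e → Measure (ℕ → ZLat e)) (κ : ℝ) (z : Cyl (e + 1) N) :
    ℝ :=
  1 + κ * hitProb Ql (transverse z)

/-- The weight controlling the walk far from the set `A`, by superposition of translates of an
approximate Green function. -/
noncomputable def pileWeight (g : Cyl d N → ℝ) (A : Finset (Cyl d N)) (c : ℝ) (z : Cyl d N) : ℝ :=
  1 + c * ∑ x ∈ A, g (z - x)

section FibreWeight

variable [NeZero N] {Ql : ZLat e → Measure (ℕ → ZLat e)} {κ : ℝ} {z : Cyl (e + 1) N}

lemma cylNbrSum_fibreWeight_le (hQ : IsLatRW e Ql) (hκ : 0 ≤ κ)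
    (hz : ∀ i : Fin e, ¬NearAntipode (z.1 i.succ)) :
    cylNbrSum (fibreWeight Ql κ) z ≤ 2 * ((e + 1 : ℕ) + 1) * fibreWeight Ql κ z := by
  have hnbr := hQ.nbrSum_hitProb_le (transverse z)
  unfold fibreWeight
  rw [cylNbrSum_one_add_mul, cylNbrSum_comp_transverse (hitProb Ql) hz]
  push_cast
  linarith [mul_le_mul_of_nonneg_left hnbr hκ]

lemma cylNbrSum_fibreWeight_of_transverse_eq_zero (hQ : IsLatRW e Ql)
    (hz : ∀ i : Fin e, ¬NearAntipode (z.1 i.succ)) (hz0 : transverse z = 0) :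
    cylNbrSum (fibreWeight Ql κ) z
      = 2 * ((e + 1 : ℕ) + 1) * (1 + κ * ((2 + e * retProb e Ql) / (e + 2))) := by
  unfold fibreWeight
  rw [cylNbrSum_one_add_mul, cylNbrSum_comp_transverse (hitProb Ql) hz, hz0, hQ.hitProb_zero,
    hQ.nbrSum_hitProb_zero]
  push_cast
  field_simp
  ring

end FibreWeight

section PileWeight

variable {C g₀ c : ℝ} {g : Cyl d N → ℝ} {A : Finset (Cyl d N)} {z : Cyl d N}

lemma IsCylGreen.one_le_pileWeight (hg : IsCylGreen C g₀ g) (hc : 0 ≤ c) :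
    1 ≤ pileWeight g A c z :=
  le_add_of_nonneg_right (mul_nonneg hc (Finset.sum_nonneg fun _ _ => hg.nonneg _))

lemma IsCylGreen.le_pileWeight_of_mem (hg : IsCylGreen C g₀ g) (hc : 0 ≤ c) (hz : z ∈ A) :
    1 + c * g₀ ≤ pileWeight g A c z := by
  have hpole : g₀ ≤ g (z - z) := by simpa using hg.le_apply_zero
  have hsum := Finset.single_le_sum (f := fun x => g (z - x)) (fun x _ => hg.nonneg _) hz
  exact add_le_add_right (mul_le_mul_of_nonneg_left (hpole.trans hsum) hc) 1

lemma IsCylGreen.pileWeight_eq_one (hg : IsCylGreen C g₀ g) {i : Fin d}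
    (hA : ∀ x ∈ A, x.1 i = 0) (hz : NearAntipode (z.1 i)) : pileWeight g A c z = 1 := by
  rw [pileWeight, Finset.sum_eq_zero, mul_zero, add_zero]
  exact fun x hx => hg.eq_zero_of_nearAntipode _ i (by simpa [hA x hx] using hz)

lemma IsCylGreen.cylNbrSum_sub_le (hg : IsCylGreen C g₀ g) (hC : 0 ≤ C) {t₀ : ℤ}
    {x : Cyl d N} (hx : |x.2 - t₀| ≤ N) : cylNbrSum g (z - x) ≤
      2 * (d + 1) * g (z - x) + if z ∈ slab d N t₀ then C / (N : ℝ) ^ (d + 1) else 0 := by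
  refine (hg.cylNbrSum_le _).trans (add_le_add_right ?_ _)
  by_cases hz : z ∈ slab d N t₀
  · rw [if_pos hz]
    split_ifs <;> [exact le_rfl; positivity]
  · refine (if_neg fun hzx : |z.2 - x.2| ≤ N => hz ?_).trans_le (if_neg hz).ge
    have := abs_sub_le z.2 x.2 t₀
    change |z.2 - t₀| ≤ 2 * N
    lia

lemma IsCylGreen.cylNbrSum_pileWeight_le (hg : IsCylGreen C g₀ g) (hC : 0 ≤ C) (hc : 0 ≤ c)
    {t₀ : ℤ} (hA : ∀ x ∈ A, |x.2 - t₀| ≤ N) :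
    cylNbrSum (pileWeight g A c) z ≤ 2 * (d + 1) * pileWeight g A c z
      * Real.exp (if z ∈ slab d N t₀ then c * C * A.card / (N : ℝ) ^ (d + 1) else 0) := by
  have hcomm : cylNbrSum (fun y => ∑ x ∈ A, g (y - x)) z = ∑ x ∈ A, cylNbrSum g (z - x) := by
    simp only [cylNbrSum, sub_add_eq_add_sub]
    exact Finset.sum_comm
  set θ : ℝ := if z ∈ slab d N t₀ then c * C * A.card / (N : ℝ) ^ (d + 1) else 0 with hθ
  have hθ0 : 0 ≤ θ := by rw [hθ]; split_ifs <;> positivity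
  have hΨ := hg.one_le_pileWeight (A := A) (z := z) hc
  calc cylNbrSum (pileWeight g A c) z
      = 2 * (d + 1) + c * ∑ x ∈ A, cylNbrSum g (z - x) := by
        unfold pileWeight
        rw [cylNbrSum_one_add_mul, hcomm]
    _ ≤ 2 * (d + 1) * pileWeight g A c z + θ := by
        have hsum := mul_le_mul_of_nonneg_left (Finset.sum_le_sum fun x hx =>
          hg.cylNbrSum_sub_le (z := z) hC (hA x hx)) hc
        rw [Finset.sum_add_distrib, ← Finset.mul_sum, Finset.sum_const, nsmul_eq_mul] at hsum
        have hθ' : c * (A.card * if z ∈ slab d N t₀ then C / (N : ℝ) ^ (d + 1) else 0) = θ := by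
          rw [hθ]; split_ifs <;> ring
        unfold pileWeight
        linarith
    _ ≤ 2 * (d + 1) * pileWeight g A c z * (θ + 1) := by
        have : (1 : ℝ) ≤ 2 * (d + 1) * pileWeight g A c z := by
          nlinarith [hΨ, (Nat.cast_nonneg d : (0 : ℝ) ≤ d)]
        nlinarith [this, hθ0]
    _ ≤ 2 * (d + 1) * pileWeight g A c z * Real.exp θ := by
        gcongr
        exact Real.add_one_le_exp θ

end PileWeight

section CoverWeightBounds

variable [NeZero N] {Ql : ZLat e → Measure (ℕ → ZLat e)} {C g₀ κ c lam : ℝ}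
  {g : Cyl (e + 1) N → ℝ} {A : Finset (Cyl (e + 1) N)} {z : Cyl (e + 1) N}

-- The pile equals `1` at points antipodal to the fibre: where the fibre weight is the smaller one,
-- the transverse coordinates move as in `ℤ^e`.
lemma IsCylGreen.cylNbrSum_min_le (hg : IsCylGreen C g₀ g) (hQ : IsLatRW e Ql) (hC : 0 ≤ C)
    (hκ : 0 ≤ κ) (hc : 0 ≤ c) {t₀ : ℤ} (hfib : ∀ x ∈ A, ∀ i : Fin e, x.1 i.succ = 0)
    (hA : ∀ x ∈ A, |x.2 - t₀| ≤ N) :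
    cylNbrSum (fun y => min (fibreWeight Ql κ y) (pileWeight g A c y)) z
      ≤ 2 * ((e + 1 : ℕ) + 1) * min (fibreWeight Ql κ z) (pileWeight g A c z)
        * Real.exp (if z ∈ slab (e + 1) N t₀ then c * C * A.card / (N : ℝ) ^ (e + 2) else 0) := by
  have hfibre : 1 ≤ fibreWeight Ql κ z :=
    le_add_of_nonneg_right (mul_nonneg hκ (hitProb_nonneg _))
  rcases le_or_gt (pileWeight g A c z) (fibreWeight Ql κ z) with hle | hlt
  · rw [min_eq_right hle]
    exact (cylNbrSum_mono (fun _ => min_le_right _ _) z).trans (hg.cylNbrSum_pileWeight_le hC hc hA)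
  · have hflat : ∀ i : Fin e, ¬NearAntipode (z.1 i.succ) := fun i hi =>
      (hlt.trans_le' hfibre).ne' (hg.pileWeight_eq_one (fun x hx => hfib x hx i) hi)
    rw [min_eq_left hlt.le]
    refine (cylNbrSum_mono (fun _ => min_le_left _ _) z).trans
      ((cylNbrSum_fibreWeight_le hQ hκ hflat).trans (le_mul_of_one_le_right (by positivity) ?_))
    rw [Real.one_le_exp_iff]
    split_ifs <;> positivity

lemma IsCylGreen.cylNbrSum_min_le_of_mem (hg : IsCylGreen C g₀ g) (hQ : IsLatRW e Ql) (hc : 0 ≤ c)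
    (hκ : κ ≤ c * g₀) (hN : 2 < N) (hfib : ∀ x ∈ A, ∀ i : Fin e, x.1 i.succ = 0)
    (hgain : Real.exp lam * (1 + κ * ((2 + e * retProb e Ql) / (e + 2))) = 1 + κ) (hz : z ∈ A) :
    cylNbrSum (fun y => min (fibreWeight Ql κ y) (pileWeight g A c y)) z
      ≤ 2 * ((e + 1 : ℕ) + 1) * min (fibreWeight Ql κ z) (pileWeight g A c z)
        * Real.exp (-lam) := by
  have hz0 : transverse z = 0 := funext fun i => by simp [transverse, hfib z hz i]
  have hflat : ∀ i : Fin e, ¬NearAntipode (z.1 i.succ) := fun i => by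
    rw [NearAntipode, hfib z hz i, ZMod.valMinAbs_zero, abs_zero]
    lia
  have hfibre : fibreWeight Ql κ z = 1 + κ := by rw [fibreWeight, hz0, hQ.hitProb_zero, mul_one]
  have hpile := hg.le_pileWeight_of_mem hc hz
  rw [min_eq_left (by linarith), hfibre, ← hgain, Real.exp_neg]
  refine (cylNbrSum_mono (fun _ => min_le_left _ _) z).trans
    ((cylNbrSum_fibreWeight_of_transverse_eq_zero hQ hflat hz0).trans_le (le_of_eq ?_))
  field_simp

end CoverWeightBounds

lemma exists_isCoverWeight {Ql : ZLat e → Measure (ℕ → ZLat e)} (he : 1 ≤ e)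
    (hQ : IsLatRW e Ql) {lam : ℝ} (hlam : 0 ≤ lam)
    (hr : Real.exp lam * ((2 + e * retProb e Ql) / (e + 2)) < 1) :
    ∃ (K C : ℝ) (N₀ : ℕ), 1 ≤ K ∧ 0 ≤ C ∧ 8 ≤ N₀ ∧ ∀ N, N₀ ≤ N → ∀ A : Finset (Cyl (e + 1) N),
      (∀ x ∈ A, ∀ i : Fin e, x.1 i.succ = 0) → ∀ t₀ : ℤ, (∀ x ∈ A, |x.2 - t₀| ≤ N) →
        ∃ Ψ, IsCoverWeight A (slab (e + 1) N t₀) lam (C * A.card / (N : ℝ) ^ (e + 2)) K Ψ := by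
  obtain ⟨C, g₀, N₀, hC, hg₀, hN₀, hgreen⟩ := exists_isCylGreen (d := e + 1) (by lia)
  set r : ℝ := (2 + e * retProb e Ql) / (e + 2) with hrdef
  set κ : ℝ := (Real.exp lam - 1) / (1 - Real.exp lam * r)
  have hκ : 0 ≤ κ := div_nonneg (by linarith [Real.one_le_exp hlam]) (by linarith)
  have hgain : Real.exp lam * (1 + κ * r) = 1 + κ := by
    have : κ * (1 - Real.exp lam * r) = Real.exp lam - 1 := div_mul_cancel₀ _ (by linarith)
    linarith
  refine ⟨1 + κ, κ / g₀ * C, N₀, by linarith, by positivity, hN₀, fun N hN A hfib t₀ hA => ?_⟩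
  have : NeZero N := ⟨by lia⟩
  obtain ⟨g, hg⟩ := hgreen N hN
  have hc : 0 ≤ κ / g₀ := by positivity
  have hone : ∀ z, 1 ≤ min (fibreWeight Ql κ z) (pileWeight g A (κ / g₀) z) := fun z =>
    le_min (le_add_of_nonneg_right (mul_nonneg hκ (hitProb_nonneg _))) (hg.one_le_pileWeight hc)
  refine ⟨fun z => min (fibreWeight Ql κ z) (pileWeight g A (κ / g₀) z), hone, fun z =>
    (min_le_left _ _).trans
      (add_le_add_right (mul_le_of_le_one_right hκ (hQ.hitProb_le_one _)) 1), fun z => ?_⟩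
  by_cases hz : z ∈ A
  · have hκg : κ ≤ κ / g₀ * g₀ := (div_mul_cancel₀ κ hg₀.ne').ge
    refine (hg.cylNbrSum_min_le_of_mem hQ hc hκg (by lia) hfib hgain hz).trans ?_
    rw [if_pos hz, neg_eq_zero_sub]
    have hpos := zero_le_one.trans (hone z)
    gcongr
    split_ifs <;> positivity
  · rw [if_neg hz, sub_zero]
    exact hg.cylNbrSum_min_le hQ hC hκ hc hfib hA

end CoverWeight

section PlanarDuality

/-- The two-dimensional cylinder `(ℤ/Nℤ) × ℤ`. -/
abbrev Slice (N : ℕ) := ZMod N × ℤ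

/-- Nearest neighbours in the two-dimensional cylinder, written symmetrically. -/
def IsNbr {N : ℕ} (p q : Slice N) : Prop :=
  q = p + (1, 0) ∨ p = q + (1, 0) ∨ q = p + (0, 1) ∨ p = q + (0, 1)

/-- Reflexive `*`-adjacency on the two-dimensional cylinder. -/
def IsStarNbr {N : ℕ} (p q : Slice N) : Prop :=
  ∃ a b : ℤ, |a| ≤ 1 ∧ |b| ≤ 1 ∧ q = p + ((a : ZMod N), b)

variable {N : ℕ} {S W K : Set (Slice N)} {T t : ℤ} {p q : Slice N} {x : ZMod N}

lemma IsNbr.symm (h : IsNbr p q) : IsNbr q p := by unfold IsNbr at *; tauto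

lemma IsStarNbr.symm (h : IsStarNbr p q) : IsStarNbr q p := by
  obtain ⟨a, b, ha, hb, rfl⟩ := h
  exact ⟨-a, -b, by simpa using ha, by simpa using hb, by ext <;> simp⟩

/-- `W` is the region above the barrier `S`: the union of the components of `Sᶜ` which reach
arbitrarily high, assumed not to reach below height `-T`. -/
structure IsUpperRegion (S W : Set (Slice N)) (T : ℤ) : Prop where
  mem_of_le : ∀ x t, T ≤ t → (x, t) ∈ W
  notMem_of_le : ∀ x t, t ≤ -T → (x, t) ∉ W
  notMem_of_mem : ∀ p ∈ W, p ∉ S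
  mem_barrier : ∀ p ∈ W, ∀ q, IsNbr p q → q ∉ W → q ∈ S
  connected : ∀ p ∈ W, ∃ q : Slice N, T ≤ q.2 ∧
    Relation.ReflTransGen (fun a b => a ∈ W ∧ b ∈ W ∧ IsNbr a b) q p

/-- `K` is a union of `*`-components of `S`. -/
structure IsStarClosed (S K : Set (Slice N)) : Prop where
  subset : K ⊆ S
  mem_of_isStarNbr : ∀ p ∈ K, ∀ q ∈ S, IsStarNbr p q → q ∈ K

/-- The indicator, with values in `ℤ/2ℤ`, of the edges joining `W` to `K`. -/
noncomputable def cutEdge (W K : Set (Slice N)) (u v : Slice N) : ZMod 2 :=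
  if (u ∈ W ∧ v ∈ K) ∨ (v ∈ W ∧ u ∈ K) then 1 else 0

/-- The parity of the number of edges joining `W` to `K` on the vertical half-line above `p`,
which are all below height `T`. -/
noncomputable def cutParity (W K : Set (Slice N)) (T : ℤ) (p : Slice N) : ZMod 2 :=
  ∑ j ∈ Finset.Ico p.2 T, cutEdge W K (p.1, j) (p.1, j + 1)

lemma cutEdge_comm (u v : Slice N) : cutEdge W K u v = cutEdge W K v u := by
  unfold cutEdge
  congr 1
  rw [or_comm]

lemma cutEdge_eq_zero_of_notMem_barrier {u v : Slice N} (hu : u ∉ K) (hv : v ∉ K) :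
    cutEdge W K u v = 0 := by
  simp [cutEdge, hu, hv]

lemma cutEdge_eq_zero_of_notMem_upper {u v : Slice N} (hu : u ∉ W) (hv : v ∉ W) :
    cutEdge W K u v = 0 := by
  simp [cutEdge, hu, hv]

lemma IsUpperRegion.notMem_of_isStarClosed (hW : IsUpperRegion S W T) (hK : IsStarClosed S K)
    (hp : p ∈ W) : p ∉ K :=
  fun h => hW.notMem_of_mem p hp (hK.subset h)

lemma IsUpperRegion.cutEdge_eq_add (hW : IsUpperRegion S W T) (hK : IsStarClosed S K)
    {u v k : Slice N} (hk : k ∈ K) (hku : IsStarNbr k u) (hkv : IsStarNbr k v) (huv : IsNbr u v) :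
    cutEdge W K u v = W.indicator 1 u + W.indicator 1 v := by
  unfold cutEdge
  by_cases hu : u ∈ W <;> by_cases hv : v ∈ W
  · simp only [hu, hv, hW.notMem_of_isStarClosed hK hu, hW.notMem_of_isStarClosed hK hv,
      Set.indicator_of_mem, Pi.one_apply]
    decide
  · simp [hu, hv, hK.mem_of_isStarNbr k hk v (hW.mem_barrier u hu v huv hv) hkv]
  · simp [hu, hv, hK.mem_of_isStarNbr k hk u (hW.mem_barrier v hv u huv.symm hu) hku]
  · simp [hu, hv]

lemma isStarNbr_of_mem_plaquette {a b a' b' : ℤ} (ha : a ∈ Set.Icc 0 1) (hb : b ∈ Set.Icc 0 1)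
    (ha' : a' ∈ Set.Icc 0 1) (hb' : b' ∈ Set.Icc 0 1) :
    IsStarNbr (x + (a : ZMod N), t + b) (x + (a' : ZMod N), t + b') := by
  simp only [Set.mem_Icc] at ha hb ha' hb'
  exact ⟨a' - a, b' - b, abs_le.mpr (by lia), abs_le.mpr (by lia), by ext <;> simp⟩

-- A plaquette meeting `K` has its boundary edges cut exactly when they separate `W` from `Wᶜ`, and
-- a closed circuit does so an even number of times.
lemma IsUpperRegion.cutEdge_plaquette (hW : IsUpperRegion S W T) (hK : IsStarClosed S K)
    (x : ZMod N) (t : ℤ) :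
    cutEdge W K (x, t) (x + 1, t) = cutEdge W K (x, t) (x, t + 1)
      + cutEdge W K (x, t + 1) (x + 1, t + 1) + cutEdge W K (x + 1, t) (x + 1, t + 1) := by
  have hbot : IsNbr (x, t) (x + 1, t) := Or.inl (by simp)
  have htop : IsNbr (x, t + 1) (x + 1, t + 1) := Or.inl (by simp)
  have hleft : IsNbr (x, t) (x, t + 1) := Or.inr (Or.inr (Or.inl (by simp)))
  have hright : IsNbr (x + 1, t) (x + 1, t + 1) := Or.inr (Or.inr (Or.inl (by simp)))
  have h0 : (0 : ℤ) ∈ Set.Icc 0 1 := by simp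
  have h1 : (1 : ℤ) ∈ Set.Icc 0 1 := by simp
  by_cases hex : ∃ a ∈ Set.Icc (0 : ℤ) 1, ∃ b ∈ Set.Icc (0 : ℤ) 1, (x + (a : ZMod N), t + b) ∈ K
  · obtain ⟨a, ha, b, hb, hk⟩ := hex
    have h00 := isStarNbr_of_mem_plaquette (x := x) (t := t) ha hb h0 h0
    have h10 := isStarNbr_of_mem_plaquette (x := x) (t := t) ha hb h1 h0
    have h01 := isStarNbr_of_mem_plaquette (x := x) (t := t) ha hb h0 h1
    have h11 := isStarNbr_of_mem_plaquette (x := x) (t := t) ha hb h1 h1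
    simp only [Int.cast_zero, Int.cast_one, add_zero] at h00 h10 h01 h11
    rw [hW.cutEdge_eq_add hK hk h00 h10 hbot, hW.cutEdge_eq_add hK hk h00 h01 hleft,
      hW.cutEdge_eq_add hK hk h01 h11 htop, hW.cutEdge_eq_add hK hk h10 h11 hright]
    grind
  · push Not at hex
    have h00 := hex 0 h0 0 h0
    have h10 := hex 1 h1 0 h0
    have h01 := hex 0 h0 1 h1
    have h11 := hex 1 h1 1 h1
    simp only [Int.cast_zero, Int.cast_one, add_zero] at h00 h10 h01 h11
    simp [cutEdge_eq_zero_of_notMem_barrier, h00, h10, h01, h11]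

lemma cutParity_eq_zero_of_le (hp : T ≤ p.2) : cutParity W K T p = 0 := by
  rw [cutParity, Finset.Ico_eq_empty (by lia), Finset.sum_empty]

lemma IsUpperRegion.cutParity_vertical (hW : IsUpperRegion S W T) (hK : IsStarClosed S K)
    (x : ZMod N) (t : ℤ) :
    cutParity W K T (x, t) = cutEdge W K (x, t) (x, t + 1) + cutParity W K T (x, t + 1) := by
  rcases lt_or_ge t T with h | h
  · unfold cutParity
    rw [← Finset.sum_insert (f := fun j => cutEdge W K (x, j) (x, j + 1)) (by simp),
      ← Finset.insert_Ico_add_one_left_eq_Ico h]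
  · rw [cutParity_eq_zero_of_le h, cutParity_eq_zero_of_le (by simp only; lia),
      cutEdge_eq_zero_of_notMem_barrier (hW.notMem_of_isStarClosed hK (hW.mem_of_le x t h))
        (hW.notMem_of_isStarClosed hK (hW.mem_of_le x (t + 1) (by lia))), add_zero]

lemma IsUpperRegion.cutParity_horizontal (hW : IsUpperRegion S W T) (hK : IsStarClosed S K)
    (x : ZMod N) (t : ℤ) :
    cutParity W K T (x, t) = cutEdge W K (x, t) (x + 1, t) + cutParity W K T (x + 1, t) := by
  have hhigh : ∀ s, T ≤ s →
      cutParity W K T (x, s) = cutEdge W K (x, s) (x + 1, s) + cutParity W K T (x + 1, s) :=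
    fun s hs => by
      rw [cutParity_eq_zero_of_le hs, cutParity_eq_zero_of_le hs,
        cutEdge_eq_zero_of_notMem_barrier (hW.notMem_of_isStarClosed hK (hW.mem_of_le _ _ hs))
          (hW.notMem_of_isStarClosed hK (hW.mem_of_le _ _ hs)), add_zero]
  rcases le_total T t with h | h
  · exact hhigh t h
  · induction t, h using Int.leInductionDown with
    | base => exact hhigh T le_rfl
    | pred t _ ih =>
      rw [hW.cutParity_vertical hK x, hW.cutParity_vertical hK (x + 1), hW.cutEdge_plaquette hK,
        sub_add_cancel, ih]
      grind

lemma IsUpperRegion.cutParity_eq_add (hW : IsUpperRegion S W T) (hK : IsStarClosed S K)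
    (h : IsNbr p q) : cutParity W K T p = cutEdge W K p q + cutParity W K T q := by
  have hswap : ∀ {u v : Slice N}, cutParity W K T u = cutEdge W K u v + cutParity W K T v →
      cutParity W K T v = cutEdge W K v u + cutParity W K T u := fun {u v} huv => by
    rw [huv, cutEdge_comm v, CharTwo.add_cancel_left]
  have hright : ∀ u : Slice N, cutParity W K T u
      = cutEdge W K u (u + (1, 0)) + cutParity W K T (u + (1, 0)) := fun ⟨x, t⟩ => by
    simpa using hW.cutParity_horizontal hK x t
  have hup : ∀ u : Slice N, cutParity W K T u
      = cutEdge W K u (u + (0, 1)) + cutParity W K T (u + (0, 1)) := fun ⟨x, t⟩ => by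
    simpa using hW.cutParity_vertical hK x t
  rcases h with rfl | rfl | rfl | rfl
  exacts [hright _, hswap (hright _), hup _, hswap (hup _)]

lemma IsUpperRegion.cutParity_eq_zero_of_mem (hW : IsUpperRegion S W T) (hK : IsStarClosed S K)
    (hp : p ∈ W) : cutParity W K T p = 0 := by
  obtain ⟨q, hq, hpath⟩ := hW.connected p hp
  induction hpath with
  | refl => exact cutParity_eq_zero_of_le hq
  | tail _ hstep ih =>
    obtain ⟨hb, hc, hnbr⟩ := hstep
    rw [← ih hb, hW.cutParity_eq_add hK hnbr, cutEdge_eq_zero_of_notMem_barrier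
      (hW.notMem_of_isStarClosed hK hb) (hW.notMem_of_isStarClosed hK hc), zero_add]

lemma IsUpperRegion.cutParity_eq_one_of_le (hW : IsUpperRegion S W T) (hK : IsStarClosed S K)
    {t₁ : ℤ} (hmem : (x, t₁) ∈ W) (hleast : ∀ s < t₁, (x, s) ∉ W) (hbelow : (x, t₁ - 1) ∈ K)
    (ht : t ≤ t₁ - 1) : cutParity W K T (x, t) = 1 := by
  induction t, ht using Int.leInductionDown with
  | base =>
    rw [hW.cutParity_vertical hK, sub_add_cancel, hW.cutParity_eq_zero_of_mem hK hmem]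
    simp [cutEdge, hmem, hbelow]
  | pred s hs ih =>
    rw [hW.cutParity_vertical hK, sub_add_cancel, ih, cutEdge_eq_zero_of_notMem_upper
      (hleast _ (by lia)) (hleast _ (by lia)), zero_add]

lemma IsUpperRegion.cutParity_bottom_natCast (hW : IsUpperRegion S W T) (hK : IsStarClosed S K)
    (n : ℕ) : cutParity W K T ((n : ZMod N), -T) = cutParity W K T (0, -T) := by
  induction n with
  | zero => rw [Nat.cast_zero]
  | succ n ih =>
    rw [← ih, hW.cutParity_horizontal hK (n : ZMod N), Nat.cast_succ,
      cutEdge_eq_zero_of_notMem_upper (hW.notMem_of_le _ _ le_rfl) (hW.notMem_of_le _ _ le_rfl),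
      zero_add]

/-- The `*`-adjacency graph on the points of `S`. -/
def starGraph (S : Set (Slice N)) : SimpleGraph (Slice N) where
  Adj p q := p ≠ q ∧ p ∈ S ∧ q ∈ S ∧ IsStarNbr p q
  symm := ⟨fun _ _ h => ⟨h.1.symm, h.2.2.1, h.2.1, h.2.2.2.symm⟩⟩
  loopless := ⟨fun _ h => h.1 rfl⟩

lemma isStarClosed_reachable (S : Set (Slice N)) (p : Slice N) :
    IsStarClosed S {q | q ∈ S ∧ (starGraph S).Reachable p q} where
  subset _ hq := hq.1
  mem_of_isStarNbr a ha b hb hab := by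
    refine ⟨hb, ?_⟩
    rcases eq_or_ne a b with rfl | hne
    · exact ha.2
    · exact ha.2.trans (SimpleGraph.Adj.reachable ⟨hne, ha.1, hb, hab⟩)

lemma IsUpperRegion.exists_reachable_forall_fst [NeZero N] (hW : IsUpperRegion S W T) :
    ∃ p ∈ S, p.1 = 0 ∧ ∀ x : ZMod N, ∃ q : Slice N, q.1 = x ∧ (starGraph S).Reachable p q := by
  obtain ⟨t₁, hmem, hmin⟩ :
      ∃ t₁ : ℤ, ((0 : ZMod N), t₁) ∈ W ∧ ∀ s, ((0 : ZMod N), s) ∈ W → t₁ ≤ s :=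
    Int.exists_least_of_bdd ⟨-T, fun s hs => not_lt.mp fun h => hW.notMem_of_le 0 s h.le hs⟩
      ⟨T, hW.mem_of_le 0 T le_rfl⟩
  have hleast : ∀ s < t₁, ((0 : ZMod N), s) ∉ W := fun s hs h => (hmin s h).not_gt hs
  have hbelow : ((0 : ZMod N), t₁ - 1) ∈ S :=
    hW.mem_barrier _ hmem _ (Or.inr (Or.inr (Or.inr (by simp)))) (hleast _ (by lia))
  refine ⟨(0, t₁ - 1), hbelow, rfl, fun x => ?_⟩
  have hK := isStarClosed_reachable S (0, t₁ - 1)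
  have hlow : -T ≤ t₁ - 1 := by
    by_contra hlt
    exact hW.notMem_of_le 0 t₁ (by lia) hmem
  have hone := hW.cutParity_bottom_natCast hK x.val
  rw [ZMod.natCast_zmod_val, hW.cutParity_eq_one_of_le hK hmem hleast
    ⟨hbelow, SimpleGraph.Reachable.refl _⟩ hlow] at hone
  by_contra! hx
  refine zero_ne_one (α := ZMod 2) (hone ▸ (Finset.sum_eq_zero fun j _ => ?_).symm)
  exact cutEdge_eq_zero_of_notMem_barrier (fun h => hx _ rfl h.2) (fun h => hx _ rfl h.2)

/-- `v` runs along an injective `*`-path for `m` steps. -/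
structure IsStarPath (m : ℕ) (v : ℕ → Slice N) : Prop where
  injOn : Set.InjOn v (Set.Iic m)
  isStarNbr : ∀ i < m, IsStarNbr (v i) (v (i + 1))

lemma abs_valMinAbs_fst_getVert_le [NeZero N] (hp : p.1 = 0) (w : (starGraph S).Walk p q) :
    ∀ i ≤ w.length, |((w.getVert i).1).valMinAbs| ≤ i := by
  intro i
  induction i with
  | zero => simp [hp]
  | succ i ih =>
    intro hi
    obtain ⟨a, b, ha, -, hab⟩ := (w.adj_getVert_succ (i := i) (by lia)).2.2.2.symm
    have hstep := abs_valMinAbs_le_abs_valMinAbs_add (w.getVert (i + 1)).1 a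
    have hfst : (w.getVert i).1 = (w.getVert (i + 1)).1 + (a : ZMod N) := congrArg Prod.fst hab
    rw [← hfst] at hstep
    have := ih (by lia)
    push_cast
    lia

lemma IsUpperRegion.exists_isStarPath [NeZero N] (hW : IsUpperRegion S W T) :
    ∃ v : ℕ → Slice N, IsStarPath (N / 2) v ∧ ∀ i ≤ N / 2, v i ∈ S := by
  obtain ⟨p, hpS, hp0, hreach⟩ := hW.exists_reachable_forall_fst
  obtain ⟨q, hq, ⟨w⟩⟩ := hreach ((N / 2 : ℕ) : ZMod N)
  obtain ⟨w, hw⟩ := w.toPath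
  have hlen : N / 2 ≤ w.length := by
    have := abs_valMinAbs_fst_getVert_le hp0 w w.length le_rfl
    rw [SimpleGraph.Walk.getVert_length, hq, ZMod.valMinAbs_natCast_of_le_half le_rfl,
      Nat.abs_cast] at this
    exact_mod_cast this
  refine ⟨w.getVert, ⟨hw.getVert_injOn.mono fun i hi => hi.trans hlen, fun i hi =>
    (w.adj_getVert_succ (by lia)).2.2.2⟩, fun i hi => ?_⟩
  cases i with
  | zero => simpa using hpS
  | succ i => exact (w.adj_getVert_succ (by lia)).2.2.1

end PlanarDuality

section StarPathCounting

/-- The eight displacements of a `*`-step. -/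
noncomputable def starDirs : Finset (ℤ × ℤ) := ((Finset.Icc (-1) 1) ×ˢ (Finset.Icc (-1) 1)).erase 0

lemma card_starDirs : starDirs.card = 8 := by decide

lemma mem_starDirs {h : ℤ × ℤ} : h ∈ starDirs ↔ h ≠ 0 ∧ |h.1| ≤ 1 ∧ |h.2| ≤ 1 := by
  simp only [starDirs, Finset.mem_erase, Finset.mem_product, Finset.mem_Icc, abs_le]

lemma neg_mem_starDirs {h : ℤ × ℤ} (hh : h ∈ starDirs) : -h ∈ starDirs := by
  rw [mem_starDirs] at *
  simpa using hh

/-- The sequences of `k` displacements of `*`-steps, the latest one first, in which no step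
undoes the previous one. -/
noncomputable def nonbacktracking : ℕ → Finset (List (ℤ × ℤ))
  | 0 => {[]}
  | k + 1 => (nonbacktracking k).biUnion fun l => (starDirs.erase (-l.headD 0)).image (· :: l)

lemma mem_nonbacktracking_succ {k : ℕ} {l : List (ℤ × ℤ)} :
    l ∈ nonbacktracking (k + 1) ↔
      ∃ l' ∈ nonbacktracking k, ∃ h ∈ starDirs.erase (-l'.headD 0), h :: l' = l := by
  simp only [nonbacktracking, Finset.mem_biUnion, Finset.mem_image]

lemma card_nonbacktracking_le (k : ℕ) : (nonbacktracking k).card ≤ 8 * 7 ^ k := by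
  induction k with
  | zero => simp [nonbacktracking]
  | succ k ih =>
    cases k with
    | zero => exact (by decide : (nonbacktracking 1).card ≤ 8 * 7 ^ 1)
    | succ k =>
      have hnext : ∀ l ∈ nonbacktracking (k + 1),
          ((starDirs.erase (-l.headD 0)).image (· :: l)).card ≤ 7 := by
        intro l hl
        obtain ⟨l', -, h, hh, rfl⟩ := mem_nonbacktracking_succ.mp hl
        refine Finset.card_image_le.trans_eq ?_
        rw [List.headD_cons, Finset.card_erase_of_mem
          (neg_mem_starDirs (Finset.mem_of_mem_erase hh)), card_starDirs]
      rw [pow_succ, ← mul_assoc]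
      exact (Finset.card_biUnion_le_card_mul _ _ _ hnext).trans (Nat.mul_le_mul_right 7 ih)

variable {N : ℕ}

/-- The covering `ℤ² → (ℤ/Nℤ) × ℤ`. -/
def toSlice (N : ℕ) : ℤ × ℤ →+ Slice N :=
  (Int.castAddHom (ZMod N)).prodMap (AddMonoidHom.id ℤ)

@[simp] lemma toSlice_apply (h : ℤ × ℤ) : toSlice N h = ((h.1 : ZMod N), h.2) := rfl

/-- The points visited from `p` along the displacements `l`, the latest of which comes first. -/
def trail (p : Slice N) (l : List (ℤ × ℤ)) : Finset (Slice N) :=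
  (l.tails.map fun s => p + toSlice N s.sum).toFinset

lemma trail_nil (p : Slice N) : trail p [] = {p} := by
  simp [trail]

lemma trail_cons (p : Slice N) (h : ℤ × ℤ) (l : List (ℤ × ℤ)) :
    trail p (h :: l) = insert (p + toSlice N (h :: l).sum) (trail p l) := by
  simp [trail]

lemma abs_sum_snd_le_of_mem_nonbacktracking {k : ℕ} :
    ∀ l ∈ nonbacktracking k, |l.sum.2| ≤ k := by
  induction k with
  | zero => simp [nonbacktracking]
  | succ k ih =>
    intro l hl
    obtain ⟨l', hl', h, hh, rfl⟩ := mem_nonbacktracking_succ.mp hl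
    have hstep := (mem_starDirs.mp (Finset.mem_of_mem_erase hh)).2.2
    rw [List.sum_cons, Prod.snd_add]
    have := abs_add_le h.2 l'.sum.2
    have := ih l' hl'
    push_cast
    lia

lemma abs_snd_sub_le_of_mem_trail {p x : Slice N} {k : ℕ} :
    ∀ l ∈ nonbacktracking k, x ∈ trail p l → |x.2 - p.2| ≤ k := by
  induction k with
  | zero => simp +contextual [nonbacktracking, trail_nil]
  | succ k ih =>
    intro l hl hx
    have hend := abs_sum_snd_le_of_mem_nonbacktracking l hl
    obtain ⟨l', hl', h, -, rfl⟩ := mem_nonbacktracking_succ.mp hl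
    rw [trail_cons, Finset.mem_insert] at hx
    rcases hx with rfl | hx
    · simpa using hend
    · have := ih l' hl' hx
      push_cast
      lia

lemma IsStarPath.exists_mem_starDirs {m : ℕ} {v : ℕ → Slice N} (hv : IsStarPath m v) {i : ℕ}
    (hi : i < m) : ∃ h ∈ starDirs, v (i + 1) = v i + toSlice N h := by
  obtain ⟨a, b, ha, hb, hab⟩ := hv.isStarNbr i hi
  refine ⟨(a, b), mem_starDirs.mpr ⟨fun h0 => ?_, ha, hb⟩, hab⟩
  have heq : v (i + 1) = v i := by
    rw [hab]
    change v i + toSlice N (a, b) = v i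
    rw [h0, map_zero, add_zero]
  exact absurd (hv.injOn (Set.mem_Iic.mpr hi) (Set.mem_Iic.mpr hi.le) heq) (by lia)

lemma IsStarPath.ne_neg_of_eq_add {m : ℕ} {v : ℕ → Slice N} (hv : IsStarPath m v) {i : ℕ}
    (hi : i + 1 < m) {h h' : ℤ × ℤ} (hh : v (i + 1) = v i + toSlice N h)
    (hh' : v (i + 2) = v (i + 1) + toSlice N h') : h' ≠ -h := by
  rintro rfl
  have heq : v (i + 2) = v i := by rw [hh', hh, map_neg, add_neg_cancel_right]
  exact absurd (hv.injOn (Set.mem_Iic.mpr hi) (Set.mem_Iic.mpr (by lia)) heq) (by lia)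

lemma IsStarPath.exists_trail_eq_image {m : ℕ} {v : ℕ → Slice N} (hv : IsStarPath m v) :
    ∃ l ∈ nonbacktracking m, trail (v 0) l = (Finset.range (m + 1)).image v := by
  have hex : ∀ i, ∃ h, i < m → h ∈ starDirs ∧ v (i + 1) = v i + toSlice N h := fun i => by
    by_cases hi : i < m
    · obtain ⟨h, hh⟩ := hv.exists_mem_starDirs hi
      exact ⟨h, fun _ => hh⟩
    · exact ⟨0, fun h => absurd h hi⟩
  choose h hh using hex
  let l : ℕ → List (ℤ × ℤ) := fun k => ((List.range k).map h).reverse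
  have hl_succ : ∀ k, l (k + 1) = h k :: l k := fun k => by simp [l, List.range_succ]
  have hno_return : ∀ k < m, h k ≠ -(l k).headD 0 := by
    intro k hk hback
    cases k with
    | zero =>
      refine (mem_starDirs.mp (hh 0 hk).1).1 ?_
      simpa [l] using hback
    | succ k =>
      rw [hl_succ, List.headD_cons] at hback
      exact hv.ne_neg_of_eq_add hk (hh k (by lia)).2 (hh (k + 1) hk).2 hback
  have key : ∀ k ≤ m, l k ∈ nonbacktracking k ∧ v 0 + toSlice N (l k).sum = v k ∧
      trail (v 0) (l k) = (Finset.range (k + 1)).image v := by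
    intro k
    induction k with
    | zero => simp [l, nonbacktracking, trail_nil]
    | succ k ih =>
      intro hk
      obtain ⟨hmem, hend, htrail⟩ := ih (by lia)
      have hend' : v 0 + toSlice N (h k :: l k).sum = v (k + 1) := by
        rw [List.sum_cons, map_add, add_left_comm, hend, (hh k hk).2, add_comm]
      rw [hl_succ]
      refine ⟨mem_nonbacktracking_succ.mpr ⟨l k, hmem, h k, Finset.mem_erase.mpr
        ⟨hno_return k hk, (hh k hk).1⟩, rfl⟩, hend', ?_⟩
      rw [trail_cons, hend', htrail, Finset.range_add_one (n := k + 1), Finset.image_insert]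
  exact ⟨l m, (key m le_rfl).1, (key m le_rfl).2.2⟩

end StarPathCounting

section StarPathEvent

variable {e N : ℕ}

/-- The two-dimensional cylinder as the slice of `E` spanned by the first and the vertical
coordinate. -/
def sliceEmb (e N : ℕ) (p : Slice N) : Cyl (e + 1) N :=
  (Fin.cons (α := fun _ => ZMod N) p.1 fun _ => 0, p.2)

lemma sliceEmb_injective (e N : ℕ) : Function.Injective (sliceEmb e N) := fun p q h => by
  have hfst : p.1 = q.1 := by simpa [sliceEmb] using congrFun (congrArg Prod.fst h) 0
  exact Prod.ext hfst (congrArg (fun z : Cyl (e + 1) N => z.2) h)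

lemma IsCylPath.abs_snd_le {d : ℕ} {ω : ℕ → Cyl d N} (h : IsCylPath 0 ω) (i : ℕ) :
    |(ω i).2| ≤ i := by
  induction i with
  | zero => simp [h.1]
  | succ i ih =>
    obtain ⟨u, hu, hω⟩ := h.2 i
    have hstep := abs_apply_le_one_of_mem_unitVecs hu (Fin.last d)
    have := abs_add_le (ω i).2 (u (Fin.last d))
    rw [hω]
    change |(ω i).2 + u (Fin.last d)| ≤ _
    push_cast
    lia

/-- The time spent before `n` in the slab around height `t₀`. -/
noncomputable def slabTime {d : ℕ} (ω : ℕ → Cyl d N) (n : ℕ) (t₀ : ℤ) : ℕ :=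
  ((Finset.range n).filter fun i => ω i ∈ slab d N t₀).card

/-- The event that the walk covers, before time `n`, a `*`-path of length `N / 2` in the slice,
while spending at most time `V` in each slab. -/
def starPathEvent (e N n : ℕ) (V : ℝ) : Set (ℕ → Cyl (e + 1) N) :=
  {ω | (∀ t₀, (slabTime ω n t₀ : ℝ) ≤ V) ∧ ∃ v : ℕ → Slice N, IsStarPath (N / 2) v ∧
    ∀ i ≤ N / 2, ∃ j < n, ω j = sliceEmb e N (v i)}

/-- The event that the walk covers, before time `n`, the trail of `l` from `p`, while spending at
most time `V` in the slab around `p`. -/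
def trailEvent (e : ℕ) (n : ℕ) (V : ℝ) (p : Slice N) (l : List (ℤ × ℤ)) :
    Set (ℕ → Cyl (e + 1) N) :=
  {ω | (∀ a ∈ (trail p l).image (sliceEmb e N), ∃ i < n, ω i = a) ∧ (slabTime ω n p.2 : ℝ) ≤ V}

/-- The starting points, of height at most `n` in absolute value, and the sequences of `N / 2`
displacements which describe injective `*`-paths. -/
noncomputable def trailCodes (N n : ℕ) [NeZero N] : Finset (Slice N × List (ℤ × ℤ)) :=
  ((Finset.univ ×ˢ Finset.Icc (-(n : ℤ)) n) ×ˢ nonbacktracking (N / 2)).filter fun c =>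
    (trail c.1 c.2).card = N / 2 + 1

lemma card_trailCodes_le (N n : ℕ) [NeZero N] :
    (trailCodes N n).card ≤ N * (2 * n + 1) * (8 * 7 ^ (N / 2)) := by
  refine (Finset.card_filter_le _ _).trans ?_
  rw [Finset.card_product, Finset.card_product, Finset.card_univ, ZMod.card, Int.card_Icc,
    show ((n : ℤ) + 1 - -(n : ℤ)).toNat = 2 * n + 1 by lia]
  exact Nat.mul_le_mul_left _ (card_nonbacktracking_le _)

lemma exists_mem_trailEvent [NeZero N] {n : ℕ} {V : ℝ} {ω : ℕ → Cyl (e + 1) N}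
    (hω : IsCylPath 0 ω) (h : ω ∈ starPathEvent e N n V) :
    ∃ c ∈ trailCodes N n, ω ∈ trailEvent e n V c.1 c.2 := by
  obtain ⟨hslab, v, hv, hcov⟩ := h
  obtain ⟨l, hl, htrail⟩ := hv.exists_trail_eq_image
  have hheight : (v 0).2 ∈ Finset.Icc (-(n : ℤ)) n := by
    obtain ⟨j, hj, hωj⟩ := hcov 0 (Nat.zero_le _)
    have habs : |(v 0).2| ≤ j := by simpa [hωj, sliceEmb] using hω.abs_snd_le j
    rw [abs_le] at habs
    exact Finset.mem_Icc.mpr ⟨by lia, by lia⟩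
  have hcard : (trail (v 0) l).card = N / 2 + 1 := by
    rw [htrail, Finset.card_image_of_injOn, Finset.card_range]
    exact hv.injOn.mono fun i hi => Nat.lt_succ_iff.mp (Finset.mem_range.mp hi)
  refine ⟨(v 0, l), Finset.mem_filter.mpr ⟨Finset.mem_product.mpr ⟨Finset.mem_product.mpr
    ⟨Finset.mem_univ _, hheight⟩, hl⟩, hcard⟩, fun a ha => ?_, hslab _⟩
  simp only [htrail, Finset.mem_image, Finset.mem_range] at ha
  obtain ⟨_, ⟨i, hi, rfl⟩, rfl⟩ := ha
  exact hcov i (by lia)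

lemma exists_measure_trailEvent_le {Ql : ZLat e → Measure (ℕ → ZLat e)} (he : 1 ≤ e)
    (hQ : IsLatRW e Ql) {lam : ℝ} (hlam : 0 ≤ lam)
    (hr : Real.exp lam * ((2 + e * retProb e Ql) / (e + 2)) < 1) :
    ∃ (K C : ℝ) (N₀ : ℕ), 1 ≤ K ∧ 0 ≤ C ∧ 8 ≤ N₀ ∧ ∀ N, N₀ ≤ N → ∀ [NeZero N],
      ∀ Pl : Cyl (e + 1) N → Measure (ℕ → Cyl (e + 1) N), IsCylRW (e + 1) N Pl →
      ∀ (n : ℕ) (V : ℝ), ∀ c ∈ trailCodes N n, Pl 0 (trailEvent e n V c.1 c.2) ≤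
        ENNReal.ofReal (K * Real.exp
          (C * ((N / 2 : ℕ) + 1) / (N : ℝ) ^ (e + 2) * V - lam * ((N / 2 : ℕ) + 1))) := by
  obtain ⟨K, C, N₀, hK, hC, hN₀, H⟩ := exists_isCoverWeight he hQ hlam hr
  refine ⟨K, C, N₀, hK, hC, hN₀, fun N hN _ Pl hPl n V ⟨p, l⟩ hc => ?_⟩
  simp only [trailCodes, Finset.mem_filter, Finset.mem_product] at hc
  obtain ⟨⟨-, hl⟩, hcard⟩ := hc
  have hcardA : ((trail p l).image (sliceEmb e N)).card = N / 2 + 1 := by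
    rw [Finset.card_image_of_injective _ (sliceEmb_injective e N), hcard]
  obtain ⟨Ψ, hΨ⟩ := H N hN ((trail p l).image (sliceEmb e N))
    (Finset.forall_mem_image.mpr fun q _ i => by simp [sliceEmb]) p.2
    (Finset.forall_mem_image.mpr fun q hq => by
      have := abs_snd_sub_le_of_mem_trail l hl hq
      change |q.2 - p.2| ≤ _
      lia)
  have hbound := hΨ.measure_cover_le hPl hlam (by positivity) 0 n V
  rw [hcardA] at hbound
  exact_mod_cast hbound

lemma exists_measure_starPathEvent_le {Ql : ZLat e → Measure (ℕ → ZLat e)} (he : 1 ≤ e)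
    (hQ : IsLatRW e Ql) {lam : ℝ} (hlam : 0 ≤ lam)
    (hr : Real.exp lam * ((2 + e * retProb e Ql) / (e + 2)) < 1) :
    ∃ (K C : ℝ) (N₀ : ℕ), 1 ≤ K ∧ 0 ≤ C ∧ 8 ≤ N₀ ∧ ∀ N, N₀ ≤ N →
      ∀ Pl : Cyl (e + 1) N → Measure (ℕ → Cyl (e + 1) N), IsCylRW (e + 1) N Pl →
      ∀ (n : ℕ) (V : ℝ), Pl 0 (starPathEvent e N n V) ≤
        ENNReal.ofReal (N * (2 * n + 1) * (8 * 7 ^ (N / 2)) * (K * Real.exp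
          (C * ((N / 2 : ℕ) + 1) / (N : ℝ) ^ (e + 2) * V - lam * ((N / 2 : ℕ) + 1)))) := by
  obtain ⟨K, C, N₀, hK, hC, hN₀, H⟩ := exists_measure_trailEvent_le he hQ hlam hr
  refine ⟨K, C, N₀, hK, hC, hN₀, fun N hN Pl hPl n V => ?_⟩
  have : NeZero N := ⟨by lia⟩
  have hsub : Pl 0 (starPathEvent e N n V) ≤
      Pl 0 (⋃ c ∈ trailCodes N n, trailEvent e n V c.1 c.2) := by
    refine measure_mono_ae ?_
    filter_upwards [hPl.ae_isCylPath 0] with ω hω hbad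
    obtain ⟨c, hc, hmem⟩ := exists_mem_trailEvent hω hbad
    exact Set.mem_biUnion hc hmem
  refine hsub.trans ((measure_biUnion_finset_le _ _).trans
    ((Finset.sum_le_card_nsmul _ _ _ (H N hN Pl hPl n V)).trans ?_))
  rw [nsmul_eq_mul, ← ENNReal.ofReal_natCast, ← ENNReal.ofReal_mul (by positivity)]
  refine ENNReal.ofReal_le_ofReal (mul_le_mul_of_nonneg_right ?_ (by positivity))
  exact_mod_cast card_trailCodes_le N n

end StarPathEvent

section Disconnection

variable {e N : ℕ}

lemma sliceEmb_add_fst (p : Slice N) (a : ℤ) :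
    sliceEmb e N (p + ((a : ZMod N), 0)) = sliceEmb e N p + projE (e + 1) N (Pi.single 0 a) := by
  refine Prod.ext (funext fun i => ?_) (by simp [sliceEmb, projE])
  cases i using Fin.cases with
  | zero => simp [sliceEmb, projE]
  | succ k => simp [sliceEmb, projE, Fin.castSucc_succ]

lemma sliceEmb_add_snd (p : Slice N) (b : ℤ) :
    sliceEmb e N (p + (0, b)) =
      sliceEmb e N p + projE (e + 1) N (Pi.single (Fin.last (e + 1)) b) := by
  refine Prod.ext (funext fun i => ?_) (by simp [sliceEmb, projE])
  simp [sliceEmb, projE]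

lemma IsNbr.adj_sliceEmb (hN : 2 ≤ N) {p q : Slice N} (h : IsNbr p q) :
    adj (e + 1) N (sliceEmb e N p) (sliceEmb e N q) := by
  have : Fact (1 < N) := ⟨by lia⟩
  refine ⟨fun heq => ?_, ?_⟩
  · obtain rfl := sliceEmb_injective e N heq
    simp [IsNbr] at h
  · have hunit : ∀ i : Fin (e + 2), ∀ s : Bool,
        (Pi.single i (if s then 1 else -1) : Lat (e + 1)) ∈ unitVecs (e + 1) :=
      fun i s => Finset.mem_image.mpr ⟨(i, s), Finset.mem_univ _, rfl⟩
    rcases h with rfl | rfl | rfl | rfl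
    · exact ⟨_, hunit 0 true, by simp [← sliceEmb_add_fst]⟩
    · exact ⟨_, hunit 0 false, by simp [← sliceEmb_add_fst, add_assoc, Prod.mk_zero_zero]⟩
    · exact ⟨_, hunit (Fin.last _) true, by simp [← sliceEmb_add_snd]⟩
    · exact ⟨_, hunit (Fin.last _) false,
        by simp [← sliceEmb_add_snd, add_assoc, Prod.mk_zero_zero]⟩

/-- The points joined to height at least `T` outside `S`. -/
def upperRegion (S : Set (Slice N)) (T : ℤ) : Set (Slice N) :=
  {p | ∃ q : Slice N, T ≤ q.2 ∧ q ∉ S ∧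
    Relation.ReflTransGen (fun a b => a ∉ S ∧ b ∉ S ∧ IsNbr a b) q p}

lemma isUpperRegion_upperRegion {S : Set (Slice N)} {T : ℤ}
    (hhigh : ∀ q : Slice N, T ≤ q.2 → q ∉ S)
    (hlow : ∀ x t, t ≤ -T → (x, t) ∉ upperRegion S T) :
    IsUpperRegion S (upperRegion S T) T := by
  have hdisj : ∀ p ∈ upperRegion S T, p ∉ S := by
    rintro p ⟨q, -, hqS, hp⟩
    cases hp with
    | refl => exact hqS
    | tail _ h => exact h.2.1
  refine ⟨fun x t ht => ⟨(x, t), ht, hhigh _ ht, .refl⟩, hlow, hdisj, fun p hp q hpq hq => ?_, ?_⟩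
  · by_contra hqS
    obtain ⟨r, hr, hrS, hpath⟩ := id hp
    exact hq ⟨r, hr, hrS, hpath.tail ⟨hdisj p hp, hqS, hpq⟩⟩
  · rintro p ⟨q, hq, hqS, hp⟩
    refine ⟨q, hq, ?_⟩
    induction hp with
    | refl => exact .refl
    | tail hpath hstep ih =>
      exact ih.tail ⟨⟨q, hq, hqS, hpath⟩, ⟨q, hq, hqS, hpath.tail hstep⟩, hstep.2.2⟩

lemma Disconnects.exists_isStarPath (hN : 2 ≤ N) {A : Set (Cyl (e + 1) N)}
    (hA : Disconnects (e + 1) N A) :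
    ∃ v : ℕ → Slice N, IsStarPath (N / 2) v ∧ ∀ i ≤ N / 2, sliceEmb e N (v i) ∈ A := by
  have : NeZero N := ⟨by lia⟩
  obtain ⟨hfin, M₀, hM₀⟩ := hA
  obtain ⟨u, hu⟩ := (hfin.image Prod.snd).bddAbove
  have hlow : ∀ x t, t ≤ -((max M₀ (u + 1).toNat : ℕ) : ℤ) →
      (x, t) ∉ upperRegion (sliceEmb e N ⁻¹' A) (max M₀ (u + 1).toNat : ℕ) := by
    rintro x t ht ⟨q, hq, -, hp⟩
    exact hM₀ _ (le_max_left _ _) (sliceEmb e N q) (sliceEmb e N (x, t)) hq ht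
      (hp.lift (sliceEmb e N) fun a b hab => ⟨hab.1, hab.2.1, hab.2.2.adj_sliceEmb hN⟩)
  refine (isUpperRegion_upperRegion (fun q hq hqA => ?_) hlow).exists_isStarPath
  have : q.2 ≤ u := hu ⟨sliceEmb e N q, hqA, rfl⟩
  lia

lemma exists_disconnects_of_not_geReal {d : ℕ} {ω : ℕ → Cyl d N} {r : ℝ}
    (h : ¬ geReal (discT d N ω) r) : ∃ n : ℕ, Disconnects d N (ran ω n) ∧ (n : ℝ) < r := by
  simp only [geReal, not_forall, not_le] at h
  obtain ⟨n, hn, hr⟩ := h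
  have hne : {t : ℕ∞ | ∃ n : ℕ, Disconnects d N (ran ω n) ∧ t = n}.Nonempty := by
    by_contra hempty
    rw [discT, Set.not_nonempty_iff_eq_empty.mp hempty, sInf_empty] at hn
    exact ENat.natCast_ne_top n hn.symm
  obtain ⟨k, hk, hdisc⟩ := csInf_mem hne
  obtain rfl : n = k := by exact_mod_cast hn.symm.trans hdisc
  exact ⟨n, hk, hr⟩

end Disconnection

section VerticalMartingales

variable {d N : ℕ} {Pl : Cyl d N → Measure (ℕ → Cyl d N)} {f : ℤ → ℝ} {U : Set ℤ}

lemma cylNbrSum_comp_snd (φ : ℤ → ℝ) (z : Cyl d N) :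
    cylNbrSum (fun y => φ y.2) z = 2 * d * φ z.2 + φ (z.2 + 1) + φ (z.2 - 1) := by
  have hflat : ∀ (i : Fin d) (s : ℤ), (Pi.single i.castSucc s : Lat d) (Fin.last d) = 0 :=
    fun i s => by rw [Pi.single_eq_of_ne (by exact (Fin.castSucc_lt_last i).ne')]
  change ∑ u ∈ unitVecs d, φ (z.2 + u (Fin.last d)) = _
  rw [sum_unitVecs d fun u => φ (z.2 + u (Fin.last d)), Fin.sum_univ_castSucc]
  simp only [hflat, add_zero, Pi.single_eq_same, Finset.sum_const, Finset.card_univ,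
    Fintype.card_fin, nsmul_eq_mul, ← sub_eq_add_neg]
  ring

/-- The second difference of `f`; the vertical coordinate being a lazy simple random walk, the
drift of `f` along it is `secondDiff f / (2 (d + 1))`. -/
def secondDiff (f : ℤ → ℝ) (z : ℤ) : ℝ := f (z + 1) + f (z - 1) - 2 * f z

/-- `f` varies by at most `2` along each edge of `ℤ`, and only along edges meeting `U`. -/
structure IsSlowOn (f : ℤ → ℝ) (U : Set ℤ) : Prop where
  abs_sub_le : ∀ z, |f (z + 1) - f z| ≤ 2
  eq_of_notMem : ∀ z ∉ U, f (z + 1) = f z ∧ f (z - 1) = f z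

/-- The increment of the exponent of the exponential supermartingale of `f` along a step from
height `z` to height `s`. -/
noncomputable def expIncrement (d : ℕ) (f : ℤ → ℝ) (U : Set ℤ) (μ : ℝ) (z s : ℤ) : ℝ :=
  μ * (f s - f z - secondDiff f z / (2 * (d + 1))) - if z ∈ U then 16 * μ ^ 2 else 0

lemma IsSlowOn.abs_secondDiff_div_le (hf : IsSlowOn f U) (z : ℤ) :
    |secondDiff f z / (2 * ((d : ℝ) + 1))| ≤ 2 := by
  have hup := abs_le.mp (hf.abs_sub_le z)
  have hdown := abs_le.mp (hf.abs_sub_le (z - 1))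
  rw [sub_add_cancel] at hdown
  rw [abs_div, abs_of_pos (by positivity : (0 : ℝ) < 2 * (d + 1)), div_le_iff₀ (by positivity),
    secondDiff, abs_le]
  constructor <;> linarith [(Nat.cast_nonneg d : (0 : ℝ) ≤ d)]

lemma IsSlowOn.exp_expIncrement_le (hf : IsSlowOn f U) {μ : ℝ} (hμ : 4 * |μ| ≤ 1) {z s : ℤ}
    (hz : z ∈ U) (hs : |f s - f z| ≤ 2) :
    Real.exp (expIncrement d f U μ z s) ≤
      (1 + μ * (f s - f z - secondDiff f z / (2 * (d + 1))) + 16 * μ ^ 2) *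
        Real.exp (-(16 * μ ^ 2)) := by
  have hdrift := hf.abs_secondDiff_div_le (d := d) z
  rw [expIncrement, if_pos hz, sub_eq_add_neg (μ * _), Real.exp_add]
  refine mul_le_mul_of_nonneg_right ?_ (Real.exp_pos _).le
  set x := f s - f z - secondDiff f z / (2 * ((d : ℝ) + 1))
  have hx : |x| ≤ 4 := (abs_sub _ _).trans (by linarith)
  have hμx : |μ * x| ≤ 1 := by
    rw [abs_mul]
    nlinarith [abs_nonneg μ]
  have hx2 : x ^ 2 ≤ 16 := by
    rw [← sq_abs]
    nlinarith [abs_nonneg x]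
  have hexp := (abs_le.mp (Real.abs_exp_sub_one_sub_id_le hμx)).2
  nlinarith [sq_nonneg μ]

lemma IsSlowOn.cylNbrSum_exp_expIncrement_le (hf : IsSlowOn f U) {μ : ℝ} (hμ : 4 * |μ| ≤ 1)
    (z : Cyl d N) :
    cylNbrSum (fun y => Real.exp (expIncrement d f U μ z.2 y.2)) z ≤ 2 * (d + 1) := by
  rw [cylNbrSum_comp_snd fun s => Real.exp (expIncrement d f U μ z.2 s)]
  by_cases hz : z.2 ∈ U
  · have hstay := hf.exp_expIncrement_le (d := d) hμ hz (s := z.2) (by simp)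
    have hup := hf.exp_expIncrement_le (d := d) hμ hz (hf.abs_sub_le z.2)
    have hdown := hf.exp_expIncrement_le (d := d) hμ hz (s := z.2 - 1) (by
      simpa [abs_sub_comm] using hf.abs_sub_le (z.2 - 1))
    have hmean : (1 + 16 * μ ^ 2) * Real.exp (-(16 * μ ^ 2)) ≤ 1 := by
      rw [Real.exp_neg, ← div_eq_mul_inv, div_le_one (Real.exp_pos _)]
      linarith [Real.add_one_le_exp (16 * μ ^ 2)]
    have hdrift : secondDiff f z.2 / (2 * ((d : ℝ) + 1)) * (2 * (d + 1)) =
        f (z.2 + 1) + f (z.2 - 1) - 2 * f z.2 := by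
      rw [div_mul_cancel₀ _ (by positivity), secondDiff]
    set D := secondDiff f z.2 / (2 * ((d : ℝ) + 1))
    set X := Real.exp (-(16 * μ ^ 2))
    calc _ ≤ 2 * d * ((1 + μ * (f z.2 - f z.2 - D) + 16 * μ ^ 2) * X) +
          (1 + μ * (f (z.2 + 1) - f z.2 - D) + 16 * μ ^ 2) * X +
          (1 + μ * (f (z.2 - 1) - f z.2 - D) + 16 * μ ^ 2) * X := by gcongr
      _ = 2 * (d + 1) * ((1 + 16 * μ ^ 2) * X) + μ * X *
          (f (z.2 + 1) + f (z.2 - 1) - 2 * f z.2 - D * (2 * (d + 1))) := by ring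
      _ = 2 * (d + 1) * ((1 + 16 * μ ^ 2) * X) := by rw [hdrift, sub_self, mul_zero, add_zero]
      _ ≤ 2 * (d + 1) := mul_le_of_le_one_right (by positivity) hmean
  · obtain ⟨hup, hdown⟩ := hf.eq_of_notMem _ hz
    have hdrift : secondDiff f z.2 = 0 := by
      rw [secondDiff, hup, hdown]
      ring
    simp only [expIncrement, if_neg hz, hdrift, hup, hdown, sub_self, zero_div, mul_zero,
      Real.exp_zero]
    linarith

/-- `τ` is the first time at which `ω` fails to be in `G τ`, truncated at `n`. -/
def IsFirstExit (G : ℕ → Set (ℕ → Cyl d N)) (n : ℕ) (ω : ℕ → Cyl d N) (τ : ℕ) : Prop :=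
  τ ≤ n ∧ ∀ i < n, i < τ ↔ ω ∈ G i

/-- The martingale part, at time `τ`, of `f` along the vertical coordinate. -/
noncomputable def martPart (f : ℤ → ℝ) (ω : ℕ → Cyl d N) (τ : ℕ) : ℝ :=
  f (ω τ).2 - f (ω 0).2 - (∑ i ∈ Finset.range τ, secondDiff f (ω i).2) / (2 * (d + 1))

/-- The time spent before `τ` at the heights in `U`. -/
noncomputable def timeIn (U : Set ℤ) (ω : ℕ → Cyl d N) (τ : ℕ) : ℕ :=
  ((Finset.range τ).filter fun i => (ω i).2 ∈ U).card

lemma sum_expIncrement (μ : ℝ) (ω : ℕ → Cyl d N) (τ : ℕ) :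
    ∑ i ∈ Finset.range τ, expIncrement d f U μ (ω i).2 (ω (i + 1)).2 =
      μ * martPart f ω τ - 16 * μ ^ 2 * timeIn U ω τ := by
  simp only [expIncrement]
  rw [Finset.sum_sub_distrib, ← Finset.mul_sum, Finset.sum_sub_distrib,
    Finset.sum_range_sub fun i => f (ω i).2, ← Finset.sum_div, ← Finset.sum_filter,
    Finset.sum_const, nsmul_eq_mul, martPart, timeIn]
  ring

lemma IsCylRW.measure_le_martPart_le (h : IsCylRW d N Pl) (hf : IsSlowOn f U) {μ : ℝ}
    (hμ : 4 * |μ| ≤ 1) {G : ℕ → Set (ℕ → Cyl d N)}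
    (hG : ∀ i, DependsOn (fun ω => ω ∈ G i) (Set.Iic i)) (n : ℕ) (a : ℝ) (x : Cyl d N) :
    Pl x {ω | ∃ τ, IsFirstExit G n ω τ ∧
      a ≤ μ * martPart f ω τ - 16 * μ ^ 2 * timeIn U ω τ} ≤ ENNReal.ofReal (Real.exp (-a)) := by
  refine h.measure_le_exp_neg x (n := n)
    (w := fun k ω y => if ω ∈ G k then expIncrement d f U μ (ω k).2 y.2 else 0)
    (fun k ω ω' hωω' => ?_) (fun k ω => ?_) ?_
  · have hmem : (ω ∈ G k) = (ω' ∈ G k) := hG k hωω'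
    simp only [hmem, hωω' k Set.self_mem_Iic]
  · by_cases hk : ω ∈ G k
    · simpa only [if_pos hk] using hf.cylNbrSum_exp_expIncrement_le hμ (ω k)
    · simp [hk, cylNbrSum, card_unitVecs]
  · rintro ω ⟨τ, ⟨hτ, hexit⟩, ha⟩ -
    rw [← sum_expIncrement] at ha
    refine ha.trans_eq ?_
    rw [← Finset.sum_filter]
    refine Finset.sum_congr (Finset.ext fun i => ?_) fun _ _ => rfl
    simp only [Finset.mem_filter, Finset.mem_range]
    exact ⟨fun hi => ⟨hi.trans_le hτ, (hexit i (hi.trans_le hτ)).mp hi⟩,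
      fun hi => (hexit i hi.1).mpr hi.2⟩

lemma IsCylRW.measure_le_abs_martPart_le (h : IsCylRW d N Pl) (hf : IsSlowOn f U) {m : ℝ}
    (hm : 0 ≤ m) (hm' : 4 * m ≤ 1) {G : ℕ → Set (ℕ → Cyl d N)}
    (hG : ∀ i, DependsOn (fun ω => ω ∈ G i) (Set.Iic i)) (n : ℕ) (a : ℝ) (x : Cyl d N) :
    Pl x {ω | ∃ τ, IsFirstExit G n ω τ ∧
      a ≤ m * |martPart f ω τ| - 16 * m ^ 2 * timeIn U ω τ} ≤
        ENNReal.ofReal (2 * Real.exp (-a)) := by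
  have hpos := h.measure_le_martPart_le hf (by rwa [abs_of_nonneg hm]) hG n a x
  have hneg := h.measure_le_martPart_le hf (by rwa [abs_neg, abs_of_nonneg hm]) hG n a x
  rw [two_mul, ENNReal.ofReal_add (Real.exp_pos _).le (Real.exp_pos _).le]
  refine (measure_mono ?_).trans ((measure_union_le _ _).trans (add_le_add hpos hneg))
  rintro ω ⟨τ, hτ, ha⟩
  rcases abs_cases (martPart f ω τ) with ⟨habs, -⟩ | ⟨habs, -⟩ <;> rw [habs] at ha
  · exact Or.inl ⟨τ, hτ, ha⟩
  · exact Or.inr ⟨τ, hτ, by linarith⟩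

end VerticalMartingales

section LocalTime

variable {d N : ℕ} {Pl : Cyl d N → Measure (ℕ → Cyl d N)} {B R : ℝ} {n : ℕ}

/-- The time spent at height `t` before time `k`. -/
noncomputable def localTime (ω : ℕ → Cyl d N) (t : ℤ) (k : ℕ) : ℕ :=
  ((Finset.range k).filter fun i => (ω i).2 = t).card

lemma localTime_succ_le (ω : ℕ → Cyl d N) (t : ℤ) (k : ℕ) :
    localTime ω t (k + 1) ≤ localTime ω t k + 1 := by
  rw [localTime, Finset.range_add_one, Finset.filter_insert]
  split_ifs
  · exact Finset.card_insert_le _ _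
  · exact Nat.le_succ _

lemma timeIn_Icc_eq_sum_localTime (ω : ℕ → Cyl d N) (x y : ℤ) (τ : ℕ) :
    timeIn (Set.Icc x y) ω τ = ∑ t ∈ Finset.Icc x y, localTime ω t τ := by
  have hmaps : ∀ i ∈ (Finset.range τ).filter fun i => (ω i).2 ∈ Set.Icc x y,
      (ω i).2 ∈ Finset.Icc x y := fun i hi => Finset.mem_Icc.mpr (Finset.mem_filter.mp hi).2
  rw [timeIn, Finset.filter_congr_decidable, Finset.card_eq_sum_card_fiberwise hmaps]
  refine Finset.sum_congr rfl fun t ht => congrArg Finset.card ?_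
  rw [Finset.filter_filter]
  refine Finset.filter_congr fun i _ => and_iff_right_of_imp fun hi => ?_
  rw [hi]
  exact Finset.mem_Icc.mp ht

lemma timeIn_Icc_le {ω : ℕ → Cyl d N} {τ : ℕ} (hB : ∀ t, (localTime ω t τ : ℝ) ≤ B) (x : ℤ)
    (ℓ : ℕ) : (timeIn (Set.Icc x (x + ℓ)) ω τ : ℝ) ≤ (ℓ + 1) * B := by
  have hcard : (Finset.Icc x (x + ℓ)).card = ℓ + 1 := by
    rw [Int.card_Icc]
    lia
  rw [timeIn_Icc_eq_sum_localTime, Nat.cast_sum]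
  refine (Finset.sum_le_card_nsmul _ _ _ fun t _ => hB t).trans_eq ?_
  rw [hcard, nsmul_eq_mul, Nat.cast_succ]

lemma secondDiff_abs_sub (x z : ℤ) :
    secondDiff (fun z => |(z : ℝ) - x|) z = if z = x then 2 else 0 := by
  have hint : |z + 1 - x| + |z - 1 - x| - 2 * |z - x| = if z = x then 2 else 0 := by
    split_ifs <;> grind
  rw [secondDiff]
  exact_mod_cast hint

lemma sum_secondDiff_abs_sub (ω : ℕ → Cyl d N) (x : ℤ) (τ : ℕ) :
    ∑ i ∈ Finset.range τ, secondDiff (fun z => |(z : ℝ) - x|) (ω i).2 = 2 * localTime ω x τ := by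
  simp only [secondDiff_abs_sub]
  rw [← Finset.sum_filter, Finset.sum_const, nsmul_eq_mul, localTime, mul_comm]

lemma abs_abs_add_one_sub_sub_abs_le (x z : ℤ) :
    |(|((z + 1 : ℤ) : ℝ) - x| - |(z : ℝ) - x|)| ≤ 1 := by
  refine (abs_abs_sub_abs_le_abs_sub _ _).trans_eq ?_
  push_cast
  rw [show (z : ℝ) + 1 - x - (z - x) = 1 by ring, abs_one]

lemma isSlowOn_intCast : IsSlowOn (fun z => (z : ℝ)) Set.univ :=
  ⟨fun z => by simp, fun z hz => absurd (Set.mem_univ z) hz⟩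

lemma isSlowOn_abs_sub (x : ℤ) : IsSlowOn (fun z => |(z : ℝ) - x|) Set.univ :=
  ⟨fun z => (abs_abs_add_one_sub_sub_abs_le x z).trans one_le_two,
    fun z hz => absurd (Set.mem_univ z) hz⟩

lemma isSlowOn_abs_sub_sub_abs_sub (x : ℤ) (ℓ : ℕ) :
    IsSlowOn (fun z => |(z : ℝ) - x| - |(z : ℝ) - (x + ℓ : ℤ)|) (Set.Icc x (x + ℓ)) where
  abs_sub_le z := by
    have hx := abs_le.mp (abs_abs_add_one_sub_sub_abs_le x z)
    have hy := abs_le.mp (abs_abs_add_one_sub_sub_abs_le (x + ℓ) z)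
    rw [abs_le]
    constructor <;> linarith
  eq_of_notMem z hz := by
    have hint : |z + 1 - x| - |z + 1 - (x + ℓ)| = |z - x| - |z - (x + ℓ)| ∧
        |z - 1 - x| - |z - 1 - (x + ℓ)| = |z - x| - |z - (x + ℓ)| := by
      rw [Set.mem_Icc] at hz
      grind
    exact_mod_cast hint

/-- The event that, up to time `i`, all local times are at most `B` and all heights at most `R`. -/
def quietEvent (d N : ℕ) (B R : ℝ) (i : ℕ) : Set (ℕ → Cyl d N) :=
  {ω | ∀ k ≤ i, (∀ t, (localTime ω t k : ℝ) ≤ B) ∧ |((ω k).2 : ℝ)| ≤ R}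

lemma dependsOn_mem_quietEvent (B R : ℝ) (i : ℕ) :
    DependsOn (fun ω => ω ∈ quietEvent d N B R i) (Set.Iic i) := by
  intro ω ω' h
  have hlocal : ∀ k ≤ i, ∀ t, localTime ω t k = localTime ω' t k := fun k hk t => by
    refine congrArg Finset.card (Finset.filter_congr fun j hj => ?_)
    rw [h j (Set.mem_Iic.mpr ((Finset.mem_range.mp hj).le.trans hk))]
  refine propext (forall₂_congr fun k hk => ?_)
  rw [h k (Set.mem_Iic.mpr hk)]
  simp only [hlocal k hk]

lemma exists_isFirstExit_quietEvent (hB : 0 ≤ B) {ω : ℕ → Cyl d N}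
    (hω : ∃ t, B < (localTime ω t n : ℝ)) :
    ∃ τ, IsFirstExit (quietEvent d N B R) n ω τ ∧ (∀ t, (localTime ω t τ : ℝ) ≤ B + 1) ∧
      (R < |((ω τ).2 : ℝ)| ∨ |((ω τ).2 : ℝ)| ≤ R ∧
        ∃ t : ℤ, |(t : ℝ)| ≤ R ∧ B < (localTime ω t τ : ℝ)) := by
  obtain ⟨t₀, ht₀⟩ := hω
  have hex : ∃ k, ¬ ((∀ t, (localTime ω t k : ℝ) ≤ B) ∧ |((ω k).2 : ℝ)| ≤ R) :=
    ⟨n, fun hn => (hn.1 t₀).not_gt ht₀⟩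
  obtain ⟨τ, hτ, hmin⟩ : ∃ τ, ¬ ((∀ t, (localTime ω t τ : ℝ) ≤ B) ∧ |((ω τ).2 : ℝ)| ≤ R) ∧
      ∀ k < τ, (∀ t, (localTime ω t k : ℝ) ≤ B) ∧ |((ω k).2 : ℝ)| ≤ R :=
    ⟨Nat.find hex, Nat.find_spec hex, fun k hk => not_not.mp (Nat.find_min hex hk)⟩
  refine ⟨τ, ⟨not_lt.mp fun hn => ((hmin n hn).1 t₀).not_gt ht₀, fun i _ =>
    ⟨fun hi k hk => hmin k (hk.trans_lt hi), fun hi => not_le.mp fun hle => hτ (hi τ hle)⟩⟩,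
    fun t => ?_, or_iff_not_imp_left.mpr fun hR => ?_⟩
  · cases τ with
    | zero => simpa [localTime] using hB.trans (le_add_of_nonneg_right zero_le_one)
    | succ k =>
      calc (localTime ω t (k + 1) : ℝ) ≤ localTime ω t k + 1 := mod_cast localTime_succ_le ω t k
        _ ≤ B + 1 := by gcongr; exact (hmin k k.lt_succ_self).1 t
  · rw [not_lt] at hR
    obtain ⟨t, ht⟩ := not_forall.mp fun hB' => hτ ⟨hB', hR⟩
    have hpos : 0 < localTime ω t τ := mod_cast hB.trans_lt (not_le.mp ht)
    obtain ⟨i, hi⟩ := Finset.card_pos.mp hpos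
    simp only [Finset.mem_filter, Finset.mem_range] at hi
    exact ⟨hR, t, hi.2 ▸ (hmin i hi.1).2, not_le.mp ht⟩

/-- The event that the walk leaves the heights at most `R` when it stops being quiet. -/
def escapeEvent (d N : ℕ) (B R : ℝ) (n : ℕ) : Set (ℕ → Cyl d N) :=
  {ω | ∃ τ, IsFirstExit (quietEvent d N B R) n ω τ ∧ R < |((ω τ).2 : ℝ)|}

/-- The event that the local time at `x` is at least `B / 2`, and the height at most `R`, when the
walk stops being quiet. -/
def coarseEvent (d N : ℕ) (B R : ℝ) (n : ℕ) (x : ℤ) : Set (ℕ → Cyl d N) :=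
  {ω | ∃ τ, IsFirstExit (quietEvent d N B R) n ω τ ∧ |((ω τ).2 : ℝ)| ≤ R ∧
    B / 2 ≤ localTime ω x τ}

/-- The event that the local times at `x` and `y` differ by at least `α`, and no local time exceeds
`B + 1`, when the walk stops being quiet. -/
def jumpEvent (d N : ℕ) (B R : ℝ) (n : ℕ) (α : ℝ) (x y : ℤ) : Set (ℕ → Cyl d N) :=
  {ω | ∃ τ, IsFirstExit (quietEvent d N B R) n ω τ ∧ (∀ t, (localTime ω t τ : ℝ) ≤ B + 1) ∧
    α ≤ |(localTime ω x τ : ℝ) - localTime ω y τ|}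

lemma timeIn_univ_le_of_isFirstExit {G : ℕ → Set (ℕ → Cyl d N)} {ω : ℕ → Cyl d N} {τ : ℕ}
    (hτ : IsFirstExit G n ω τ) : (timeIn Set.univ ω τ : ℝ) ≤ n := by
  simpa [timeIn] using hτ.1

lemma IsCylRW.measure_escapeEvent_le (h : IsCylRW d N Pl) {m : ℝ} (hm : 0 ≤ m)
    (hm' : 4 * m ≤ 1) :
    Pl 0 (escapeEvent d N B R n) ≤
      ENNReal.ofReal (2 * Real.exp (-(m * R - 16 * m ^ 2 * n))) := by
  refine (measure_mono_ae ?_).trans (h.measure_le_abs_martPart_le isSlowOn_intCast hm hm'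
    (dependsOn_mem_quietEvent B R) n _ 0)
  filter_upwards [h.ae_isCylPath 0] with ω hω ⟨τ, hτ, hR⟩
  refine ⟨τ, hτ, ?_⟩
  have hmart : martPart (fun z => (z : ℝ)) ω τ = (ω τ).2 := by
    simp [martPart, secondDiff, hω.1, two_mul]
  rw [hmart]
  have := timeIn_univ_le_of_isFirstExit hτ
  gcongr

lemma IsCylRW.measure_coarseEvent_le (h : IsCylRW d N Pl) {m : ℝ} (hm : 0 ≤ m)
    (hm' : 4 * m ≤ 1) (x : ℤ) :
    Pl 0 (coarseEvent d N B R n x) ≤ ENNReal.ofReal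
      (2 * Real.exp (-(m * (B / (2 * (d + 1)) - R) - 16 * m ^ 2 * n))) := by
  refine (measure_mono_ae ?_).trans (h.measure_le_abs_martPart_le (isSlowOn_abs_sub x) hm hm'
    (dependsOn_mem_quietEvent B R) n _ 0)
  filter_upwards [h.ae_isCylPath 0] with ω hω ⟨τ, hτ, hR, hB⟩
  refine ⟨τ, hτ, ?_⟩
  have htime := timeIn_univ_le_of_isFirstExit hτ
  have hlocal : B / (2 * (d + 1)) ≤ 2 * localTime ω x τ / (2 * ((d : ℝ) + 1)) := by
    gcongr
    linarith
  have hdisp : |((ω τ).2 : ℝ) - x| - |(((0 : Cyl d N).2 : ℤ) : ℝ) - x| ≤ R :=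
    (abs_sub_abs_le_abs_sub _ _).trans (by simpa using hR)
  have hmart : B / (2 * (d + 1)) - R ≤ |martPart (fun z => |(z : ℝ) - x|) ω τ| := by
    rw [martPart, sum_secondDiff_abs_sub, hω.1]
    exact le_trans (by linarith) (neg_le_abs _)
  gcongr

lemma sum_secondDiff_abs_sub_sub_abs_sub (x y : ℤ) (ω : ℕ → Cyl d N) (k : ℕ) :
    ∑ i ∈ Finset.range k, secondDiff (fun z => |(z : ℝ) - x| - |(z : ℝ) - y|) (ω i).2 =
      2 * ((localTime ω x k : ℝ) - localTime ω y k) := by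
  have hsplit : ∀ z, secondDiff (fun z => |(z : ℝ) - x| - |(z : ℝ) - y|) z =
      secondDiff (fun z => |(z : ℝ) - x|) z - secondDiff (fun z => |(z : ℝ) - y|) z :=
    fun z => by simp only [secondDiff]; ring
  simp only [hsplit]
  rw [Finset.sum_sub_distrib, sum_secondDiff_abs_sub, sum_secondDiff_abs_sub, ← mul_sub]

lemma IsCylRW.measure_jumpEvent_le (h : IsCylRW d N Pl) {m : ℝ} (hm : 0 ≤ m) (hm' : 4 * m ≤ 1)
    (α : ℝ) (x : ℤ) (ℓ : ℕ) :
    Pl 0 (jumpEvent d N B R n α x (x + ℓ)) ≤ ENNReal.ofReal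
      (2 * Real.exp (-(m * (α / (d + 1) - 2 * ℓ) - 16 * m ^ 2 * ((ℓ + 1) * (B + 1))))) := by
  refine (measure_mono ?_).trans (h.measure_le_abs_martPart_le
    (isSlowOn_abs_sub_sub_abs_sub x ℓ) hm hm' (dependsOn_mem_quietEvent B R) n _ 0)
  rintro ω ⟨τ, hτ, hB, hα⟩
  refine ⟨τ, hτ, ?_⟩
  have htime := timeIn_Icc_le hB x ℓ
  have hbounded : ∀ z : ℝ, |(|z - x| - |z - (x + ℓ : ℤ)|)| ≤ ℓ := fun z => by
    refine (abs_abs_sub_abs_le_abs_sub _ _).trans_eq ?_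
    push_cast
    rw [show z - x - (z - (x + ℓ)) = ℓ by ring, Nat.abs_cast]
  have hmart : α / (d + 1) - 2 * ℓ ≤
      |martPart (fun z => |(z : ℝ) - x| - |(z : ℝ) - (x + ℓ : ℤ)|) ω τ| := by
    have hdrift : α / (d + 1) ≤ |((localTime ω x τ : ℝ) - localTime ω (x + ℓ) τ) / (d + 1)| := by
      rw [abs_div, abs_of_pos (by positivity : (0 : ℝ) < d + 1)]
      gcongr
    rw [martPart, sum_secondDiff_abs_sub_sub_abs_sub, mul_div_mul_left _ _ two_ne_zero,
      abs_sub_comm]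
    have hdisp := (abs_sub _ _).trans (add_le_add (hbounded (ω τ).2) (hbounded (ω 0).2))
    have := abs_sub_abs_le_abs_sub (((localTime ω x τ : ℝ) - localTime ω (x + ℓ) τ) / (d + 1))
      (|((ω τ).2 : ℝ) - x| - |((ω τ).2 : ℝ) - (x + ℓ : ℤ)| -
        (|((ω 0).2 : ℝ) - x| - |((ω 0).2 : ℝ) - (x + ℓ : ℤ)|))
    linarith
  gcongr

end LocalTime

section DyadicChaining

variable {d N n K M : ℕ} {Pl : Cyl d N → Measure (ℕ → Cyl d N)} {B R : ℝ}

lemma apply_dyadic_le (l : ℤ → ℝ) (x : ℤ) (s : ℕ) :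
    l (2 ^ s * (x / 2 ^ s)) ≤ l (2 ^ (s + 1) * (x / 2 ^ (s + 1))) +
      |l (2 ^ (s + 1) * (x / 2 ^ (s + 1))) - l (2 ^ (s + 1) * (x / 2 ^ (s + 1)) + 2 ^ s)| := by
  have hhalf : x / 2 ^ (s + 1) = x / 2 ^ s / 2 := by
    rw [pow_succ, Int.ediv_ediv_of_nonneg (by positivity)]
  rw [hhalf]
  obtain ⟨k, hk | hk⟩ := Int.even_or_odd' (x / 2 ^ s)
  · have hpoint : (2 : ℤ) ^ s * (x / 2 ^ s) = 2 ^ (s + 1) * (x / 2 ^ s / 2) := by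
      rw [hk, Int.mul_ediv_cancel_left k two_ne_zero]
      ring
    rw [hpoint]
    exact le_add_of_nonneg_right (abs_nonneg _)
  · have hpoint : (2 : ℤ) ^ s * (x / 2 ^ s) = 2 ^ (s + 1) * (x / 2 ^ s / 2) + 2 ^ s := by
      rw [show x / 2 ^ s / 2 = k by lia, hk]
      ring
    rw [hpoint]
    linarith [neg_abs_le (l (2 ^ (s + 1) * (x / 2 ^ s / 2)) -
      l (2 ^ (s + 1) * (x / 2 ^ s / 2) + 2 ^ s))]

lemma le_add_sum_of_dyadic {l : ℤ → ℝ} {α : ℕ → ℝ} {x : ℤ} (h : ∀ s < K,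
    |l (2 ^ (s + 1) * (x / 2 ^ (s + 1))) - l (2 ^ (s + 1) * (x / 2 ^ (s + 1)) + 2 ^ s)| ≤ α s) :
    l x ≤ l (2 ^ K * (x / 2 ^ K)) + ∑ s ∈ Finset.range K, α s := by
  induction K with
  | zero => simp
  | succ K ih =>
    rw [Finset.sum_range_succ]
    linarith [ih fun s hs => h s (hs.trans K.lt_succ_self), apply_dyadic_le l x K,
      h K K.lt_succ_self]

/-- The indices `a` of the dyadic intervals at depth `j` that cover the integers of absolute value
less than `2 ^ K * M`; these intervals have length `2 ^ (K - j)`. -/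
noncomputable def dyadicIndices (M j : ℕ) : Finset ℤ := Finset.Icc (-(2 ^ j * M)) (2 ^ j * M)

lemma ediv_mem_dyadicIndices {x : ℤ} {j s : ℕ} (hx : |x| < 2 ^ (s + j) * M) :
    x / 2 ^ s ∈ dyadicIndices M j := by
  have hs : (0 : ℤ) < 2 ^ s := by positivity
  have hK : (2 : ℤ) ^ (s + j) * M = 2 ^ j * M * 2 ^ s := by ring
  rw [hK, abs_lt] at hx
  exact Finset.mem_Icc.mpr ⟨(Int.le_ediv_iff_mul_le hs).mpr (by linarith [hx.1]),
    ((Int.ediv_lt_iff_lt_mul hs).mpr hx.2).le⟩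

lemma card_dyadicIndices_le (hM : 1 ≤ M) (j : ℕ) :
    ((dyadicIndices M j).card : ℝ) ≤ 3 * 2 ^ j * M := by
  have hpos : 1 ≤ 2 ^ j * M := Nat.mul_pos (by positivity) hM
  have hcard : (dyadicIndices M j).card ≤ 3 * 2 ^ j * M := by
    rw [dyadicIndices, Int.card_Icc, Int.toNat_le]
    push_cast
    nlinarith [(mod_cast hpos : (1 : ℤ) ≤ 2 ^ j * M)]
  exact_mod_cast hcard

/-- The discrepancy of the local time allowed between the midpoint and the left end of a dyadic
interval at depth `j`. -/
noncomputable def jumpSize (B : ℝ) (j : ℕ) : ℝ := B / 8 * (3 / 4) ^ j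

lemma sum_jumpSize_le (hB : 0 ≤ B) (K : ℕ) : ∑ j ∈ Finset.range K, jumpSize B j ≤ B / 2 := by
  have hgeom : ∑ j ∈ Finset.range K, (3 / 4 : ℝ) ^ j ≤ (1 - 3 / 4)⁻¹ := by
    rw [← tsum_geometric_of_lt_one (by norm_num) (by norm_num)]
    exact (summable_geometric_of_lt_one (by norm_num) (by norm_num)).sum_le_tsum _
      fun _ _ => by positivity
  simp only [jumpSize]
  rw [← Finset.mul_sum]
  exact (mul_le_mul_of_nonneg_left hgeom (by positivity)).trans_eq (by ring)

lemma mem_coarseEvent_or_exists_mem_jumpEvent {ω : ℕ → Cyl d N} {τ : ℕ} {t : ℤ} (hB : 0 ≤ B)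
    (hτ : IsFirstExit (quietEvent d N B R) n ω τ) (hloc : ∀ t, (localTime ω t τ : ℝ) ≤ B + 1)
    (hR : |((ω τ).2 : ℝ)| ≤ R) (ht : B < localTime ω t τ) (K : ℕ) :
    ω ∈ coarseEvent d N B R n (2 ^ K * (t / 2 ^ K)) ∨
      ∃ s < K, ω ∈ jumpEvent d N B R n (jumpSize B (K - 1 - s)) (2 ^ (s + 1) * (t / 2 ^ (s + 1)))
        (2 ^ (s + 1) * (t / 2 ^ (s + 1)) + (2 ^ s : ℕ)) := by
  refine or_iff_not_imp_right.mpr fun hjump => ⟨τ, hτ, hR, ?_⟩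
  have hchain := le_add_sum_of_dyadic (K := K) (l := fun t => (localTime ω t τ : ℝ)) (x := t)
    (α := fun s => jumpSize B (K - 1 - s)) fun s hs => by
      by_contra! hlt
      exact hjump ⟨s, hs, τ, hτ, hloc, by simpa using hlt.le⟩
  rw [Finset.sum_range_reflect (jumpSize B)] at hchain
  linarith [sum_jumpSize_le hB K]

lemma setOf_exists_lt_localTime_subset (hB : 0 ≤ B) (hR : R < 2 ^ K * M) :
    {ω : ℕ → Cyl d N | ∃ t, B < (localTime ω t n : ℝ)} ⊆ escapeEvent d N B R n ∪
      ((⋃ a ∈ dyadicIndices M 0, coarseEvent d N B R n (2 ^ K * a)) ∪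
      ⋃ s ∈ Finset.range K, ⋃ a ∈ dyadicIndices M (K - 1 - s),
        jumpEvent d N B R n (jumpSize B (K - 1 - s)) (2 ^ (s + 1) * a)
          (2 ^ (s + 1) * a + (2 ^ s : ℕ))) := by
  intro ω hω
  obtain ⟨τ, hτ, hloc, hesc | ⟨hωR, t, htR, ht⟩⟩ :=
    exists_isFirstExit_quietEvent (R := R) hB hω
  · exact Or.inl ⟨τ, hτ, hesc⟩
  have htK : |t| < 2 ^ K * M := by exact_mod_cast htR.trans_lt hR
  simp only [Set.mem_union, Set.mem_iUnion, exists_prop, Finset.mem_range]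
  refine Or.inr ?_
  obtain hcoarse | ⟨s, hs, hjump⟩ :=
    mem_coarseEvent_or_exists_mem_jumpEvent hB hτ hloc hωR ht K
  · exact Or.inl ⟨_, ediv_mem_dyadicIndices (by simpa using htK), hcoarse⟩
  · refine Or.inr ⟨s, hs, _, ediv_mem_dyadicIndices ?_, hjump⟩
    rwa [show s + 1 + (K - 1 - s) = K by lia]

lemma measure_exists_lt_localTime_le_sum {μ : Measure (ℕ → Cyl d N)} (hB : 0 ≤ B)
    (hR : R < 2 ^ K * M) (hM : 1 ≤ M) {u : ℝ} {w : ℕ → ℝ} (hu : 0 ≤ u) (hw : ∀ j, 0 ≤ w j)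
    (hesc : μ (escapeEvent d N B R n) ≤ ENNReal.ofReal u)
    (hcoarse : ∀ x, μ (coarseEvent d N B R n x) ≤ ENNReal.ofReal u)
    (hjump : ∀ s j, s + 1 + j = K → ∀ x,
      μ (jumpEvent d N B R n (jumpSize B j) x (x + (2 ^ s : ℕ))) ≤ ENNReal.ofReal (w j)) :
    μ {ω | ∃ t, B < (localTime ω t n : ℝ)} ≤
      ENNReal.ofReal (u + (3 * M * u + ∑ j ∈ Finset.range K, 3 * 2 ^ j * M * w j)) := by
  have hunion : ∀ (j : ℕ) (A : ℤ → Set (ℕ → Cyl d N)) (v : ℝ), 0 ≤ v →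
      (∀ a, μ (A a) ≤ ENNReal.ofReal v) →
      μ (⋃ a ∈ dyadicIndices M j, A a) ≤ ENNReal.ofReal (3 * 2 ^ j * M * v) := by
    intro j A v hv hA
    calc _ ≤ ∑ a ∈ dyadicIndices M j, μ (A a) := measure_biUnion_finset_le _ _
      _ ≤ ∑ _ ∈ dyadicIndices M j, ENNReal.ofReal v := Finset.sum_le_sum fun a _ => hA a
      _ = ENNReal.ofReal ((dyadicIndices M j).card * v) := by
        rw [Finset.sum_const, nsmul_eq_mul, ENNReal.ofReal_mul (Nat.cast_nonneg _),
          ENNReal.ofReal_natCast]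
      _ ≤ _ := by
        gcongr
        exact card_dyadicIndices_le hM j
  rw [ENNReal.ofReal_add hu (add_nonneg (by positivity)
      (Finset.sum_nonneg fun j _ => mul_nonneg (by positivity) (hw j))),
    ENNReal.ofReal_add (by positivity)
      (Finset.sum_nonneg fun j _ => mul_nonneg (by positivity) (hw j)),
    ← Finset.sum_range_reflect, ENNReal.ofReal_sum_of_nonneg
      fun j _ => mul_nonneg (by positivity) (hw _)]
  refine (measure_mono (setOf_exists_lt_localTime_subset hB hR)).trans
    ((measure_union_le _ _).trans (add_le_add hesc ((measure_union_le _ _).trans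
      (add_le_add ?_ ((measure_biUnion_finset_le _ _).trans (Finset.sum_le_sum fun s hs => ?_))))))
  · simpa using hunion 0 _ u hu fun a => hcoarse (2 ^ K * a)
  · have hsK : s + 1 + (K - 1 - s) = K := by
      have := Finset.mem_range.mp hs
      lia
    exact hunion _ _ _ (hw _) fun a => hjump s _ hsK _

lemma exists_exponent_ge {ℓ y : ℝ} (hB : 1 ≤ B) (hℓ : 1 ≤ ℓ) (hy : 2 * ℓ ≤ y) (hyB : y ≤ B) :
    ∃ m, 0 ≤ m ∧ 4 * m ≤ 1 ∧
      y ^ 2 / (256 * ℓ * B) ≤ m * (2 * y - 2 * ℓ) - 16 * m ^ 2 * ((ℓ + 1) * (B + 1)) := by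
  set m := y / (128 * ℓ * B) with hm
  have hy0 : 0 < y := by linarith
  have hm0 : 0 < m := by positivity
  have hmeq : m * (128 * ℓ * B) = y := div_mul_cancel₀ _ (by positivity)
  refine ⟨m, hm0.le, ?_, ?_⟩
  · rw [hm, ← mul_div_assoc, div_le_one (by positivity)]
    nlinarith
  have hquad : 16 * m ^ 2 * ((ℓ + 1) * (B + 1)) ≤ m * y / 2 := by
    have hprod : (ℓ + 1) * (B + 1) ≤ 4 * (ℓ * B) := by nlinarith
    calc 16 * m ^ 2 * ((ℓ + 1) * (B + 1)) ≤ 16 * m ^ 2 * (4 * (ℓ * B)) := by gcongr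
      _ = m * (m * (128 * ℓ * B)) / 2 := by ring
      _ = m * y / 2 := by rw [hmeq]
  have hlin : m * y ≤ m * (2 * y - 2 * ℓ) := mul_le_mul_of_nonneg_left (by linarith) hm0.le
  have hval : y ^ 2 / (256 * ℓ * B) = m * y / 2 := by
    rw [hm]
    field_simp
    norm_num
  linarith

lemma two_mul_le_mul_jumpSize {p L ℓ : ℝ} {j : ℕ} (hB : 0 ≤ B) (hL : 8 ≤ p * L) (hL0 : 0 < L)
    (h : 2 * 2 ^ j * ℓ * L ≤ B) : 2 * ℓ ≤ p * jumpSize B j := by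
  have hgrow : (1 : ℝ) ≤ 2 ^ j * (3 / 4) ^ j := by
    rw [← mul_pow]
    exact one_le_pow₀ (by norm_num)
  refine le_of_mul_le_mul_left ?_ (by positivity : (0 : ℝ) < 2 ^ j * L)
  calc 2 ^ j * L * (2 * ℓ) = 2 * 2 ^ j * ℓ * L := by ring
    _ ≤ B * 1 := by rwa [mul_one]
    _ ≤ B * (2 ^ j * (3 / 4) ^ j) := by gcongr
    _ = 8 / 8 * (B * (2 ^ j * (3 / 4) ^ j)) := by ring
    _ ≤ p * L / 8 * (B * (2 ^ j * (3 / 4) ^ j)) := by gcongr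
    _ = 2 ^ j * L * (p * jumpSize B j) := by
      rw [jumpSize]
      ring

lemma le_sq_jumpSize_div {p L ℓ : ℝ} {j : ℕ} (hB : 0 < B) (hL : 0 ≤ L) (hℓ : 0 < ℓ)
    (h : 2 * 2 ^ j * ℓ * L ≤ B) :
    p ^ 2 / 8192 * L * (1 + j / 8) ≤ (p * jumpSize B j) ^ 2 / (256 * ℓ * B) := by
  have hbern : 1 + (j : ℝ) / 8 ≤ 2 ^ j * ((3 / 4) ^ j) ^ 2 := by
    rw [← pow_mul, mul_comm j, pow_mul, ← mul_pow]
    norm_num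
    linarith [one_add_mul_le_pow (a := (1 / 8 : ℝ)) (by norm_num) j]
  calc p ^ 2 / 8192 * L * (1 + j / 8) ≤ p ^ 2 / 8192 * L * (2 ^ j * ((3 / 4) ^ j) ^ 2) := by gcongr
    _ = p ^ 2 * ((3 / 4) ^ j) ^ 2 / (16384 * ℓ) * (2 * 2 ^ j * ℓ * L) := by
      ring_nf
      field_simp
    _ ≤ p ^ 2 * ((3 / 4) ^ j) ^ 2 / (16384 * ℓ) * B := by gcongr
    _ = (p * jumpSize B j) ^ 2 / (256 * ℓ * B) := by
      rw [jumpSize]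
      field_simp
      ring

/-- The probability of each step of the walk. -/
noncomputable def stepWeight (d : ℕ) : ℝ := 1 / (2 * (d + 1))

lemma stepWeight_pos (d : ℕ) : 0 < stepWeight d := by
  rw [stepWeight]
  positivity

lemma stepWeight_le_half (d : ℕ) : stepWeight d ≤ 1 / 2 :=
  one_div_le_one_div_of_le two_pos (by linarith [(Nat.cast_nonneg d : (0 : ℝ) ≤ d)])

lemma IsCylRW.measure_jumpEvent_jumpSize_le (h : IsCylRW d N Pl) (hB : 1 ≤ B) {L : ℝ}
    (hL : 8 ≤ stepWeight d * L) {s j : ℕ} (hsj : 2 * 2 ^ j * 2 ^ s * L ≤ B) (x : ℤ) :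
    Pl 0 (jumpEvent d N B R n (jumpSize B j) x (x + (2 ^ s : ℕ))) ≤
      ENNReal.ofReal (2 * Real.exp (-(stepWeight d ^ 2 / 8192 * L * (1 + j / 8)))) := by
  have hL0 : 0 < L := pos_of_mul_pos_right (by linarith) (stepWeight_pos d).le
  have hsize : stepWeight d * jumpSize B j ≤ B := by
    have hthree : ((3 : ℝ) / 4) ^ j ≤ 1 := pow_le_one₀ (by norm_num) (by norm_num)
    calc stepWeight d * jumpSize B j ≤ 1 / 2 * (B / 8 * 1) := by
          rw [jumpSize]
          gcongr
          exact stepWeight_le_half d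
      _ ≤ B := by linarith
  obtain ⟨m, hm, hm', hexp⟩ := exists_exponent_ge hB (one_le_pow₀ one_le_two : (1 : ℝ) ≤ 2 ^ s)
    (two_mul_le_mul_jumpSize (by linarith) hL hL0 hsj) hsize
  have hexp' := (le_sq_jumpSize_div (p := stepWeight d) (by linarith) hL0.le (by positivity)
    hsj).trans hexp
  refine (h.measure_jumpEvent_le hm hm' _ x (2 ^ s)).trans (ENNReal.ofReal_le_ofReal ?_)
  rw [show jumpSize B j / ((d : ℝ) + 1) = 2 * (stepWeight d * jumpSize B j) by
    rw [stepWeight]; field_simp]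
  push_cast
  gcongr

lemma sum_dyadic_mul_exp_le {M a : ℝ} (hM : 0 ≤ M) (ha : Real.exp (-(a / 8)) ≤ 1 / 4) (K : ℕ) :
    ∑ j ∈ Finset.range K, 3 * 2 ^ j * M * (2 * Real.exp (-(a * (1 + j / 8)))) ≤
      12 * M * Real.exp (-a) := by
  have hterm : ∀ j ∈ Finset.range K, 3 * 2 ^ j * M * (2 * Real.exp (-(a * (1 + j / 8)))) ≤
      6 * M * Real.exp (-a) * (1 / 2) ^ j := fun j _ => by
    calc _ = 6 * M * Real.exp (-a) * (2 ^ j * Real.exp (-(a / 8)) ^ j) := by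
          rw [show -(a * (1 + (j : ℝ) / 8)) = -a + j * -(a / 8) by ring, Real.exp_add,
            Real.exp_nat_mul]
          ring
      _ ≤ 6 * M * Real.exp (-a) * (2 ^ j * (1 / 4) ^ j) := by gcongr
      _ = 6 * M * Real.exp (-a) * (1 / 2) ^ j := by
          rw [← mul_pow]
          norm_num
  refine (Finset.sum_le_sum hterm).trans ?_
  rw [← Finset.mul_sum]
  have hgeom : ∑ j ∈ Finset.range K, (1 / 2 : ℝ) ^ j ≤ 2 := by
    refine le_of_le_of_eq ?_ tsum_geometric_two
    exact summable_geometric_two.sum_le_tsum _ fun _ _ => by positivity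
  exact (mul_le_mul_of_nonneg_left hgeom (by positivity)).trans_eq (by ring)

lemma IsCylRW.measure_exists_lt_localTime_le (h : IsCylRW d N Pl) {L a m : ℝ}
    (hL : 8 ≤ stepWeight d * L) (hLB : L ≤ B)
    (hLexp : Real.exp (-(stepWeight d ^ 2 / 8192 * L / 8)) ≤ 1 / 4) (hm : 0 ≤ m) (hm' : 4 * m ≤ 1)
    (ha : a ≤ m * (stepWeight d * B / 2) - 16 * m ^ 2 * n) :
    Pl 0 {ω | ∃ t, B < (localTime ω t n : ℝ)} ≤ ENNReal.ofReal
      (2 * (1 + 6 * L) * Real.exp (-a) + 24 * L * Real.exp (-(stepWeight d ^ 2 / 8192 * L))) := by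
  have hp := stepWeight_pos d
  have hp' := stepWeight_le_half d
  have hL1 : 1 ≤ L := by nlinarith
  have hR : B / (2 * (d + 1)) - stepWeight d * B / 2 = stepWeight d * B / 2 := by
    rw [stepWeight]
    field_simp
    ring
  obtain ⟨K, hK, hK'⟩ := exists_nat_pow_near ((one_le_div (by positivity)).mpr hLB) one_lt_two
  rw [le_div_iff₀ (by positivity)] at hK
  rw [div_lt_iff₀ (by positivity), pow_succ] at hK'
  set M := ⌈L⌉₊
  have hLM : L ≤ M := Nat.le_ceil L
  have hML : (M : ℝ) ≤ 2 * L := by linarith [Nat.ceil_lt_add_one (by linarith : 0 ≤ L)]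
  have hcover : stepWeight d * B / 2 < 2 ^ K * M := by
    have : (2 : ℝ) ^ K * L ≤ 2 ^ K * M := by gcongr
    nlinarith
  refine (measure_exists_lt_localTime_le_sum (by linarith) hcover
    (mod_cast hL1.trans hLM) (by positivity) (fun j => by positivity)
    ((h.measure_escapeEvent_le hm hm').trans (ENNReal.ofReal_le_ofReal (?_ :
      _ ≤ 2 * Real.exp (-a)))) (fun x => (h.measure_coarseEvent_le hm hm' x).trans ?_)
    fun s j hsj x => h.measure_jumpEvent_jumpSize_le (by linarith) hL ?_ x).trans
    (ENNReal.ofReal_le_ofReal ?_)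
  · gcongr
  · rw [hR]
    gcongr
  · rwa [← pow_succ', ← pow_add, show j + 1 + s = K by lia]
  · have hsum := sum_dyadic_mul_exp_le (Nat.cast_nonneg M) hLexp K
    calc _ ≤ 2 * Real.exp (-a) + (3 * M * (2 * Real.exp (-a)) +
          12 * M * Real.exp (-(stepWeight d ^ 2 / 8192 * L))) := by gcongr
      _ ≤ 2 * Real.exp (-a) + (3 * (2 * L) * (2 * Real.exp (-a)) +
          12 * (2 * L) * Real.exp (-(stepWeight d ^ 2 / 8192 * L))) := by gcongr
      _ = _ := by ring

lemma eventually_mul_exp_neg_le {c δ : ℝ} (hc : 0 < c) (hδ : 0 < δ) :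
    ∀ᶠ L : ℝ in atTop, L * Real.exp (-(c * L)) ≤ δ := by
  have hlim := (Real.tendsto_pow_mul_exp_neg_atTop_nhds_zero 1).comp
    (tendsto_id.const_mul_atTop hc)
  filter_upwards [hlim.eventually_le_const (mul_pos hc hδ)] with L hL
  simp only [Function.comp_apply, pow_one, id_eq, mul_assoc] at hL
  exact le_of_mul_le_mul_left hL hc

lemma eventually_exp_neg_mul_le {c δ : ℝ} (hc : 0 < c) (hδ : 0 < δ) :
    ∀ᶠ L : ℝ in atTop, Real.exp (-(c * L)) ≤ δ :=
  (Real.tendsto_exp_neg_atTop_nhds_zero.comp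
    (tendsto_id.const_mul_atTop hc)).eventually_le_const hδ

lemma le_mul_sub_mul_sq {a b p W n : ℝ} (ha : 0 < a) (hb : 0 < b) (hp : 0 < p) (hW : 0 < W)
    (hn : n ≤ 1 / (2 * (a + 16) / (p * b)) ^ 2 * W ^ 2) :
    a ≤ 2 * (a + 16) / (p * b) / W * (p * (b * W) / 2) -
      16 * (2 * (a + 16) / (p * b) / W) ^ 2 * n := by
  have hlin : 2 * (a + 16) / (p * b) / W * (p * (b * W) / 2) = a + 16 := by field_simp
  set θ := 2 * (a + 16) / (p * b)
  have hθ : 0 < θ := by positivity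
  have hquad : 16 * (θ / W) ^ 2 * n ≤ 16 := by
    calc _ ≤ 16 * (θ / W) ^ 2 * (1 / θ ^ 2 * W ^ 2) := by gcongr
      _ = 16 := by field_simp
  linarith

lemma exists_measure_exists_lt_localTime_le (hd : 1 ≤ d) {b ε : ℝ} (hb : 0 < b) (hε : 0 < ε) :
    ∃ γ > 0, ∃ N₁ : ℕ, ∀ N, N₁ ≤ N → ∀ Pl, IsCylRW d N Pl → ∀ n : ℕ,
      (n : ℝ) ≤ γ * (N : ℝ) ^ (2 * d) →
      Pl 0 {ω | ∃ t, b * (N : ℝ) ^ d < localTime ω t n} ≤ ENNReal.ofReal ε := by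
  have hp := stepWeight_pos d
  set p := stepWeight d
  obtain ⟨L, hLexp, hLε, hL⟩ := ((eventually_exp_neg_mul_le
    (by positivity : 0 < p ^ 2 / 8192 / 8) (by norm_num : (0 : ℝ) < 1 / 4)).and
    ((eventually_mul_exp_neg_le (by positivity : 0 < p ^ 2 / 8192)
      (by positivity : 0 < ε / 48)).and (eventually_ge_atTop (8 / p)))).exists
  rw [div_le_iff₀' hp] at hL
  have hL0 : 0 < L := pos_of_mul_pos_right (by linarith) hp.le
  obtain ⟨a, haε, ha⟩ := ((eventually_exp_neg_mul_le one_pos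
    (by positivity : 0 < ε / (4 * (1 + 6 * L)))).and (eventually_gt_atTop 0)).exists
  rw [one_mul, le_div_iff₀ (by positivity)] at haε
  set θ := 2 * (a + 16) / (p * b)
  have hθ : 0 < θ := by positivity
  obtain ⟨N₁, hN₁⟩ := exists_nat_ge (max 1 (max (4 * θ) (L / b)))
  simp only [sup_le_iff] at hN₁
  refine ⟨1 / θ ^ 2, by positivity, N₁, fun N hN Pl h n hn => ?_⟩
  have hN' : (N₁ : ℝ) ≤ N := Nat.cast_le.mpr hN
  have hNW : (N : ℝ) ≤ (N : ℝ) ^ d := le_self_pow₀ (hN₁.1.trans hN') (by lia)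
  rw [mul_comm 2 d, pow_mul] at hn
  set W := (N : ℝ) ^ d
  have hW : 0 < W := by linarith
  have hθW : 4 * (θ / W) ≤ 1 := by
    rw [← mul_div_assoc, div_le_one hW]
    linarith
  have hLB : L ≤ b * W := (div_le_iff₀' hb).mp (by linarith)
  refine (h.measure_exists_lt_localTime_le hL hLB (by rwa [mul_div_right_comm]) (by positivity)
    hθW (le_mul_sub_mul_sq ha hb hp hW hn)).trans (ENNReal.ofReal_le_ofReal ?_)
  linarith

end DyadicChaining

section Tightness

variable {d e N n : ℕ}

lemma slabTime_le {B : ℝ} {ω : ℕ → Cyl d N} (hB : ∀ t, (localTime ω t n : ℝ) ≤ B) (t₀ : ℤ) :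
    (slabTime ω n t₀ : ℝ) ≤ (4 * N + 1) * B := by
  have htime : slabTime ω n t₀ =
      timeIn (Set.Icc (t₀ - 2 * N) (t₀ - 2 * N + (4 * N : ℕ))) ω n := by
    refine congrArg Finset.card (Finset.ext fun i => ?_)
    simp only [Finset.mem_filter, slab, Set.mem_ofPred_eq, Set.mem_Icc, abs_le]
    lia
  rw [htime]
  exact_mod_cast timeIn_Icc_le hB (t₀ - 2 * N) (4 * N)

lemma setOf_not_geReal_discT_subset (hN : 2 ≤ N) {b r : ℝ} (hb : 0 ≤ b) (hn : r ≤ n) :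
    {ω | ¬ geReal (discT (e + 1) N ω) r} ⊆
      {ω | ∃ t, b * (N : ℝ) ^ (e + 1) < (localTime ω t n : ℝ)} ∪
        starPathEvent e N n (5 * b * (N : ℝ) ^ (e + 2)) := by
  intro ω hω
  refine or_iff_not_imp_left.mpr fun hloc => ?_
  simp only [Set.mem_ofPred_eq, not_exists, not_lt] at hloc
  obtain ⟨k, hk, hkr⟩ := exists_disconnects_of_not_geReal hω
  obtain ⟨v, hv, hcover⟩ := hk.exists_isStarPath hN
  have hkn : k < n := by exact_mod_cast hkr.trans_le hn
  refine ⟨fun t₀ => (slabTime_le hloc t₀).trans ?_, v, hv, fun i hi => ?_⟩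
  · have hN' : (1 : ℝ) ≤ N := by exact_mod_cast (by lia : 1 ≤ N)
    calc (4 * N + 1) * (b * (N : ℝ) ^ (e + 1)) ≤ (5 * N) * (b * (N : ℝ) ^ (e + 1)) := by
          gcongr
          linarith
      _ = 5 * b * (N : ℝ) ^ (e + 2) := by ring
  · obtain ⟨j, hj, hjv⟩ := hcover i hi
    exact ⟨j, by lia, hjv⟩

lemma exists_measure_starPathEvent_le_pow {Q : ZLat e → Measure (ℕ → ZLat e)} (he : 1 ≤ e)
    (hQ : IsLatRW e Q) (hcond : 7 * ((2 + e * retProb e Q) / (e + 2)) < 1) :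
    ∃ b > 0, ∃ ρ K : ℝ, 0 ≤ ρ ∧ ρ < 1 ∧ 0 ≤ K ∧ ∃ N₀ : ℕ, ∀ N, N₀ ≤ N → ∀ Pl,
      IsCylRW (e + 1) N Pl → ∀ n,
      Pl 0 (starPathEvent e N n (5 * b * (N : ℝ) ^ (e + 2))) ≤
        ENNReal.ofReal (N * (2 * n + 1) * (8 * (K * ρ ^ (N / 2)))) := by
  set r := (2 + e * retProb e Q) / (e + 2)
  have hr : 0 < r := by
    have : 0 ≤ retProb e Q := ENNReal.toReal_nonneg
    positivity
  obtain ⟨Λ, hΛ, hΛr⟩ := exists_between ((lt_div_iff₀ hr).mpr hcond)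
  have hlog : Real.log 7 < Real.log Λ := Real.log_lt_log (by norm_num) hΛ
  have hlam : 0 ≤ Real.log Λ := Real.log_nonneg (by linarith)
  obtain ⟨K, C, N₀, hK, hC, hN₀, hpath⟩ := exists_measure_starPathEvent_le he hQ hlam
    (by rwa [Real.exp_log (by linarith), ← lt_div_iff₀ hr])
  obtain ⟨lam', hlam'⟩ := exists_between hlog
  set b := (Real.log Λ - lam') / (5 * (C + 1))
  have hb : 0 < b := div_pos (sub_pos.mpr hlam'.2) (by positivity)
  have hbC : 5 * b * C ≤ Real.log Λ - lam' := by
    have : b * (5 * (C + 1)) = Real.log Λ - lam' := div_mul_cancel₀ _ (by positivity)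
    linarith
  refine ⟨b, hb, 7 * Real.exp (-lam'), K, by positivity, ?_, by linarith, N₀,
    fun N hN Pl hPl n => (hpath N hN Pl hPl n _).trans (ENNReal.ofReal_le_ofReal ?_)⟩
  · rw [Real.exp_neg, ← div_eq_mul_inv, div_lt_one (Real.exp_pos _)]
    exact (Real.log_lt_iff_lt_exp (by norm_num)).mp hlam'.1
  have hN' : (0 : ℝ) < N := by exact_mod_cast (by lia : 0 < N)
  have hlam'0 : 0 ≤ lam' := (Real.log_nonneg (by norm_num)).trans hlam'.1.le
  have hexp : C * ((N / 2 : ℕ) + 1) / (N : ℝ) ^ (e + 2) * (5 * b * (N : ℝ) ^ (e + 2)) -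
      Real.log Λ * ((N / 2 : ℕ) + 1) ≤ (N / 2 : ℕ) * -lam' := by
    calc _ = (5 * b * C - Real.log Λ) * ((N / 2 : ℕ) + 1) := by field_simp
      _ ≤ -lam' * ((N / 2 : ℕ) + 1) := by gcongr; linarith
      _ ≤ _ := by linarith
  calc _ ≤ N * (2 * n + 1) * (8 * 7 ^ (N / 2)) * (K * Real.exp ((N / 2 : ℕ) * -lam')) := by gcongr
    _ = N * (2 * n + 1) * (8 * (K * (7 * Real.exp (-lam')) ^ (N / 2))) := by
      rw [mul_pow, ← Real.exp_nat_mul]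
      ring

lemma tendsto_pow_mul_pow_half {ρ : ℝ} (hρ : 0 ≤ ρ) (hρ' : ρ < 1) (k : ℕ) :
    Tendsto (fun N : ℕ => (N : ℝ) ^ k * ρ ^ (N / 2)) atTop (nhds 0) := by
  have hlim := ((tendsto_pow_const_mul_const_pow_of_abs_lt_one k
    (by rwa [abs_of_nonneg hρ])).comp (Nat.tendsto_div_const_atTop two_ne_zero)).const_mul (3 ^ k)
  rw [mul_zero] at hlim
  refine squeeze_zero' (.of_forall fun N => by positivity) ?_ hlim
  filter_upwards [eventually_ge_atTop 2] with N hN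
  have hN3 : (N : ℝ) ≤ 3 * (N / 2 : ℕ) := by exact_mod_cast (by lia : N ≤ 3 * (N / 2))
  calc (N : ℝ) ^ k * ρ ^ (N / 2) ≤ (3 * (N / 2 : ℕ)) ^ k * ρ ^ (N / 2) := by gcongr
    _ = _ := by rw [mul_pow, mul_assoc, Function.comp_apply]

lemma eventually_polynomial_mul_pow_half_le {ρ ε : ℝ} (hρ : 0 ≤ ρ) (hρ' : ρ < 1) (hε : 0 < ε)
    (γ K : ℝ) (k : ℕ) : ∀ᶠ N : ℕ in atTop,
      (N : ℝ) * (2 * (γ * (N : ℝ) ^ k) + 1) * (8 * (K * ρ ^ (N / 2))) ≤ ε := by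
  have hlim := ((tendsto_pow_mul_pow_half hρ hρ' (k + 1)).const_mul (16 * γ * K)).add
    ((tendsto_pow_mul_pow_half hρ hρ' 1).const_mul (8 * K))
  rw [mul_zero, mul_zero, add_zero] at hlim
  filter_upwards [hlim.eventually_le_const hε] with N hN
  exact le_trans (le_of_eq (by ring)) hN

lemma exists_measure_not_geReal_discT_le {Q : ZLat e → Measure (ℕ → ZLat e)} (he : 1 ≤ e)
    (hQ : IsLatRW e Q) (hcond : 7 * ((2 + e * retProb e Q) / (e + 2)) < 1) {ε : ℝ} (hε : 0 < ε) :
    ∃ γ > 0, ∀ᶠ N : ℕ in atTop, ∀ Pl, IsCylRW (e + 1) N Pl →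
      Pl 0 {ω | ¬ geReal (discT (e + 1) N ω) (γ * (N : ℝ) ^ (2 * (e + 1)))} ≤
        ENNReal.ofReal ε := by
  obtain ⟨b, hb, ρ, K, hρ, hρ', hK, N₀, hpath⟩ := exists_measure_starPathEvent_le_pow he hQ hcond
  obtain ⟨γ, hγ, N₁, hloc⟩ :=
    exists_measure_exists_lt_localTime_le (d := e + 1) (by lia) hb (half_pos hε)
  have hlarge : ∀ᶠ N : ℕ in atTop, 1 ≤ γ / 2 * (N : ℝ) ^ (2 * (e + 1)) :=
    (((tendsto_pow_atTop (by lia)).comp tendsto_natCast_atTop_atTop).const_mul_atTop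
      (half_pos hγ)).eventually_ge_atTop 1
  refine ⟨γ / 2, half_pos hγ, ?_⟩
  filter_upwards [eventually_ge_atTop (max 2 (max N₀ N₁)), hlarge,
    eventually_polynomial_mul_pow_half_le hρ hρ' (half_pos hε) γ K (2 * (e + 1))]
    with N hN hNγ hNε Pl hPl
  simp only [sup_le_iff] at hN
  set n := ⌈γ / 2 * (N : ℝ) ^ (2 * (e + 1))⌉₊
  have hn : (n : ℝ) ≤ γ * (N : ℝ) ^ (2 * (e + 1)) := by
    linarith [Nat.ceil_lt_add_one (zero_le_one.trans hNγ)]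
  calc _ ≤ _ := measure_mono (setOf_not_geReal_discT_subset hN.1 hb.le (Nat.le_ceil _))
    _ ≤ _ := measure_union_le _ _
    _ ≤ ENNReal.ofReal (ε / 2) + ENNReal.ofReal (ε / 2) := by
      refine add_le_add (hloc N hN.2.2 Pl hPl n hn) ((hpath N hN.2.1 Pl hPl n).trans
        (ENNReal.ofReal_le_ofReal (le_trans ?_ hNε)))
      gcongr
    _ = ENNReal.ofReal ε := by
      rw [← ENNReal.ofReal_add (half_pos hε).le (half_pos hε).le, add_halves]

lemma geReal_mono {t : ℕ∞} {r r' : ℝ} (hr : r ≤ r') (h : geReal t r') : geReal t r :=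
  fun n hn => hr.trans (h n hn)

lemma one_sub_le_toReal_measure {Ω : Type*} [MeasurableSpace Ω] {μ : Measure Ω}
    [IsProbabilityMeasure μ] {A : Set Ω} {ε : ℝ} (hε : 0 ≤ ε) (h : μ Aᶜ ≤ ENNReal.ofReal ε) :
    1 - ε ≤ (μ A).toReal := by
  have hone : 1 ≤ μ A + μ Aᶜ := by
    rw [← measure_univ (μ := μ), ← Set.union_compl_self A]
    exact measure_union_le A Aᶜ
  have hreal := ENNReal.toReal_mono (by finiteness) (hone.trans (add_le_add_right h _))
  rw [ENNReal.toReal_one, ENNReal.toReal_add (by finiteness) (by finiteness),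
    ENNReal.toReal_ofReal hε] at hreal
  linarith

lemma tendsto_liminf_one {ι : Type*} {l : Filter ι} {l' : Filter ℝ} [l.NeBot] {f : ℝ → ι → ℝ}
    (h0 : ∀ γ i, 0 ≤ f γ i) (h1 : ∀ γ i, f γ i ≤ 1)
    (hf : ∀ ε > 0, ∀ᶠ γ in l', ∀ᶠ i in l, 1 - ε ≤ f γ i) :
    Tendsto (fun γ => liminf (f γ) l) l' (nhds 1) := by
  refine tendsto_order.mpr ⟨fun a ha => ?_, fun a ha => .of_forall fun γ => ?_⟩
  · filter_upwards [hf ((1 - a) / 2) (by linarith)] with γ hγ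
    have hle := le_liminf_of_le (isBoundedUnder_of ⟨1, h1 γ⟩).isCoboundedUnder_ge hγ
    linarith
  · refine lt_of_le_of_lt (liminf_le_of_le (isBoundedUnder_of ⟨0, h0 γ⟩) fun b hb => ?_) ha
    obtain ⟨i, hi⟩ := hb.exists
    exact hi.trans (h1 γ i)

lemma exists_eq_add_one_of_threshold {q : ℝ} (hq : q ≤ 1)
    (hcond : 7 * (2 / ((d : ℝ) + 1) + (1 - 2 / ((d : ℝ) + 1)) * q) < 1) :
    ∃ e, 1 ≤ e ∧ d = e + 1 := by
  match d with
  | 0 => norm_num at hcond; linarith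
  | 1 => norm_num at hcond
  | e + 2 => exact ⟨e + 1, by lia, rfl⟩

lemma add_mul_div_add_two_eq (e : ℕ) (q : ℝ) :
    (2 + e * q) / (e + 2) =
      2 / (((e + 1 : ℕ) : ℝ) + 1) + (1 - 2 / (((e + 1 : ℕ) : ℝ) + 1)) * q := by
  push_cast
  field_simp
  ring

end Tightness

/-- **Theorem 1.1.** If `7(2/(d+1) + (1 - 2/(d+1)) q(d-1)) < 1` then
`lim_{γ→0} liminf_N P_0[γ N^{2d} ≤ T_N] = 1`. -/
theorem statement_0 (d : ℕ)
    (Q : ZLat (d - 1) → Measure (ℕ → ZLat (d - 1))) (hQ : IsLatRW (d - 1) Q)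
    (hcond : 7 * (2 / ((d : ℝ) + 1) + (1 - 2 / ((d : ℝ) + 1)) * retProb (d - 1) Q) < 1)
    (Pl : ∀ N : ℕ, Cyl d N → Measure (ℕ → Cyl d N))
    (hPl : ∀ N : ℕ, IsCylRW d N (Pl N)) :
    Tendsto (fun γ : ℝ =>
        liminf (fun N : ℕ =>
          ((Pl N 0) {ω | geReal (discT d N ω) (γ * (N : ℝ) ^ (2 * d))}).toReal) atTop)
      (nhdsWithin 0 (Set.Ioi 0)) (nhds 1) := by
  have hprobQ := hQ.1 0
  have hprob : ∀ N, IsProbabilityMeasure (Pl N 0) := fun N => (hPl N).1 0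
  obtain ⟨e, he, rfl⟩ := exists_eq_add_one_of_threshold measureReal_le_one hcond
  have hcond' : 7 * ((2 + e * retProb e Q) / (e + 2)) < 1 := by rwa [add_mul_div_add_two_eq]
  refine tendsto_liminf_one (fun _ _ => ENNReal.toReal_nonneg) (fun _ _ => measureReal_le_one)
    fun ε hε => ?_
  obtain ⟨γ₀, hγ₀, hdisc⟩ := exists_measure_not_geReal_discT_le he hQ hcond' hε
  filter_upwards [Ioc_mem_nhdsGT hγ₀] with γ hγ
  filter_upwards [hdisc] with N hN
  refine one_sub_le_toReal_measure hε.le ((measure_mono ?_).trans (hN (Pl N) (hPl N)))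
  exact Set.compl_subset_compl.mpr fun ω hge => geReal_mono (by gcongr; exact hγ.2) hge

end DiscCyl
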